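/- Dichotomy in the weak comparison principle: Let Ω be a bounded domain in ℝ^N with N ≥ 2 and let H : Ω → ℝ be locally Lipschitz continuous. Let u : cl(Ω) → ℝ be lower semicontinuous on cl(Ω) and a viscosity supersolution of M(u) = NH in Ω, and let v : cl(Ω) → ℝ be upper semicontinuous on cl(Ω) and a viscosity subsolution of M(v) = NH in Ω. If u ≥ v on ∂Ω, then either u ≡ v in Ω or u > v everywhere in Ω. -/

import Mathlib

open Metric Set Filter Topology MeasureTheory

/-- The mean curvature operator `M(w) = div (Dw / sqrt (1 + |Dw|²))`,
computed as the sum of the partial derivatives of the components of the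
normalized gradient field. -/
noncomputable def mcOp {N : ℕ} (w : EuclideanSpace ℝ (Fin N) → ℝ)
    (x : EuclideanSpace ℝ (Fin N)) : ℝ :=
  ∑ i : Fin N,
    fderiv ℝ (fun y => (Real.sqrt (1 + ‖gradient w y‖ ^ 2))⁻¹ * gradient w y i) x
      (EuclideanSpace.single i 1)

/-- `f` is locally Lipschitz continuous on the set `s`. -/
def LocLipschitzOn {N : ℕ} (s : Set (EuclideanSpace ℝ (Fin N)))
    (f : EuclideanSpace ℝ (Fin N) → ℝ) : Prop :=
  ∀ x ∈ s, ∃ K : NNReal, ∃ t ∈ 𝓝[s] x, LipschitzOnWith K f t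

/-- `u` is a viscosity supersolution of `M(u) = N H` on the open set `U`. -/
def IsViscositySupersol {N : ℕ} (U : Set (EuclideanSpace ℝ (Fin N)))
    (H u : EuclideanSpace ℝ (Fin N) → ℝ) : Prop :=
  ∀ φ : EuclideanSpace ℝ (Fin N) → ℝ, ContDiffOn ℝ 2 φ U →
    ∀ x ∈ U, IsLocalMinOn (fun y => u y - φ y) U x → mcOp φ x ≤ N * H x

/-- `v` is a viscosity subsolution of `M(v) = N H` on the open set `U`. -/
def IsViscositySubsol {N : ℕ} (U : Set (EuclideanSpace ℝ (Fin N)))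
    (H v : EuclideanSpace ℝ (Fin N) → ℝ) : Prop :=
  ∀ φ : EuclideanSpace ℝ (Fin N) → ℝ, ContDiffOn ℝ 2 φ U →
    ∀ x ∈ U, IsLocalMaxOn (fun y => v y - φ y) U x → mcOp φ x ≥ N * H x

/-!
If `v < u` fails somewhere, subtract from `u` the minimum of `u - v`, so that `v ≤ u` with contact
at an interior point. If the contact set is not all of `Ω`, connectedness provides a ball whose
closure meets it at a single point `z` of the boundary sphere, and a Hopf-type argument at `z` gives
a contradiction.

Since `u` and `v` are only semicontinuous, they are compared after doubling the variables: pairs of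
points in the epigraph of `u` and the hypograph of `v` are penalised, and Alexandrov's theorem,
applied to the squared distance functions of these two closed sets, gives a theorem on sums for
their second-order normal jets. Working with the geometric normals of the graphs rather than with
gradients makes the operator the trace of the jet over the tangent hyperplane, and the two nearby
tangent hyperplanes are compared through orthonormal frames matched by the rotation carrying one
normal to the other. The penalty `-log` of the vertical gap against the distance first yields the
one-sided Lipschitz bound `v y - u x ≤ Λ ‖x - y‖`, and with that bound the Hopf barrier argument
survives the doubling. A constant difference is finally excluded, unless it vanishes, by the
boundary inequality.
-/

open scoped InnerProductSpace

local notation "𝔼" N:max => EuclideanSpace ℝ (Fin N)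
-- `𝔾 N` is the space containing the graphs, and `𝔻 V` the space of pairs of points of `V × ℝ`.
local notation "𝔾" N:max => WithLp 2 (EuclideanSpace ℝ (Fin N) × ℝ)
local notation "𝔻" V:max => WithLp 2 (WithLp 2 (V × ℝ) × WithLp 2 (V × ℝ))

/-! ## Second-order expansions and semiconcave functions -/

theorem eventually_add_mem {V : Type*} [SeminormedAddCommGroup V] {s : Set V} {x : V}
    (hs : s ∈ 𝓝 x) : ∀ᶠ h in 𝓝 0, x + h ∈ s :=
  (continuous_const.add continuous_id).continuousAt.eventually_mem (by simpa using hs)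

section Expansion

variable {V : Type*} [NormedAddCommGroup V] [InnerProductSpace ℝ V]

/-- Second-order Peano expansion `f (x + h) = f x + ⟪p, h⟫ + ⟪A h, h⟫ + o(‖h‖²)`. The operator `A`
carries the factor `1 / 2` and need not be symmetric. -/
def HasQuadExpansionAt (f : V → ℝ) (p : V) (A : V →L[ℝ] V) (x : V) : Prop :=
  (fun h => f (x + h) - f x - ⟪p, h⟫_ℝ - ⟪A h, h⟫_ℝ) =o[𝓝 0] fun h => ‖h‖ ^ 2

/-- `p` is a supergradient of `G` at `z` up to the quadratic error `C‖h‖²`. -/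
def IsSupergradientAt (C : ℝ) (G : V → ℝ) (z p : V) : Prop :=
  ∀ h, G (z + h) ≤ G z + ⟪p, h⟫_ℝ + C * ‖h‖ ^ 2

/-- `p` is the slope of an affine function touching `G` from below at `z`, relative to `s`. -/
def IsSubgradientOn (s : Set V) (G : V → ℝ) (z p : V) : Prop :=
  ∀ y ∈ s, G z + ⟪p, y - z⟫_ℝ ≤ G y

/-- Uniform semiconcavity, expressed by supergradients with a common quadratic error constant. -/
def UniformlySemiconcave (C : ℝ) (G : V → ℝ) : Prop :=
  ∀ z, ∃ p, IsSupergradientAt C G z p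

/-- The points close to `c` at which an affine function of slope less than `δ` touches `G` from
below on `closedBall c ρ`. -/
def contactSet (G : V → ℝ) (c : V) (ρ δ : ℝ) : Set V :=
  {z ∈ ball c (ρ / 2) | ∃ p ∈ ball (0 : V) δ, IsSubgradientOn (closedBall c ρ) G z p}

theorem norm_mul_le_of_forall_inner_le {a : V} {r α C : ℝ} (hr : 0 < r) (hα : 0 ≤ α + C * r ^ 2)
    (h : ∀ y : V, ‖y‖ ≤ r → ⟪a, y⟫_ℝ ≤ α + C * ‖y‖ ^ 2) : ‖a‖ * r ≤ α + C * r ^ 2 := by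
  rcases eq_or_ne a 0 with rfl | ha
  · simpa using hα
  have : 0 < ‖a‖ := norm_pos_iff.mpr ha
  have hnorm : ‖(r / ‖a‖) • a‖ = r := by
    rw [norm_smul, Real.norm_of_nonneg (by positivity)]
    field_simp
  have hinner : ⟪a, (r / ‖a‖) • a⟫_ℝ = ‖a‖ * r := by
    rw [inner_smul_right, real_inner_self_eq_norm_sq]
    field_simp
  simpa only [hnorm, hinner] using h _ hnorm.le

theorem IsSubgradientOn.eq_of_isSupergradientAt {s : Set V} {G : V → ℝ} {C : ℝ} {z p q : V}
    (hp : IsSubgradientOn s G z p) (hs : s ∈ 𝓝 z) (hq : IsSupergradientAt C G z q) : p = q := by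
  have hder : HasFDerivAt (fun h : V => C * ‖h‖ ^ 2 - ⟪p - q, h⟫_ℝ)
      (C • (2 • innerSL ℝ (0 : V)) - innerSL ℝ (p - q)) 0 :=
    ((hasStrictFDerivAt_norm_sq (0 : V)).hasFDerivAt.const_mul C).sub
      (innerSL ℝ (p - q)).hasFDerivAt
  have hmin : IsLocalMin (fun h : V => C * ‖h‖ ^ 2 - ⟪p - q, h⟫_ℝ) 0 := by
    have hs' : ∀ᶠ h in 𝓝 (0 : V), z + h ∈ s := eventually_add_mem hs
    filter_upwards [hs'] with h hh
    have hsub := hp _ hh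
    have hsup := hq h
    rw [add_sub_cancel_left] at hsub
    simp only [norm_zero, inner_zero_right, inner_sub_left]
    linarith
  have hzero := DFunLike.congr_fun (hmin.hasFDerivAt_eq_zero hder) (p - q)
  simpa [-map_sub, sub_eq_zero] using hzero

theorem IsSubgradientOn.norm_sub_mul_le {s : Set V} {G : V → ℝ} {C r : ℝ} {k p z q : V}
    (hsub : IsSubgradientOn s G k p) (hsup : IsSupergradientAt C G k p)
    (hq : IsSupergradientAt C G z q) (hC : 0 ≤ C) (hr : 0 < r) (hs : closedBall z r ⊆ s) :
    ‖p - q‖ * r ≤ C * ‖z - k‖ ^ 2 + C * r ^ 2 := by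
  refine norm_mul_le_of_forall_inner_le hr (by positivity) fun y hy => ?_
  have h₁ := hsub (z + y) (hs (by simpa using hy))
  have h₂ := hq y
  have h₃ := hsup (z - k)
  rw [add_sub_cancel] at h₃
  rw [add_sub_right_comm, inner_add_right] at h₁
  rw [inner_sub_left]
  linarith

theorem sub_le_of_forall_sub_le_abs_add_sq {f : ℝ → ℝ} {a b : ℝ}
    (h : ∀ t ∈ Icc (0 : ℝ) 1, ∀ s ∈ Icc (0 : ℝ) 1, f s - f t ≤ a * |s - t| + b * (s - t) ^ 2) :
    f 1 - f 0 ≤ a := by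
  have hmodulus (t : ℝ) :
      Tendsto (fun s => a * |s - t| + b * (s - t) ^ 2) (𝓝 t) (𝓝 0) := by
    have : Continuous fun s : ℝ => a * |s - t| + b * (s - t) ^ 2 := by fun_prop
    simpa using this.tendsto t
  have hcont : ContinuousOn f (Icc 0 1) := by
    intro t ht
    refine tendsto_iff_dist_tendsto_zero.mpr (squeeze_zero' (.of_forall fun _ => dist_nonneg) ?_
      ((hmodulus t).mono_left nhdsWithin_le_nhds))
    filter_upwards [self_mem_nhdsWithin] with s hs
    have hst := h t ht s hs
    have hts := h s hs t ht
    rw [abs_sub_comm, ← neg_sub s t, neg_sq] at hts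
    rw [Real.dist_eq, abs_le]
    constructor <;> linarith
  have hslope : ∀ t ∈ Ico (0 : ℝ) 1, ∀ r, a < r → ∃ᶠ s in 𝓝[>] t, slope f t s < r := by
    intro t ht r hr
    have hlim : Tendsto (fun s => a + b * (s - t)) (𝓝[>] t) (𝓝 a) := by
      have : Continuous fun s : ℝ => a + b * (s - t) := by fun_prop
      simpa using (this.tendsto t).mono_left nhdsWithin_le_nhds
    refine Eventually.frequently ?_
    filter_upwards [hlim.eventually_lt_const hr, Ioo_mem_nhdsGT ht.2] with s hs hst
    have hpos : 0 < s - t := sub_pos.mpr hst.1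
    have hle := h t ⟨ht.1, ht.2.le⟩ s ⟨ht.1.trans hst.1.le, hst.2.le⟩
    rw [abs_of_pos hpos] at hle
    rw [slope_def_field, div_lt_iff₀ hpos]
    nlinarith
  have hbound := image_le_of_liminf_slope_right_le_deriv_boundary (B := fun t => f 0 + a * t)
    (B' := fun _ => a) hcont (by simp) (by fun_prop)
    (fun t _ => ((hasDerivAt_id t).const_mul a |>.const_add (f 0)).hasDerivWithinAt.congr_deriv
      (mul_one a)) hslope (right_mem_Icc.mpr zero_le_one)
  linarith

theorem abs_sub_le_of_forall_sub_le_abs_add_sq {f : ℝ → ℝ} {a b : ℝ}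
    (h : ∀ t ∈ Icc (0 : ℝ) 1, ∀ s ∈ Icc (0 : ℝ) 1, f s - f t ≤ a * |s - t| + b * (s - t) ^ 2) :
    |f 1 - f 0| ≤ a := by
  have hreflect := sub_le_of_forall_sub_le_abs_add_sq (f := fun t => f (1 - t)) (a := a) (b := b)
    fun t ht s hs => by
      have := h _ (Icc.one_sub_mem ht) _ (Icc.one_sub_mem hs)
      rwa [sub_sub_sub_cancel_left, abs_sub_comm, ← neg_sub s t, neg_sq] at this
  simp only [sub_self, sub_zero] at hreflect
  exact abs_le.mpr ⟨by linarith, sub_le_of_forall_sub_le_abs_add_sq h⟩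

-- A semiconcave function is the integral of its supergradients along segments.
theorem hasQuadExpansionAt_of_supergradients {G : V → ℝ} {C : ℝ} {z₀ p₀ : V} {A : V →L[ℝ] V}
    (hG : UniformlySemiconcave C G)
    (hp : ∀ ω > 0, ∀ᶠ z in 𝓝 z₀, ∀ p, IsSupergradientAt C G z p →
      ‖p - p₀ - A (z - z₀)‖ ≤ ω * ‖z - z₀‖) :
    HasQuadExpansionAt G p₀ ((1 / 2 : ℝ) • A) z₀ := by
  refine Asymptotics.isLittleO_iff.mpr fun ω hω => ?_
  obtain ⟨δ, hδ, hδp⟩ := Metric.eventually_nhds_iff.mp (hp ω hω)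
  filter_upwards [ball_mem_nhds (0 : V) hδ] with h hh
  rw [mem_ball_zero_iff] at hh
  have hsegment := abs_sub_le_of_forall_sub_le_abs_add_sq
    (f := fun t => G (z₀ + t • h) - t * ⟪p₀, h⟫_ℝ - 1 / 2 * t ^ 2 * ⟪A h, h⟫_ℝ)
    (a := ω * ‖h‖ ^ 2) (b := C * ‖h‖ ^ 2 - 1 / 2 * ⟪A h, h⟫_ℝ) fun t ht s _ => by
      obtain ⟨p, hpG⟩ := hG (z₀ + t • h)
      have hth : ‖t • h‖ ≤ ‖h‖ := by
        rw [norm_smul, Real.norm_of_nonneg ht.1]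
        exact mul_le_of_le_one_left (norm_nonneg h) ht.2
      have hdiff := hδp (by simpa [dist_eq_norm] using hth.trans_lt hh) p hpG
      rw [add_sub_cancel_left] at hdiff
      have hslope : (s - t) * ⟪p - p₀ - A (t • h), h⟫_ℝ ≤ ω * ‖h‖ ^ 2 * |s - t| := by
        calc (s - t) * ⟪p - p₀ - A (t • h), h⟫_ℝ
            ≤ |s - t| * |⟪p - p₀ - A (t • h), h⟫_ℝ| := (le_abs_self _).trans (abs_mul _ _).le
          _ ≤ |s - t| * ((ω * ‖h‖) * ‖h‖) := by
              gcongr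
              exact (abs_real_inner_le_norm _ _).trans (by gcongr; exact hdiff.trans (by gcongr))
          _ = ω * ‖h‖ ^ 2 * |s - t| := by ring
      have hincr := hpG ((s - t) • h)
      rw [add_assoc, ← add_smul, add_sub_cancel, inner_smul_right, norm_smul, mul_pow,
        Real.norm_eq_abs, sq_abs] at hincr
      rw [inner_sub_left, inner_sub_left, map_smul, real_inner_smul_left] at hslope
      nlinarith
  simp only [one_smul, zero_smul, add_zero] at hsegment
  rw [Real.norm_eq_abs, norm_pow, norm_norm]
  convert hsegment using 2
  simp only [smul_apply, real_inner_smul_left]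
  ring

end Expansion

section Alexandrov

variable {Z : Type*} [NormedAddCommGroup Z] [InnerProductSpace ℝ Z]
  {G : Z → ℝ} {C ρ δ m : ℝ} {c : Z}

theorem closedBall_mem_nhds_of_mem_contactSet (hρ : 0 < ρ) {z : Z}
    (hz : z ∈ contactSet G c ρ δ) : closedBall c ρ ∈ 𝓝 z :=
  closedBall_mem_nhds_of_mem (ball_subset_ball (half_le_self hρ.le) hz.1)

theorem exists_mem_contactSet_isSubgradientOn [ProperSpace Z] (hG : Continuous G) (hρ : 0 < ρ)
    (hδ : δ * ρ < m)
    (hmin : ∀ z, ρ / 2 ≤ dist z c → dist z c ≤ ρ → G c + m ≤ G z) {p : Z} (hp : p ∈ ball 0 δ) :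
    ∃ z ∈ contactSet G c ρ δ, IsSubgradientOn (closedBall c ρ) G z p := by
  have hc : c ∈ closedBall c ρ := mem_closedBall_self hρ.le
  obtain ⟨z, hz, hzmin⟩ := (isCompact_closedBall c ρ).exists_isMinOn ⟨c, hc⟩
    (f := fun y => G y - ⟪p, y⟫_ℝ) (by fun_prop)
  have hsub : IsSubgradientOn (closedBall c ρ) G z p := by
    intro y hy
    have : G z - ⟪p, z⟫_ℝ ≤ G y - ⟪p, y⟫_ℝ := hzmin hy
    rw [inner_sub_right]
    linarith
  refine ⟨z, ⟨?_, p, hp, hsub⟩, hsub⟩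
  by_contra! hfar
  have hle : ⟪p, z - c⟫_ℝ ≤ δ * ρ := by
    refine (real_inner_le_norm _ _).trans ?_
    rw [mem_ball_zero_iff] at hp
    rw [mem_closedBall, dist_eq_norm] at hz
    exact mul_le_mul hp.le hz (norm_nonneg _) ((norm_nonneg _).trans hp.le)
  have := hmin z (not_lt.mp hfar) hz
  have := hsub c hc
  rw [← neg_sub, inner_neg_right] at this
  linarith

theorem lipschitzOnWith_contact_slope (hsc : UniformlySemiconcave C G) (hC : 0 ≤ C) (hρ : 0 < ρ)
    {g : Z → Z} (hg : ∀ z ∈ contactSet G c ρ δ, IsSubgradientOn (closedBall c ρ) G z (g z)) :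
    LipschitzOnWith (5 / 2 * C).toNNReal g (contactSet G c ρ δ) := by
  have hsup : ∀ z ∈ contactSet G c ρ δ, IsSupergradientAt C G z (g z) := by
    intro z hz
    obtain ⟨q, hq⟩ := hsc z
    rwa [(hg z hz).eq_of_isSupergradientAt (closedBall_mem_nhds_of_mem_contactSet hρ hz) hq]
  refine LipschitzOnWith.of_dist_le_mul fun k hk l hl => ?_
  rw [Real.coe_toNNReal _ (by positivity), dist_eq_norm, dist_eq_norm]
  rcases eq_or_ne k l with rfl | hkl
  · simp
  have hpos : 0 < ‖k - l‖ := norm_pos_iff.mpr (sub_ne_zero.mpr hkl)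
  have hball : closedBall l (‖k - l‖ / 2) ⊆ closedBall c ρ := by
    refine closedBall_subset_closedBall' ?_
    have := dist_triangle_right k l c
    have := mem_ball.mp hk.1
    have := mem_ball.mp hl.1
    rw [← dist_eq_norm]
    linarith
  have := (hg k hk).norm_sub_mul_le (hsup k hk) (hsup l hl) hC (half_pos hpos) hball
  rw [norm_sub_rev l k] at this
  nlinarith

theorem exists_lipschitzOnWith_contact_slope [ProperSpace Z] (hG : Continuous G)
    (hsc : UniformlySemiconcave C G) (hC : 0 ≤ C) (hρ : 0 < ρ) (hδ : δ * ρ < m)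
    (hmin : ∀ z, ρ / 2 ≤ dist z c → dist z c ≤ ρ → G c + m ≤ G z) :
    ∃ g : Z → Z, (∀ z ∈ contactSet G c ρ δ,
        g z ∈ ball 0 δ ∧ IsSubgradientOn (closedBall c ρ) G z (g z)) ∧
      LipschitzOnWith (5 / 2 * C).toNNReal g (contactSet G c ρ δ) ∧
      ball 0 δ ⊆ g '' contactSet G c ρ δ := by
  have hchoice : ∀ z : Z, ∃ p, z ∈ contactSet G c ρ δ →
      p ∈ ball 0 δ ∧ IsSubgradientOn (closedBall c ρ) G z p := fun z => by
    by_cases hz : z ∈ contactSet G c ρ δ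
    · exact hz.2.imp fun p hp _ => hp
    · exact ⟨0, fun h => absurd h hz⟩
  choose g hg using hchoice
  refine ⟨g, hg, lipschitzOnWith_contact_slope hsc hC hρ fun z hz => (hg z hz).2, fun p hp => ?_⟩
  obtain ⟨z, hz, hzp⟩ := exists_mem_contactSet_isSubgradientOn hG hρ hδ hmin hp
  obtain ⟨q, hq⟩ := hsc z
  have hnhds := closedBall_mem_nhds_of_mem_contactSet hρ hz
  exact ⟨z, hz, ((hg z hz).2.eq_of_isSupergradientAt hnhds hq).trans
    (hzp.eq_of_isSupergradientAt hnhds hq).symm⟩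

theorem ae_eventually_exists_mem_dist_le [MeasurableSpace Z] [BorelSpace Z]
    [FiniteDimensional ℝ Z] (μ : Measure Z) [μ.IsAddHaarMeasure] (K : Set Z) :
    ∀ᵐ x ∂μ.restrict K, ∀ n : ℕ, ∀ᶠ w in 𝓝[≠] x, ∃ k ∈ K, dist k w ≤ 1 / (n + 1) * dist w x := by
  refine ae_all_iff.mpr fun n => ?_
  filter_upwards [IsUnifLocDoublingMeasure.ae_tendsto_measure_inter_div μ K (n + 1)] with x hx
  have hradius : Tendsto (fun w => 1 / ((n : ℝ) + 1) * dist w x) (𝓝[≠] x) (𝓝[>] 0) := by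
    refine tendsto_nhdsWithin_iff.mpr ⟨?_, ?_⟩
    · have : Continuous fun w : Z => 1 / ((n : ℝ) + 1) * dist w x := by fun_prop
      simpa using (this.tendsto x).mono_left nhdsWithin_le_nhds
    · filter_upwards [self_mem_nhdsWithin] with w hw
      have := dist_pos.mpr (mem_compl_singleton_iff.mp hw)
      exact mem_Ioi.mpr (by positivity)
  have hcenter : ∀ᶠ w in 𝓝[≠] x,
      x ∈ closedBall w (((n : ℝ) + 1) * (1 / ((n : ℝ) + 1) * dist w x)) := by
    filter_upwards with w
    rw [← mul_assoc, mul_one_div_cancel (by positivity), one_mul, mem_closedBall, dist_comm]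
  filter_upwards [(hx id _ hradius hcenter).eventually_ne one_ne_zero] with w hw
  by_contra! hempty
  have : K ∩ closedBall w (1 / ((n : ℝ) + 1) * dist w x) = ∅ :=
    eq_empty_of_forall_notMem fun k hk => (hempty k hk.1).not_ge hk.2
  exact hw (by simp only [id, this, measure_empty, ENNReal.zero_div])

theorem exists_differentiableWithinAt_density_point [FiniteDimensional ℝ Z] {K : Set Z}
    {g : Z → Z} {L : NNReal} (hg : LipschitzOnWith L g K) (hδ : 0 < δ) (hK : ball 0 δ ⊆ g '' K) :
    ∃ x ∈ K, DifferentiableWithinAt ℝ g K x ∧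
      ∀ n : ℕ, ∀ᶠ w in 𝓝[≠] x, ∃ k ∈ K, dist k w ≤ 1 / (n + 1) * dist w x := by
  borelize Z
  set μ : Measure Z := Measure.hausdorffMeasure (Module.finrank ℝ Z)
  have : μ.IsAddHaarMeasure := isAddHaarMeasure_hausdorffMeasure
  have hμK : μ K ≠ 0 := by
    intro hzero
    have himage : μ (g '' K) ≤ 0 := by
      simpa [μ, hzero] using hg.hausdorffMeasure_image_le (d := Module.finrank ℝ Z) (by positivity)
    exact (measure_ball_pos μ 0 hδ).not_ge ((measure_mono hK).trans himage)
  obtain ⟨x, hxK, hdiff, hdense⟩ := Measure.exists_mem_of_measure_ne_zero_of_ae hμK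
    ((ae_restrict_of_ae hg.ae_differentiableWithinAt_of_mem).and
      (ae_eventually_exists_mem_dist_le μ K))
  exact ⟨x, hxK, hdiff hxK, hdense⟩

-- Near a density point of the contact set every supergradient is compared with the slope at a
-- contact point `k` that is much closer to `z` than `z₀` is.
theorem norm_supergradient_sub_le_of_near_contact {g : Z → Z} {A : Z →L[ℝ] Z} {z₀ z p k : Z}
    {ω θ : ℝ} (hC : 0 ≤ C) (hθ : 0 < θ) (hθ₁ : θ ≤ 1) (hθω : (2 * C + ‖A‖) * θ ≤ ω / 2)
    (hω : 0 ≤ ω) (hz : z ≠ z₀) (hball : closedBall z (θ * dist z z₀) ⊆ closedBall c ρ)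
    (hsub : IsSubgradientOn (closedBall c ρ) G k (g k)) (hsup : IsSupergradientAt C G k (g k))
    (hp : IsSupergradientAt C G z p) (hk : dist k z ≤ θ * dist z z₀)
    (hA : ‖g k - g z₀ - A (k - z₀)‖ ≤ ω / 4 * ‖k - z₀‖) :
    ‖p - g z₀ - A (z - z₀)‖ ≤ ω * ‖z - z₀‖ := by
  rw [dist_eq_norm] at hball
  rw [dist_eq_norm, dist_eq_norm] at hk
  have hpos : 0 < ‖z - z₀‖ := norm_pos_iff.mpr (sub_ne_zero.mpr hz)
  have hslope : ‖g k - p‖ ≤ 2 * C * θ * ‖z - z₀‖ := by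
    have hkey := hsub.norm_sub_mul_le hsup hp hC (by positivity) hball
    have hsq : C * ‖z - k‖ ^ 2 ≤ C * (θ * ‖z - z₀‖) ^ 2 := by
      rw [norm_sub_rev z k]
      gcongr
    refine le_of_mul_le_mul_right (a := θ * ‖z - z₀‖) ?_ (by positivity)
    nlinarith
  have hkz₀ : ‖k - z₀‖ ≤ 2 * ‖z - z₀‖ := by
    have := norm_sub_le_norm_sub_add_norm_sub k z z₀
    nlinarith
  have hsplit : p - g z₀ - A (z - z₀) = -(g k - p) + (g k - g z₀ - A (k - z₀)) + A (k - z) := by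
    simp only [map_sub]
    abel
  calc ‖p - g z₀ - A (z - z₀)‖
      ≤ ‖g k - p‖ + ‖g k - g z₀ - A (k - z₀)‖ + ‖A (k - z)‖ := by
        rw [hsplit, ← norm_neg (g k - p)]
        exact norm_add₃_le
    _ ≤ 2 * C * θ * ‖z - z₀‖ + ω / 4 * (2 * ‖z - z₀‖) + ‖A‖ * (θ * ‖z - z₀‖) := by
        gcongr
        · exact hA.trans (by gcongr)
        · exact (A.le_opNorm _).trans (by gcongr)
    _ ≤ ω * ‖z - z₀‖ := by nlinarith [mul_le_mul_of_nonneg_right hθω hpos.le]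

theorem eventually_norm_supergradient_sub_le (hC : 0 ≤ C) (hρ : 0 < ρ) {g : Z → Z}
    (hsub : ∀ z ∈ contactSet G c ρ δ, IsSubgradientOn (closedBall c ρ) G z (g z))
    (hsc : UniformlySemiconcave C G) {z₀ : Z} (hz₀ : z₀ ∈ contactSet G c ρ δ) {A : Z →L[ℝ] Z}
    (hA : HasFDerivWithinAt g A (contactSet G c ρ δ) z₀)
    (hdense : ∀ n : ℕ, ∀ᶠ w in 𝓝[≠] z₀,
      ∃ k ∈ contactSet G c ρ δ, dist k w ≤ 1 / (n + 1) * dist w z₀) {ω : ℝ} (hω : 0 < ω) :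
    ∀ᶠ z in 𝓝 z₀, ∀ p, IsSupergradientAt C G z p →
      ‖p - g z₀ - A (z - z₀)‖ ≤ ω * ‖z - z₀‖ := by
  obtain ⟨n, hn⟩ := exists_nat_gt ((2 * C + ‖A‖) / (ω / 2))
  have hθω : (2 * C + ‖A‖) * (1 / ((n : ℝ) + 1)) ≤ ω / 2 := by
    rw [div_lt_iff₀ (by positivity)] at hn
    rw [mul_one_div, div_le_iff₀ (by positivity)]
    nlinarith
  have hθ₁ : 1 / ((n : ℝ) + 1) ≤ 1 := by
    rw [div_le_one (by positivity)]
    linarith [n.cast_nonneg (α := ℝ)]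
  obtain ⟨r, hr, hrA⟩ := Metric.eventually_nhds_iff.mp <| eventually_nhdsWithin_iff.mp <|
    hA.isLittleO.bound (c := ω / 4) (by positivity)
  filter_upwards [eventually_nhdsWithin_iff.mp (hdense n), ball_mem_nhds z₀ (half_pos hr),
    ball_mem_nhds z₀ (show 0 < ρ / 4 by positivity)] with z hzdense hzr hzρ p hp
  rw [mem_ball] at hzr hzρ
  rcases eq_or_ne z z₀ with rfl | hne
  · simp [(hsub z hz₀).eq_of_isSupergradientAt (closedBall_mem_nhds_of_mem_contactSet hρ hz₀) hp]
  obtain ⟨k, hkK, hk⟩ := hzdense hne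
  have hscale : 1 / ((n : ℝ) + 1) * dist z z₀ ≤ dist z z₀ :=
    mul_le_of_le_one_left dist_nonneg hθ₁
  obtain ⟨q, hq⟩ := hsc k
  have hkq := (hsub k hkK).eq_of_isSupergradientAt (closedBall_mem_nhds_of_mem_contactSet hρ hkK) hq
  refine norm_supergradient_sub_le_of_near_contact hC (by positivity) hθ₁ hθω hω.le hne ?_
    (hsub k hkK) (hkq ▸ hq) hp hk (hrA ?_ hkK)
  · refine closedBall_subset_closedBall' ?_
    linarith [dist_triangle z z₀ c, mem_ball.mp hz₀.1]
  · linarith [dist_triangle k z z₀]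

-- Jensen's lemma (a perturbation by slopes of positive measure) combined with Alexandrov's theorem
-- at one of the contact points; the latter follows from Rademacher's theorem for the slope map.
theorem UniformlySemiconcave.exists_hasQuadExpansionAt [FiniteDimensional ℝ Z]
    (hsc : UniformlySemiconcave C G) (hG : Continuous G) (hC : 0 ≤ C) (hρ : 0 < ρ) (hm : 0 < m)
    (hδ : 0 < δ) (hmin : ∀ z, ρ / 2 ≤ dist z c → dist z c ≤ ρ → G c + m ≤ G z) :
    ∃ z p : Z, ∃ A : Z →L[ℝ] Z, dist z c < ρ ∧ ‖p‖ < δ ∧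
      IsSubgradientOn (closedBall c ρ) G z p ∧ HasQuadExpansionAt G p A z := by
  set δ' := min δ (m / (2 * ρ))
  have hδ' : 0 < δ' := by positivity
  have hδ'ρ : δ' * ρ < m := by
    calc δ' * ρ ≤ m / (2 * ρ) * ρ := by
          gcongr
          exact min_le_right _ _
      _ = m / 2 := by field_simp
      _ < m := half_lt_self hm
  obtain ⟨g, hg, hlip, hsurj⟩ := exists_lipschitzOnWith_contact_slope hG hsc hC hρ hδ'ρ hmin
  obtain ⟨z₀, hz₀, ⟨A, hA⟩, hdense⟩ := exists_differentiableWithinAt_density_point hlip hδ' hsurj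
  refine ⟨z₀, g z₀, _, ?_, ?_, (hg z₀ hz₀).2, hasQuadExpansionAt_of_supergradients hsc fun ω hω =>
    eventually_norm_supergradient_sub_le hC hρ (fun z hz => (hg z hz).2) hsc hz₀ hA hdense hω⟩
  · exact (mem_ball.mp hz₀.1).trans (half_lt_self hρ)
  · exact (mem_ball_zero_iff.mp (hg z₀ hz₀).1).trans_le (min_le_left _ _)

end Alexandrov

section ExpansionAlgebra

variable {U V : Type*} [NormedAddCommGroup U] [InnerProductSpace ℝ U]
  [NormedAddCommGroup V] [InnerProductSpace ℝ V]
  {f f₁ f₂ : V → ℝ} {p p₁ p₂ x : V} {A A₁ A₂ : V →L[ℝ] V}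

namespace HasQuadExpansionAt

theorem add (h₁ : HasQuadExpansionAt f₁ p₁ A₁ x) (h₂ : HasQuadExpansionAt f₂ p₂ A₂ x) :
    HasQuadExpansionAt (fun y => f₁ y + f₂ y) (p₁ + p₂) (A₁ + A₂) x := by
  refine (Asymptotics.IsLittleO.add h₁ h₂).congr_left fun h => ?_
  simp only [add_apply, inner_add_left]
  ring

theorem const_mul (hf : HasQuadExpansionAt f p A x) (a : ℝ) :
    HasQuadExpansionAt (fun y => a * f y) (a • p) (a • A) x := by
  refine (Asymptotics.IsLittleO.const_mul_left hf a).congr_left fun h => ?_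
  simp only [smul_apply, real_inner_smul_left]
  ring

theorem sub (h₁ : HasQuadExpansionAt f₁ p₁ A₁ x) (h₂ : HasQuadExpansionAt f₂ p₂ A₂ x) :
    HasQuadExpansionAt (fun y => f₁ y - f₂ y) (p₁ - p₂) (A₁ - A₂) x := by
  simpa [sub_eq_add_neg] using h₁.add (h₂.const_mul (-1))

theorem comp_affine [CompleteSpace U] [CompleteSpace V] {g : U → V} {y : U} (L : U →L[ℝ] V)
    (hf : HasQuadExpansionAt f p A (g y)) (hg : ∀ h, g (y + h) = g y + L h) :
    HasQuadExpansionAt (fun z => f (g z)) (L.adjoint p) (L.adjoint ∘L A ∘L L) y := by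
  have hL : Tendsto L (𝓝 0) (𝓝 0) := by simpa using L.continuous.tendsto 0
  have hO : (fun h => ‖L h‖ ^ 2) =O[𝓝 0] fun h => ‖h‖ ^ 2 := (L.isBigO_id _).norm_norm.pow 2
  refine ((hf.comp_tendsto hL).trans_isBigO hO).congr_left fun h => ?_
  simp only [Function.comp_apply, hg, ContinuousLinearMap.comp_apply,
    ContinuousLinearMap.adjoint_inner_left]

theorem inner_nonneg_of_isSubgradientOn {s : Set V} (hf : HasQuadExpansionAt f p A x)
    (hsub : IsSubgradientOn s f x p) (hs : s ∈ 𝓝 x) (h : V) : 0 ≤ ⟪A h, h⟫_ℝ := by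
  rcases eq_or_ne h 0 with rfl | hne
  · simp
  refine le_of_forall_pos_le_add fun η hη => ?_
  have : 0 < ‖h‖ := norm_pos_iff.mpr hne
  have hline : Tendsto (fun t : ℝ => t • h) (𝓝[>] 0) (𝓝 0) := by
    have hcont : Continuous fun t : ℝ => t • h := by fun_prop
    simpa using (hcont.tendsto 0).mono_left nhdsWithin_le_nhds
  have hs' : ∀ᶠ k in 𝓝 (0 : V), x + k ∈ s := eventually_add_mem hs
  obtain ⟨t, ⟨ht, hts⟩, ht₀⟩ := ((hline.eventually
    ((hf.bound (c := η / ‖h‖ ^ 2) (by positivity)).and hs')).and self_mem_nhdsWithin).exists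
  have hsub' := hsub _ hts
  have hup := (abs_le.mp ht).2
  rw [add_sub_cancel_left] at hsub'
  rw [map_smul, real_inner_smul_left _ _ t, inner_smul_right (A h), norm_pow, norm_norm, norm_smul,
    mul_pow, Real.norm_eq_abs t, sq_abs] at hup
  have hscale : η / ‖h‖ ^ 2 * (t ^ 2 * ‖h‖ ^ 2) = t ^ 2 * η := by field_simp
  have ht₂ : 0 < t ^ 2 := pow_pos ht₀ 2
  refine nonneg_of_mul_nonneg_right (a := t ^ 2) ?_ ht₂
  linarith

theorem inner_eq (h₁ : HasQuadExpansionAt f p A₁ x) (h₂ : HasQuadExpansionAt f p A₂ x) (h : V) :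
    ⟪A₁ h, h⟫_ℝ = ⟪A₂ h, h⟫_ℝ := by
  have key : ∀ {B₁ B₂ : V →L[ℝ] V}, HasQuadExpansionAt f p B₁ x → HasQuadExpansionAt f p B₂ x →
      ⟪B₂ h, h⟫_ℝ ≤ ⟪B₁ h, h⟫_ℝ := fun hB₁ hB₂ => by
    have hzero : IsSubgradientOn univ (fun y => f y - f y) x (p - p) := by
      simp [IsSubgradientOn]
    have := (hB₁.sub hB₂).inner_nonneg_of_isSubgradientOn hzero univ_mem h
    simpa [inner_sub_left] using this
  exact le_antisymm (key h₂ h₁) (key h₁ h₂)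

theorem eventually_neg_le_of_isLocalMinOn {K : Set V} (hf : HasQuadExpansionAt f p A x)
    (hmin : IsLocalMinOn f K x) {η : ℝ} (hη : 0 < η) :
    ∀ᶠ y in 𝓝[K] x, -(η * ‖y - x‖ ^ 2) ≤ ⟪p, y - x⟫_ℝ + ⟪A (y - x), y - x⟫_ℝ := by
  have hshift : Tendsto (fun y => y - x) (𝓝[K] x) (𝓝 0) := by
    have : Continuous fun y : V => y - x := by fun_prop
    simpa using (this.tendsto x).mono_left nhdsWithin_le_nhds
  filter_upwards [hmin, hshift.eventually (hf.bound hη)] with y hy hbound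
  have := (abs_le.mp hbound).2
  rw [norm_pow, norm_norm, add_sub_cancel] at this
  linarith

end HasQuadExpansionAt

theorem hasQuadExpansionAt_quadratic [CompleteSpace V] (l c : V) (T : V →L[ℝ] V) (z : V) :
    HasQuadExpansionAt (fun y => ⟪l, y - c⟫_ℝ + ⟪T (y - c), y - c⟫_ℝ)
      (l + T (z - c) + T.adjoint (z - c)) T z := by
  refine (Asymptotics.isLittleO_zero _ _).congr_left fun h => ?_
  simp only [add_sub_right_comm z h c, map_add, inner_add_left, inner_add_right,
    ContinuousLinearMap.adjoint_inner_left, real_inner_comm (z - c) (T h)]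
  ring

namespace IsSupergradientAt

variable {C C₁ C₂ : ℝ} {z : V}

theorem add (h₁ : IsSupergradientAt C₁ f₁ z p₁) (h₂ : IsSupergradientAt C₂ f₂ z p₂) :
    IsSupergradientAt (C₁ + C₂) (fun y => f₁ y + f₂ y) z (p₁ + p₂) := fun h => by
  have := h₁ h
  have := h₂ h
  rw [inner_add_left]
  linarith

theorem const_mul {κ : ℝ} (hf : IsSupergradientAt C f z p) (hκ : 0 ≤ κ) :
    IsSupergradientAt (κ * C) (fun y => κ * f y) z (κ • p) := fun h => by
  have := mul_le_mul_of_nonneg_left (hf h) hκ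
  rw [real_inner_smul_left]
  linarith

end IsSupergradientAt

theorem norm_inner_map_self_le (T : V →L[ℝ] V) (h : V) : ‖⟪T h, h⟫_ℝ‖ ≤ ‖T‖ * ‖h‖ ^ 2 :=
  calc ‖⟪T h, h⟫_ℝ‖ ≤ ‖T h‖ * ‖h‖ := norm_inner_le_norm _ _
    _ ≤ ‖T‖ * ‖h‖ * ‖h‖ := by
        gcongr
        exact T.le_opNorm h
    _ = ‖T‖ * ‖h‖ ^ 2 := by ring

theorem isSupergradientAt_quadratic [CompleteSpace V] (l c : V) (T : V →L[ℝ] V) (z : V) :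
    IsSupergradientAt ‖T‖ (fun y => ⟪l, y - c⟫_ℝ + ⟪T (y - c), y - c⟫_ℝ) z
      (l + T (z - c) + T.adjoint (z - c)) := fun h => by
  have := (le_abs_self _).trans (norm_inner_map_self_le T h)
  simp only [add_sub_right_comm z h c, map_add, inner_add_left, inner_add_right,
    ContinuousLinearMap.adjoint_inner_left, real_inner_comm (z - c) (T h)]
  linarith

theorem isSupergradientAt_infDist_sq {K : Set V} {z w : V} (hw : w ∈ K)
    (hzw : infDist z K = dist z w) :
    IsSupergradientAt 1 (fun y => infDist y K ^ 2) z ((2 : ℝ) • (z - w)) := fun h => by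
  have hle : infDist (z + h) K ^ 2 ≤ ‖z + h - w‖ ^ 2 := by
    rw [← dist_eq_norm]
    gcongr
    · exact infDist_nonneg
    · exact infDist_le_dist_of_mem hw
  rw [add_sub_right_comm, norm_add_sq_real] at hle
  simp only [hzw, dist_eq_norm, real_inner_smul_left, one_mul]
  linarith

end ExpansionAlgebra

/-! ## Normal jets of closed sets and the theorem on sums -/

theorem exists_penalty_le {X : Type*} [PseudoMetricSpace X] {S K : Set X} {q : X → ℝ} {m : ℝ}
    (hS : IsCompact S) (hK : IsClosed K) (hKne : K.Nonempty) (hq : Continuous q)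
    (hm : ∀ z ∈ S ∩ K, m < q z) :
    ∃ κ ≥ 0, ∀ z ∈ S, m ≤ κ * infDist z K ^ 2 + q z := by
  set S' := S ∩ {z | q z ≤ m}
  have hS' : IsCompact S' := hS.inter_right (isClosed_le hq continuous_const)
  rcases S'.eq_empty_or_nonempty with hempty | hne
  · refine ⟨0, le_rfl, fun z hz => ?_⟩
    by_contra! hlt
    exact hempty.subset ⟨hz, show q z ≤ m by linarith⟩
  obtain ⟨d, hd, hdist⟩ : ∃ d > 0, ∀ z ∈ S', d ≤ infDist z K := by
    obtain ⟨z, hz, hzmin⟩ := hS'.exists_isMinOn hne (continuous_infDist_pt K).continuousOn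
    refine ⟨infDist z K, (hK.notMem_iff_infDist_pos hKne).mp fun hzK => ?_, fun y hy => hzmin hy⟩
    exact (hm z ⟨hz.1, hzK⟩).not_ge hz.2
  obtain ⟨z₀, hz₀, hz₀min⟩ := hS'.exists_isMinOn hne hq.continuousOn
  have hgap : 0 ≤ m - q z₀ := sub_nonneg.mpr hz₀.2
  refine ⟨(m - q z₀) / d ^ 2, by positivity, fun z hz => ?_⟩
  rcases le_or_gt (q z) m with hzm | hzm
  · have h₁ : q z₀ ≤ q z := hz₀min ⟨hz, hzm⟩
    have h₂ : (m - q z₀) / d ^ 2 * d ^ 2 ≤ (m - q z₀) / d ^ 2 * infDist z K ^ 2 := by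
      gcongr
      exact hdist z ⟨hz, hzm⟩
    rw [div_mul_cancel₀ _ (by positivity)] at h₂
    linarith
  · have : 0 ≤ (m - q z₀) / d ^ 2 * infDist z K ^ 2 := by positivity
    linarith

section NormalJets

variable {V W : Type*} [NormedAddCommGroup V] [InnerProductSpace ℝ V]
  [NormedAddCommGroup W] [InnerProductSpace ℝ W]

/-- `(P, S)` is a second-order normal jet of `F` at `X`: near `X` the set `F` lies on the side
`⟪P, Y - X⟫ + ⟪S (Y - X), Y - X⟫ ≤ o(‖Y - X‖²)` of a paraboloid. It plays the role of the
semijets of viscosity theory, for sets instead of functions. -/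
def IsNormalJet (F : Set V) (X P : V) (S : V →L[ℝ] V) : Prop :=
  ∀ η > 0, ∀ᶠ Y in 𝓝[F] X, ⟪P, Y - X⟫_ℝ + ⟪S (Y - X), Y - X⟫_ℝ ≤ η * ‖Y - X‖ ^ 2

/-- The product of two sets inside the Hilbert sum of their ambient spaces. -/
def hilbertProd (F : Set V) (E : Set W) : Set (WithLp 2 (V × W)) :=
  {z | z.fst ∈ F ∧ z.snd ∈ E}

theorem isClosed_hilbertProd {F : Set V} {E : Set W} (hF : IsClosed F) (hE : IsClosed E) :
    IsClosed (hilbertProd F E) :=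
  (hF.preimage (WithLp.fstL 2 ℝ V W).continuous).inter
    (hE.preimage (WithLp.sndL 2 ℝ V W).continuous)

theorem isNormalJet_of_hasQuadExpansionAt_infDist_sq {K : Set V} {X z P : V} {S : V →L[ℝ] V}
    {κ : ℝ} (hκ : 0 ≤ κ) (hX : infDist z K = dist z X)
    (hexp : HasQuadExpansionAt (fun y => κ * infDist y K ^ 2) P S z) : IsNormalJet K X P S := by
  intro η hη
  have hshift : Tendsto (fun Y => Y - X) (𝓝[K] X) (𝓝 0) := by
    have : Continuous fun Y : V => Y - X := by fun_prop
    simpa using (this.tendsto X).mono_left nhdsWithin_le_nhds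
  filter_upwards [self_mem_nhdsWithin, hshift.eventually (hexp.bound hη)] with Y hY hbound
  have hdist : infDist (z + (Y - X)) K ≤ infDist z K := by
    refine (infDist_le_dist_of_mem hY).trans_eq ?_
    rw [hX, dist_eq_norm, dist_eq_norm]
    congr 1
    abel
  have hsq : κ * infDist (z + (Y - X)) K ^ 2 ≤ κ * infDist z K ^ 2 := by
    gcongr
    exact infDist_nonneg
  have := (abs_le.mp hbound).1
  rw [norm_pow, norm_norm] at this
  linarith

variable [FiniteDimensional ℝ V] [FiniteDimensional ℝ W]

theorem exists_penalized_strict_min {K : Set V} {c l : V} {T : V →L[ℝ] V} {a ρ₀ : ℝ}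
    (hK : IsClosed K) (hc : c ∈ K) (ha : 0 < a) (hρ₀ : 0 < ρ₀)
    (hq : ∀ᶠ w in 𝓝[K] c, a * ‖w - c‖ ^ 2 ≤ ⟪l, w - c⟫_ℝ + ⟪T (w - c), w - c⟫_ℝ) :
    ∃ ρ > 0, ρ ≤ ρ₀ ∧ ∃ m > 0, ∃ κ ≥ 0, ∀ z, ρ / 2 ≤ dist z c → dist z c ≤ ρ →
      m ≤ κ * infDist z K ^ 2 + (⟪l, z - c⟫_ℝ + ⟪T (z - c), z - c⟫_ℝ) := by
  obtain ⟨r, hr, hrq⟩ := Metric.eventually_nhds_iff.mp (eventually_nhdsWithin_iff.mp hq)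
  set ρ := min ρ₀ (r / 2)
  have hρ : 0 < ρ := by positivity
  have hρr : ρ < r := (min_le_right _ _).trans_lt (half_lt_self hr)
  set S : Set V := closedBall c ρ ∩ {z | ρ / 2 ≤ dist z c}
  have hS : IsCompact S := (isCompact_closedBall c ρ).inter_right
    (isClosed_le continuous_const (by fun_prop))
  obtain ⟨κ, hκ, hκS⟩ := exists_penalty_le (m := a * ρ ^ 2 / 8)
    (q := fun z => ⟪l, z - c⟫_ℝ + ⟪T (z - c), z - c⟫_ℝ) hS hK ⟨c, hc⟩ (by fun_prop) (by
      rintro z ⟨⟨hzρ, hz⟩, hzK⟩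
      have hge : ρ / 2 ≤ dist z c := hz
      have hquad := hrq ((mem_closedBall.mp hzρ).trans_lt hρr) hzK
      rw [← dist_eq_norm] at hquad
      have hsq : a * (ρ / 2) ^ 2 ≤ a * dist z c ^ 2 := by gcongr
      have : 0 < a * ρ ^ 2 := by positivity
      linarith)
  exact ⟨ρ, hρ, min_le_left _ _, a * ρ ^ 2 / 8, by positivity, κ, hκ,
    fun z h₁ h₂ => hκS z ⟨h₂, h₁⟩⟩

theorem exists_hasQuadExpansionAt_infDist_sq {K : Set V} {c l : V} {T : V →L[ℝ] V} {a ε : ℝ}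
    (hK : IsClosed K) (hc : c ∈ K) (ha : 0 < a) (hε : 0 < ε)
    (hq : ∀ᶠ w in 𝓝[K] c, a * ‖w - c‖ ^ 2 ≤ ⟪l, w - c⟫_ℝ + ⟪T (w - c), w - c⟫_ℝ) :
    ∃ κ ≥ 0, ∃ z P : V, ∃ S : V →L[ℝ] V, dist z c < ε ∧ ‖P + l‖ < ε ∧
      HasQuadExpansionAt (fun y => κ * infDist y K ^ 2) P S z ∧
      ∀ h, 0 ≤ ⟪S h, h⟫_ℝ + ⟪T h, h⟫_ℝ := by
  obtain ⟨ρ, hρ, hρε, m, hm, κ, hκ, hmin⟩ := exists_penalized_strict_min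
    (ρ₀ := ε / (4 * (‖T‖ + 1))) hK hc ha (by positivity) hq
  set q : V → ℝ := fun y => ⟪l, y - c⟫_ℝ + ⟪T (y - c), y - c⟫_ℝ
  set G : V → ℝ := fun y => κ * infDist y K ^ 2 + q y
  have hG : Continuous G := by
    have := continuous_infDist_pt K
    fun_prop
  have hsc : UniformlySemiconcave (κ * 1 + ‖T‖) G := fun z => by
    obtain ⟨w, hw, hzw⟩ := hK.exists_infDist_eq_dist ⟨c, hc⟩ z
    exact ⟨_, ((isSupergradientAt_infDist_sq hw hzw).const_mul hκ).add
      (isSupergradientAt_quadratic l c T z)⟩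
  have hGc : G c = 0 := by simp [G, q, infDist_zero_of_mem hc]
  obtain ⟨z, p, A, hz, hp, hsub, hA⟩ := hsc.exists_hasQuadExpansionAt hG (by positivity) hρ hm
    (half_pos hε) (c := c) fun z h₁ h₂ => by
      rw [hGc, zero_add]
      exact hmin z h₁ h₂
  have hTρ : 4 * (‖T‖ + 1) * dist z c < ε := by
    rw [← lt_div_iff₀' (by positivity)]
    exact hz.trans_le hρε
  have hexp : HasQuadExpansionAt (fun y => κ * infDist y K ^ 2)
      (p - (l + T (z - c) + T.adjoint (z - c))) (A - T) z := by
    simpa only [G, q, add_sub_cancel_right] using hA.sub (hasQuadExpansionAt_quadratic l c T z)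
  refine ⟨κ, hκ, z, _, A - T, ?_, ?_, hexp, fun h => ?_⟩
  · nlinarith [norm_nonneg T, dist_nonneg (x := z) (y := c)]
  · have h₁ := T.le_opNorm (z - c)
    have h₂ := T.adjoint.le_opNorm (z - c)
    rw [LinearIsometryEquiv.norm_map] at h₂
    rw [dist_eq_norm] at hTρ
    calc ‖p - (l + T (z - c) + T.adjoint (z - c)) + l‖
        = ‖p + -T (z - c) + -T.adjoint (z - c)‖ := by
          congr 1
          abel
      _ ≤ ‖p‖ + ‖T (z - c)‖ + ‖T.adjoint (z - c)‖ := by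
          simpa only [norm_neg] using norm_add₃_le (a := p) (b := -T (z - c))
            (c := -T.adjoint (z - c))
      _ < ε := by nlinarith [norm_nonneg (z - c)]
  · have := hA.inner_nonneg_of_isSubgradientOn hsub
      (closedBall_mem_nhds_of_mem (mem_ball.mpr hz)) h
    simpa [inner_sub_left] using this

theorem infDist_hilbertProd_sq {F : Set V} {E : Set W} (hF : IsClosed F) (hE : IsClosed E)
    (hFne : F.Nonempty) (hEne : E.Nonempty) (z : WithLp 2 (V × W)) :
    infDist z (hilbertProd F E) ^ 2 = infDist z.fst F ^ 2 + infDist z.snd E ^ 2 := by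
  have hdist (w : WithLp 2 (V × W)) :
      dist z w ^ 2 = dist z.fst w.fst ^ 2 + dist z.snd w.snd ^ 2 := by
    simp only [dist_eq_norm, WithLp.prod_norm_sq_eq_of_L2, WithLp.sub_fst, WithLp.sub_snd]
  obtain ⟨X, hX, hzX⟩ := hF.exists_infDist_eq_dist hFne z.fst
  obtain ⟨Y, hY, hzY⟩ := hE.exists_infDist_eq_dist hEne z.snd
  have hXY : WithLp.toLp 2 (X, Y) ∈ hilbertProd F E := ⟨hX, hY⟩
  obtain ⟨w, hw, hzw⟩ := (isClosed_hilbertProd hF hE).exists_infDist_eq_dist ⟨_, hXY⟩ z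
  refine le_antisymm ?_ ?_
  · calc infDist z (hilbertProd F E) ^ 2 ≤ dist z (WithLp.toLp 2 (X, Y)) ^ 2 := by
          gcongr
          · exact infDist_nonneg
          · exact infDist_le_dist_of_mem hXY
      _ = infDist z.fst F ^ 2 + infDist z.snd E ^ 2 := by
          rw [hdist, hzX, hzY]
          rfl
  · rw [hzw, hdist]
    gcongr
    · exact infDist_nonneg
    · exact infDist_le_dist_of_mem hw.1
    · exact infDist_nonneg
    · exact infDist_le_dist_of_mem hw.2

theorem adjoint_fstL_apply (X : V) :
    (WithLp.fstL 2 ℝ V W).adjoint X = WithLp.toLp 2 (X, 0) :=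
  ext_inner_right ℝ fun z => by
    simp [ContinuousLinearMap.adjoint_inner_left, WithLp.prod_inner_apply]

theorem adjoint_sndL_apply (Y : W) :
    (WithLp.sndL 2 ℝ V W).adjoint Y = WithLp.toLp 2 (0, Y) :=
  ext_inner_right ℝ fun z => by
    simp [ContinuousLinearMap.adjoint_inner_left, WithLp.prod_inner_apply]

theorem HasQuadExpansionAt.of_add_separated {f : V → ℝ} {g : W → ℝ} {z P : WithLp 2 (V × W)}
    {S : WithLp 2 (V × W) →L[ℝ] WithLp 2 (V × W)}
    (h : HasQuadExpansionAt (fun y => f y.fst + g y.snd) P S z) :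
    ∃ S₁ S₂, HasQuadExpansionAt f P.fst S₁ z.fst ∧ HasQuadExpansionAt g P.snd S₂ z.snd ∧
      ∀ y, ⟪S y, y⟫_ℝ = ⟪S₁ y.fst, y.fst⟫_ℝ + ⟪S₂ y.snd, y.snd⟫_ℝ := by
  set fst := WithLp.fstL 2 ℝ V W
  set snd := WithLp.sndL 2 ℝ V W
  have hf : HasQuadExpansionAt f P.fst (fst ∘L S ∘L fst.adjoint) z.fst := by
    have := HasQuadExpansionAt.comp_affine (y := z.fst) (g := fun X => z + fst.adjoint (X - z.fst))
      fst.adjoint (by simpa using h) (by simp)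
    refine Asymptotics.IsLittleO.congr_left this fun k => ?_
    simp [fst, adjoint_fstL_apply]
  have hg : HasQuadExpansionAt g P.snd (snd ∘L S ∘L snd.adjoint) z.snd := by
    have := HasQuadExpansionAt.comp_affine (y := z.snd) (g := fun Y => z + snd.adjoint (Y - z.snd))
      snd.adjoint (by simpa using h) (by simp)
    refine Asymptotics.IsLittleO.congr_left this fun k => ?_
    simp [snd, adjoint_sndL_apply]
  refine ⟨_, _, hf, hg, fun y => ?_⟩
  have hsum := (hf.comp_affine (g := fun y => y.fst) (y := z) fst (by simp [fst])).add
    (hg.comp_affine (g := fun y => y.snd) (y := z) snd (by simp [snd]))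
  have hP : fst.adjoint P.fst + snd.adjoint P.snd = P := by
    refine ext_inner_right ℝ fun y => ?_
    simp only [inner_add_left, ContinuousLinearMap.adjoint_inner_left, WithLp.prod_inner_apply]
    rfl
  rw [hP] at hsum
  rw [h.inner_eq hsum, add_apply, inner_add_left, ContinuousLinearMap.comp_apply,
    ContinuousLinearMap.adjoint_inner_left, ContinuousLinearMap.comp_apply (snd.adjoint),
    ContinuousLinearMap.adjoint_inner_left]
  rfl

-- The squared distance to `F × E` is a sum of functions of the separate variables, so the second
-- order information it carries at a perturbed minimum is block diagonal.
theorem exists_isNormalJet_pair {F : Set V} {E : Set W} (hF : IsClosed F) (hE : IsClosed E)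
    {c l : WithLp 2 (V × W)} {T : WithLp 2 (V × W) →L[ℝ] WithLp 2 (V × W)}
    {Φ : WithLp 2 (V × W) → ℝ} (hc : c ∈ hilbertProd F E) (hΦ : HasQuadExpansionAt Φ l T c)
    (hmin : IsLocalMinOn Φ (hilbertProd F E) c) {ε : ℝ} (hε : 0 < ε) :
    ∃ X ∈ F, ∃ Y ∈ E, ∃ P : WithLp 2 (V × W), ∃ S₁ : V →L[ℝ] V, ∃ S₂ : W →L[ℝ] W,
      dist X c.fst < ε ∧ dist Y c.snd < ε ∧ ‖P + l‖ < ε ∧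
      IsNormalJet F X P.fst S₁ ∧ IsNormalJet E Y P.snd S₂ ∧
      ∀ y : WithLp 2 (V × W), -(ε * ‖y‖ ^ 2) ≤
        ⟪S₁ y.fst, y.fst⟫_ℝ + ⟪S₂ y.snd, y.snd⟫_ℝ + ⟪T y, y⟫_ℝ := by
  set T' := T + ε • ContinuousLinearMap.id ℝ (WithLp 2 (V × W))
  have hT' (y : WithLp 2 (V × W)) : ⟪T' y, y⟫_ℝ = ⟪T y, y⟫_ℝ + ε * ‖y‖ ^ 2 := by
    simp only [T', add_apply, smul_apply, ContinuousLinearMap.id_apply, inner_add_left,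
      real_inner_smul_left, real_inner_self_eq_norm_sq]
  have hq : ∀ᶠ w in 𝓝[hilbertProd F E] c,
      ε / 2 * ‖w - c‖ ^ 2 ≤ ⟪l, w - c⟫_ℝ + ⟪T' (w - c), w - c⟫_ℝ := by
    filter_upwards [hΦ.eventually_neg_le_of_isLocalMinOn hmin (half_pos hε)] with w hw
    rw [hT']
    linarith
  obtain ⟨κ, hκ, z, P, S, hz, hP, hexp, hST⟩ := exists_hasQuadExpansionAt_infDist_sq
    (isClosed_hilbertProd hF hE) hc (half_pos hε) (half_pos hε) hq
  simp only [infDist_hilbertProd_sq hF hE ⟨_, hc.1⟩ ⟨_, hc.2⟩, mul_add] at hexp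
  obtain ⟨S₁, S₂, h₁, h₂, hS⟩ := HasQuadExpansionAt.of_add_separated
    (f := fun X => κ * infDist X F ^ 2) (g := fun Y => κ * infDist Y E ^ 2) hexp
  obtain ⟨X, hX, hzX⟩ := hF.exists_infDist_eq_dist ⟨_, hc.1⟩ z.fst
  obtain ⟨Y, hY, hzY⟩ := hE.exists_infDist_eq_dist ⟨_, hc.2⟩ z.snd
  refine ⟨X, hX, Y, hY, P, S₁, S₂, ?_, ?_, hP.trans (half_lt_self hε),
    isNormalJet_of_hasQuadExpansionAt_infDist_sq hκ hzX h₁,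
    isNormalJet_of_hasQuadExpansionAt_infDist_sq hκ hzY h₂, fun y => ?_⟩
  · have := infDist_le_dist_of_mem (x := z.fst) hc.1
    linarith [dist_triangle_left X c.fst z.fst, WithLp.dist_fst_le z c]
  · have := infDist_le_dist_of_mem (x := z.snd) hc.2
    linarith [dist_triangle_left Y c.snd z.snd, WithLp.dist_snd_le z c]
  · have := hST y
    rw [hS, hT'] at this
    linarith

theorem exists_seq_isNormalJet_pair {F : Set V} {E : Set W} (hF : IsClosed F) (hE : IsClosed E)
    {c l : WithLp 2 (V × W)} {T : WithLp 2 (V × W) →L[ℝ] WithLp 2 (V × W)}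
    {Φ : WithLp 2 (V × W) → ℝ} (hc : c ∈ hilbertProd F E) (hΦ : HasQuadExpansionAt Φ l T c)
    (hmin : IsLocalMinOn Φ (hilbertProd F E) c) :
    ∃ (ε : ℕ → ℝ) (X : ℕ → V) (Y : ℕ → W) (P : ℕ → WithLp 2 (V × W)) (S₁ : ℕ → V →L[ℝ] V)
      (S₂ : ℕ → W →L[ℝ] W), Tendsto ε atTop (𝓝 0) ∧ Tendsto X atTop (𝓝 c.fst) ∧
      Tendsto Y atTop (𝓝 c.snd) ∧ Tendsto P atTop (𝓝 (-l)) ∧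
      ∀ k, X k ∈ F ∧ Y k ∈ E ∧ IsNormalJet F (X k) (P k).fst (S₁ k) ∧
        IsNormalJet E (Y k) (P k).snd (S₂ k) ∧
        ∀ y, -(ε k * ‖y‖ ^ 2) ≤
          ⟪S₁ k y.fst, y.fst⟫_ℝ + ⟪S₂ k y.snd, y.snd⟫_ℝ + ⟪T y, y⟫_ℝ := by
  choose X hX Y hY P S₁ S₂ hXc hYc hPl hjX hjY hT using fun k : ℕ =>
    exists_isNormalJet_pair hF hE hc hΦ hmin (Nat.one_div_pos_of_nat (n := k) (α := ℝ))
  have hε := tendsto_one_div_add_atTop_nhds_zero_nat (𝕜 := ℝ)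
  refine ⟨fun k => 1 / ((k : ℝ) + 1), X, Y, P, S₁, S₂, hε, ?_, ?_, ?_,
    fun k => ⟨hX k, hY k, hjX k, hjY k, hT k⟩⟩
  · exact tendsto_iff_dist_tendsto_zero.mpr
      (squeeze_zero (fun _ => dist_nonneg) (fun k => (hXc k).le) hε)
  · exact tendsto_iff_dist_tendsto_zero.mpr
      (squeeze_zero (fun _ => dist_nonneg) (fun k => (hYc k).le) hε)
  · refine tendsto_iff_norm_sub_tendsto_zero.mpr
      (squeeze_zero (fun _ => norm_nonneg _) (fun k => ?_) hε)
    simpa only [sub_neg_eq_add] using (hPl k).le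

end NormalJets

/-! ## Mean curvature of quadratic functions and tangential traces -/

section TangentTrace

variable {V ι κ : Type*} [NormedAddCommGroup V] [InnerProductSpace ℝ V] [Fintype ι] [Fintype κ]

/-- A Parseval frame of the hyperplane orthogonal to the unit vector `n`. Summing a quadratic form
over such a frame gives its trace on that hyperplane. -/
def IsTangentFrame (n : V) (g : ι → V) : Prop :=
  ∀ a, ∑ j, ⟪g j, a⟫_ℝ ^ 2 = ‖a‖ ^ 2 - ⟪n, a⟫_ℝ ^ 2

theorem sum_mul_inner_mul_inner_eq {w : ι → ℝ} {g : ι → V} {w' : κ → ℝ} {g' : κ → V}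
    (h : ∀ a, ∑ j, w j * ⟪g j, a⟫_ℝ ^ 2 = ∑ j, w' j * ⟪g' j, a⟫_ℝ ^ 2) (a b : V) :
    ∑ j, w j * (⟪g j, a⟫_ℝ * ⟪g j, b⟫_ℝ) = ∑ j, w' j * (⟪g' j, a⟫_ℝ * ⟪g' j, b⟫_ℝ) := by
  have hexpand (r s t : ℝ) : r * (s + t) ^ 2 = r * s ^ 2 + r * t ^ 2 + 2 * (r * (s * t)) := by ring
  have hab := h (a + b)
  simp only [inner_add_right, hexpand, Finset.sum_add_distrib, ← Finset.mul_sum] at hab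
  linarith [h a, h b]

theorem sum_mul_inner_map_self_eq [FiniteDimensional ℝ V] (S : V →L[ℝ] V) {w : ι → ℝ} {g : ι → V}
    {w' : κ → ℝ} {g' : κ → V}
    (h : ∀ a, ∑ j, w j * ⟪g j, a⟫_ℝ ^ 2 = ∑ j, w' j * ⟪g' j, a⟫_ℝ ^ 2) :
    ∑ j, w j * ⟪S (g j), g j⟫_ℝ = ∑ j, w' j * ⟪S (g' j), g' j⟫_ℝ := by
  set b := stdOrthonormalBasis ℝ V
  have hbasis (x : V) : ⟪S x, x⟫_ℝ = ∑ k, ⟪x, b k⟫_ℝ * ⟪x, S.adjoint (b k)⟫_ℝ := by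
    rw [← b.sum_inner_mul_inner (S x) x]
    refine Finset.sum_congr rfl fun k _ => ?_
    rw [ContinuousLinearMap.adjoint_inner_right, real_inner_comm x (b k), mul_comm]
  simp only [hbasis, Finset.mul_sum]
  rw [Finset.sum_comm, Finset.sum_comm (γ := κ)]
  exact Finset.sum_congr rfl fun k _ => sum_mul_inner_mul_inner_eq h _ _

end TangentTrace

section QuadraticMeanCurvature

theorem HasQuadExpansionAt.hasGradientAt {V : Type*} [NormedAddCommGroup V]
    [InnerProductSpace ℝ V] [CompleteSpace V] {f : V → ℝ} {p x : V} {A : V →L[ℝ] V}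
    (hf : HasQuadExpansionAt f p A x) : HasGradientAt f p x := by
  rw [hasGradientAt_iff_hasFDerivAt, hasFDerivAt_iff_isLittleO_nhds_zero]
  have hsq : (fun h : V => ‖h‖ ^ 2) =o[𝓝 0] fun h => h :=
    Asymptotics.isLittleO_norm_pow_id one_lt_two
  have hA : (fun h => ⟪A h, h⟫_ℝ) =O[𝓝 0] fun h => ‖h‖ ^ 2 := by
    refine .of_bound ‖A‖ (.of_forall fun h => ?_)
    rw [norm_pow, norm_norm]
    exact norm_inner_map_self_le A h
  refine ((hf.trans hsq).add (hA.trans_isLittleO hsq)).congr_left fun h => ?_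
  rw [InnerProductSpace.toDual_apply_apply]
  ring

theorem hasFDerivAt_normalized_affine {V : Type*} [NormedAddCommGroup V] [InnerProductSpace ℝ V]
    (p x : V) (S : V →L[ℝ] V) :
    HasFDerivAt (fun y => (√(1 + ‖p + S (y - x)‖ ^ 2))⁻¹ • (p + S (y - x)))
      ((√(1 + ‖p‖ ^ 2))⁻¹ • S -
        ((√(1 + ‖p‖ ^ 2) ^ 3)⁻¹ • (innerSL ℝ p ∘L S)).smulRight p) x := by
  have hpos : 0 < 1 + ‖p‖ ^ 2 := by positivity
  have haff : HasFDerivAt (fun y => p + S (y - x)) S x :=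
    ((S.hasFDerivAt.comp x ((hasFDerivAt_id x).sub_const x)).const_add p)
  have hsqrt := (haff.norm_sq.const_add 1).sqrt (by simpa using hpos.ne')
  have hinv := (hasDerivAt_inv (by simpa using (Real.sqrt_pos.mpr hpos).ne')).comp_hasFDerivAt x
    hsqrt
  refine (hinv.smul haff).congr_fderiv (ContinuousLinearMap.ext fun h => ?_)
  have hcube (s r : ℝ) : (s ^ 2)⁻¹ * (s⁻¹ * 2⁻¹) * (2 * r) = (s ^ 3)⁻¹ * r := by ring
  simp [smul_smul, hcube, sub_eq_add_neg]

variable {N : ℕ}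

theorem mcOp_quadratic (p x : EuclideanSpace ℝ (Fin N))
    (Q : EuclideanSpace ℝ (Fin N) →L[ℝ] EuclideanSpace ℝ (Fin N)) :
    mcOp (fun y => ⟪p, y - x⟫_ℝ + ⟪Q (y - x), y - x⟫_ℝ) x = 2 / √(1 + ‖p‖ ^ 2) *
      (∑ i, ⟪Q (EuclideanSpace.single i 1), EuclideanSpace.single i 1⟫_ℝ -
        ⟪Q p, p⟫_ℝ / (1 + ‖p‖ ^ 2)) := by
  set S := Q + Q.adjoint
  have hgrad (y : EuclideanSpace ℝ (Fin N)) :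
      gradient (fun y => ⟪p, y - x⟫_ℝ + ⟪Q (y - x), y - x⟫_ℝ) y = p + S (y - x) := by
    rw [(hasQuadExpansionAt_quadratic p x Q y).hasGradientAt.gradient, add_apply, add_assoc]
  have hS (h : EuclideanSpace ℝ (Fin N)) : ⟪S h, h⟫_ℝ = 2 * ⟪Q h, h⟫_ℝ := by
    rw [add_apply, inner_add_left, ContinuousLinearMap.adjoint_inner_left, real_inner_comm (Q h)]
    ring
  have hpS : ∑ i, ⟪p, S (EuclideanSpace.single i 1)⟫_ℝ * p i = ⟪S p, p⟫_ℝ := by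
    have := (EuclideanSpace.basisFun (Fin N) ℝ).sum_inner_mul_inner (S.adjoint p) p
    simpa [EuclideanSpace.inner_single_left, ContinuousLinearMap.adjoint_inner_left,
      real_inner_comm p (S p)] using this
  have hcoord (i : Fin N) : fderiv ℝ (fun y => (√(1 + ‖p + S (y - x)‖ ^ 2))⁻¹ * (p + S (y - x)) i) x
      (EuclideanSpace.single i 1) = (√(1 + ‖p‖ ^ 2))⁻¹ * (S (EuclideanSpace.single i 1)) i -
        (√(1 + ‖p‖ ^ 2) ^ 3)⁻¹ * (⟪p, S (EuclideanSpace.single i 1)⟫_ℝ * p i) := by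
    have := ((EuclideanSpace.proj (𝕜 := ℝ) i).hasFDerivAt.comp x
      (hasFDerivAt_normalized_affine p x S)).fderiv
    refine (congrArg (fun L => L (EuclideanSpace.single i 1)) this).trans ?_
    simp [mul_assoc]
  have hdiag (i : Fin N) : (S (EuclideanSpace.single i 1)) i =
      2 * ⟪Q (EuclideanSpace.single i 1), EuclideanSpace.single i (1 : ℝ)⟫_ℝ := by
    rw [← hS, EuclideanSpace.inner_single_right]
    simp
  have hpos : 0 < 1 + ‖p‖ ^ 2 := by positivity
  have hcube : √(1 + ‖p‖ ^ 2) ^ 3 = √(1 + ‖p‖ ^ 2) * (1 + ‖p‖ ^ 2) := by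
    rw [pow_succ', Real.sq_sqrt hpos.le]
  simp only [mcOp, hgrad, hcoord, Finset.sum_sub_distrib, ← Finset.mul_sum, hpS, hS, hdiag, hcube]
  field_simp

end QuadraticMeanCurvature

/-! ## Normal jets of epigraphs of viscosity supersolutions -/

section Epigraph

variable {V : Type*} [NormedAddCommGroup V] [InnerProductSpace ℝ V]

theorem inner_prod_real (a b : WithLp 2 (V × ℝ)) :
    ⟪a, b⟫_ℝ = ⟪a.fst, b.fst⟫_ℝ + a.snd * b.snd := by
  simp [WithLp.prod_inner_apply, mul_comm]

theorem norm_sq_prod_real {E : Type*} [SeminormedAddCommGroup E] (a : WithLp 2 (E × ℝ)) :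
    ‖a‖ ^ 2 = ‖a.fst‖ ^ 2 + a.snd ^ 2 := by
  simp [WithLp.prod_norm_sq_eq_of_L2]

theorem norm_le_norm_fst_add_abs_snd {E : Type*} [SeminormedAddCommGroup E]
    (X : WithLp 2 (E × ℝ)) :
    ‖X‖ ≤ ‖X.fst‖ + |X.snd| := by
  refine abs_le_of_sq_le_sq' ?_ (by positivity) |>.2
  rw [norm_sq_prod_real, ← sq_abs X.snd]
  nlinarith [mul_nonneg (norm_nonneg X.fst) (abs_nonneg X.snd)]

/-- The epigraph of `u` over `B`, in the Hilbert space `V × ℝ`. -/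
def epigraphOn (B : Set V) (u : V → ℝ) : Set (WithLp 2 (V × ℝ)) :=
  {X | X.fst ∈ B ∧ u X.fst ≤ X.snd}

/-- The hypograph of `v` over `B`, in the Hilbert space `V × ℝ`. -/
def hypographOn (B : Set V) (v : V → ℝ) : Set (WithLp 2 (V × ℝ)) :=
  {X | X.fst ∈ B ∧ X.snd ≤ v X.fst}

/-- The linear parametrization `h ↦ (h, ⟪p, h⟫)` of the tangent plane of a graph of slope `p`. -/
noncomputable def graphLift (p : V) : V →L[ℝ] WithLp 2 (V × ℝ) :=
  (WithLp.prodContinuousLinearEquiv 2 ℝ V ℝ).symm.toContinuousLinearMap ∘L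
    (ContinuousLinearMap.id ℝ V).prod (innerSL ℝ p)

theorem graphLift_apply (p h : V) : graphLift p h = WithLp.toLp 2 (h, ⟪p, h⟫_ℝ) := rfl

theorem IsNormalJet.inner_nonpos_of_ray {F : Set V} {X P e : V} {S : V →L[ℝ] V}
    (hj : IsNormalJet F X P S) (hray : ∀ᶠ t in 𝓝[>] (0 : ℝ), X + t • e ∈ F) : ⟪P, e⟫_ℝ ≤ 0 := by
  have hcont : Continuous fun t : ℝ => X + t • e := by fun_prop
  have htends : Tendsto (fun t : ℝ => X + t • e) (𝓝[>] 0) (𝓝[F] X) :=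
    tendsto_nhdsWithin_iff.mpr
      ⟨by simpa using (hcont.tendsto 0).mono_left nhdsWithin_le_nhds, hray⟩
  have hlim : Tendsto (fun t : ℝ => t * (‖e‖ ^ 2 - ⟪S e, e⟫_ℝ)) (𝓝[>] 0) (𝓝 0) := by
    have : Continuous fun t : ℝ => t * (‖e‖ ^ 2 - ⟪S e, e⟫_ℝ) := by fun_prop
    simpa using (this.tendsto 0).mono_left nhdsWithin_le_nhds
  refine ge_of_tendsto hlim ?_
  filter_upwards [htends.eventually (hj 1 one_pos), self_mem_nhdsWithin] with t hjt ht
  rw [add_sub_cancel_left, map_smul, real_inner_smul_left, real_inner_smul_right,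
    real_inner_smul_right, norm_smul, mul_pow, Real.norm_eq_abs, sq_abs] at hjt
  refine le_of_mul_le_mul_left ?_ (mem_Ioi.mp ht)
  linarith

theorem IsNormalJet.snd_eq_of_epigraphOn {B : Set V} {u : V → ℝ} {X P : WithLp 2 (V × ℝ)}
    {S : WithLp 2 (V × ℝ) →L[ℝ] WithLp 2 (V × ℝ)} (hj : IsNormalJet (epigraphOn B u) X P S)
    (hX : X ∈ epigraphOn B u) (hP : P.snd < 0) : X.snd = u X.fst := by
  by_contra hne
  have hlt : u X.fst < X.snd := lt_of_le_of_ne' hX.2 hne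
  have hray : ∀ᶠ t in 𝓝[>] (0 : ℝ), X + t • WithLp.toLp 2 ((0 : V), (-1 : ℝ)) ∈ epigraphOn B u := by
    filter_upwards [Ioo_mem_nhdsGT (sub_pos.mpr hlt)] with t ht
    have := ht.2
    refine ⟨by simpa using hX.1, ?_⟩
    simp only [WithLp.add_fst, WithLp.smul_fst, WithLp.toLp_fst, smul_zero, add_zero,
      WithLp.add_snd, WithLp.smul_snd, WithLp.toLp_snd, smul_eq_mul]
    linarith
  have := hj.inner_nonpos_of_ray hray
  simp only [inner_prod_real, WithLp.toLp_fst, WithLp.toLp_snd, inner_zero_right] at this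
  linarith

theorem isLittleO_inner_map_add_sub {U : Type*} [NormedAddCommGroup U] [NormedSpace ℝ U]
    (S : V →L[ℝ] V) (L : U →L[ℝ] V) {r : U → V} (hr : r =O[𝓝 0] fun h => ‖h‖ ^ 2) :
    (fun h => ⟪S (L h + r h), L h + r h⟫_ℝ - ⟪S (L h), L h⟫_ℝ) =o[𝓝 0] fun h => ‖h‖ ^ 2 := by
  have hid : (fun h : U => ‖h‖ ^ 2) =o[𝓝 0] fun h => ‖h‖ := by
    simpa using Asymptotics.isLittleO_norm_pow_norm_pow (E' := U) one_lt_two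
  have hL : (fun h => ‖L h‖) =O[𝓝 0] fun h => ‖h‖ := (L.isBigO_id _).norm_norm
  have hr' : (fun h => ‖r h‖) =o[𝓝 0] fun h => ‖h‖ := (hr.trans_isLittleO hid).norm_left
  have hbound (h : U) : ‖⟪S (L h + r h), L h + r h⟫_ℝ - ⟪S (L h), L h⟫_ℝ‖ ≤
      ‖S‖ * ‖(2 * ‖L h‖ + ‖r h‖) * ‖r h‖‖ := by
    have hsplit : ⟪S (L h + r h), L h + r h⟫_ℝ - ⟪S (L h), L h⟫_ℝ =
        ⟪S (L h), r h⟫_ℝ + ⟪S (r h), L h + r h⟫_ℝ := by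
      simp only [map_add, inner_add_left, inner_add_right]
      ring
    calc ‖⟪S (L h + r h), L h + r h⟫_ℝ - ⟪S (L h), L h⟫_ℝ‖
        ≤ ‖S (L h)‖ * ‖r h‖ + ‖S (r h)‖ * ‖L h + r h‖ := by
          rw [hsplit]
          exact (norm_add_le _ _).trans (add_le_add (norm_inner_le_norm _ _)
            (norm_inner_le_norm _ _))
      _ ≤ ‖S‖ * ‖L h‖ * ‖r h‖ + ‖S‖ * ‖r h‖ * (‖L h‖ + ‖r h‖) := by
          gcongr
          · exact S.le_opNorm _
          · exact S.le_opNorm _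
          · exact norm_add_le _ _
      _ = ‖S‖ * ‖(2 * ‖L h‖ + ‖r h‖) * ‖r h‖‖ := by
          rw [Real.norm_of_nonneg (by positivity)]
          ring
  have hprod := ((hL.const_mul_left 2).add hr'.isBigO).mul_isLittleO hr'
  simp only [← sq] at hprod
  exact (Asymptotics.IsBigO.of_bound ‖S‖ (.of_forall hbound)).trans_isLittleO hprod

theorem IsNormalJet.eventually_le_of_curve {U : Type*} [NormedAddCommGroup U] [NormedSpace ℝ U]
    {F : Set V} {X P : V} {S : V →L[ℝ] V} (hj : IsNormalJet F X P S) (L : U →L[ℝ] V) {r : U → V}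
    (hr : r =O[𝓝 0] fun h => ‖h‖ ^ 2) {η : ℝ} (hη : 0 < η) :
    ∀ᶠ h in 𝓝 0, X + (L h + r h) ∈ F →
      ⟪P, L h + r h⟫_ℝ + ⟪S (L h), L h⟫_ℝ ≤ η * ‖h‖ ^ 2 := by
  have hcurve : (fun h => L h + r h) =O[𝓝 0] fun h => ‖h‖ := (L.isBigO_id _).norm_right.add
    (hr.trans (Asymptotics.isLittleO_norm_pow_id one_lt_two).isBigO.norm_right)
  obtain ⟨C, hC, hbound⟩ := (hcurve.norm_left.pow 2).exists_pos
  have htendsto : Tendsto (fun h => X + (L h + r h)) (𝓝 0) (𝓝 X) := by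
    simpa using (hcurve.trans_tendsto tendsto_norm_zero).const_add X
  have hcross := (isLittleO_inner_map_add_sub S L hr).bound (c := η / 2) (by positivity)
  have hjet := eventually_nhdsWithin_iff.mp (hj (η / (2 * C)) (by positivity))
  filter_upwards [hbound.bound, hcross, htendsto.eventually hjet] with h hCh hcrossh hjeth hmem
  have hjeth := hjeth hmem
  rw [add_sub_cancel_left] at hjeth
  have hsmall : η / (2 * C) * ‖L h + r h‖ ^ 2 ≤ η / 2 * ‖h‖ ^ 2 :=
    calc η / (2 * C) * ‖L h + r h‖ ^ 2 ≤ η / (2 * C) * (C * ‖h‖ ^ 2) := by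
          gcongr
          simpa using hCh
      _ = η / 2 * ‖h‖ ^ 2 := by field_simp
  rw [norm_pow, norm_norm] at hcrossh
  linarith [(abs_le.mp hcrossh).1]

theorem IsNormalJet.eventually_le_of_epigraphOn {B : Set V} {u : V → ℝ} {X : WithLp 2 (V × ℝ)}
    {S : WithLp 2 (V × ℝ) →L[ℝ] WithLp 2 (V × ℝ)} {σ η : ℝ} {p : V} {Q : V →L[ℝ] V}
    (hj : IsNormalJet (epigraphOn B u) X (σ • WithLp.toLp 2 (p, (-1 : ℝ))) S)
    (hX : X.snd = u X.fst) (hB : B ∈ 𝓝 X.fst) (hη : 0 < η)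
    (hQ : ∀ h, σ * ⟪Q h, h⟫_ℝ ≤ ⟪S (graphLift p h), graphLift p h⟫_ℝ - η * ‖h‖ ^ 2) :
    ∀ᶠ h in 𝓝 0, u X.fst + (⟪p, h⟫_ℝ + ⟪Q h, h⟫_ℝ) ≤ u (X.fst + h) := by
  set r : V → WithLp 2 (V × ℝ) := fun h => WithLp.toLp 2 (0, ⟪Q h, h⟫_ℝ)
  have hr : r =O[𝓝 0] fun h => ‖h‖ ^ 2 := by
    refine .of_bound ‖Q‖ (.of_forall fun h => ?_)
    rw [WithLp.norm_toLp_snd, norm_pow, norm_norm]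
    exact norm_inner_map_self_le Q h
  filter_upwards [hj.eventually_le_of_curve (graphLift p) hr (half_pos hη),
    eventually_add_mem hB] with h hjet hhB
  by_contra! hlt
  have hmem : X + (graphLift p h + r h) ∈ epigraphOn B u := by
    refine ⟨by simpa [r, graphLift_apply] using hhB, ?_⟩
    simpa [r, graphLift_apply, hX] using hlt.le
  have hP : ⟪σ • WithLp.toLp 2 (p, (-1 : ℝ)), graphLift p h + r h⟫_ℝ = -(σ * ⟪Q h, h⟫_ℝ) := by
    simp only [graphLift_apply, WithLp.prod_inner_apply, WithLp.ofLp_smul, Prod.smul_mk,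
      smul_eq_mul, mul_neg, mul_one, WithLp.ofLp_add, Prod.mk_add_mk, add_zero,
      real_inner_smul_left, RCLike.inner_apply, Real.ringHom_apply, r]
    ring
  have hzero : η * ‖h‖ ^ 2 ≤ 0 := by linarith [hQ h, hP ▸ hjet hmem]
  obtain rfl : h = 0 := by
    simpa using nonpos_of_mul_nonpos_right hzero hη
  simp at hlt

end Epigraph

section ViscosityJet

variable {N : ℕ} {ι : Type*} [Fintype ι] {Ω B : Set (𝔼 N)} {u H : 𝔼 N → ℝ} {X P : 𝔾 N}
  {S : 𝔾 N →L[ℝ] 𝔾 N} {g : ι → 𝔾 N} {σ η : ℝ} {p : 𝔼 N}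

theorem sum_inner_map_self_of_isTangentFrame_graph (p : 𝔼 N) (S : 𝔾 N →L[ℝ] 𝔾 N)
    (hg : IsTangentFrame ((√(1 + ‖p‖ ^ 2))⁻¹ • WithLp.toLp 2 (p, (-1 : ℝ))) g) :
    ∑ j, ⟪S (g j), g j⟫_ℝ =
      ∑ i, ⟪S (graphLift p (EuclideanSpace.single i 1)),
        graphLift p (EuclideanSpace.single i 1)⟫_ℝ -
      ⟪S (graphLift p p), graphLift p p⟫_ℝ / (1 + ‖p‖ ^ 2) := by
  have hframe (a : 𝔾 N) :
      ∑ j, (1 : ℝ) * ⟪g j, a⟫_ℝ ^ 2 = ∑ o : Option (Fin N),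
        o.elim (-(1 + ‖p‖ ^ 2)⁻¹) (fun _ => 1) *
          ⟪graphLift p (o.elim p fun i => EuclideanSpace.single i 1), a⟫_ℝ ^ 2 := by
    have hpos : 0 < 1 + ‖p‖ ^ 2 := by positivity
    have hsum : ∑ i, ⟪graphLift p (EuclideanSpace.single i 1), a⟫_ℝ ^ 2 =
        ‖a.fst + a.snd • p‖ ^ 2 := by
      rw [EuclideanSpace.norm_sq_eq]
      refine Finset.sum_congr rfl fun i _ => ?_
      simp [graphLift_apply, EuclideanSpace.inner_single_left, EuclideanSpace.inner_single_right]
    simp only [one_mul, Fintype.sum_option, Option.elim]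
    rw [hg a, hsum]
    simp only [norm_sq_prod_real, graphLift_apply, inner_prod_real, real_inner_smul_left, mul_pow,
      inv_pow, Real.sq_sqrt hpos.le, norm_add_sq_real, real_inner_smul_right, norm_smul,
      Real.norm_eq_abs, sq_abs, real_inner_self_eq_norm_sq, real_inner_comm p a.fst,
      WithLp.toLp_fst, WithLp.toLp_snd]
    field_simp
    ring
  have := sum_mul_inner_map_self_eq S hframe
  simp only [one_mul, Fintype.sum_option, Option.elim] at this
  rw [this]
  ring

theorem IsViscositySupersol.mcOp_quadratic_le_of_isNormalJet {Q : 𝔼 N →L[ℝ] 𝔼 N}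
    (hu : IsViscositySupersol Ω H u) (hBΩ : B ⊆ Ω) (hB : B ∈ 𝓝 X.fst) (hX : X ∈ epigraphOn B u)
    (hσ : 0 < σ) (hj : IsNormalJet (epigraphOn B u) X (σ • WithLp.toLp 2 (p, (-1 : ℝ))) S)
    (hη : 0 < η)
    (hQ : ∀ h, σ * ⟪Q h, h⟫_ℝ ≤ ⟪S (graphLift p h), graphLift p h⟫_ℝ - η * ‖h‖ ^ 2) :
    mcOp (fun y => ⟪p, y - X.fst⟫_ℝ + ⟪Q (y - X.fst), y - X.fst⟫_ℝ) X.fst ≤ N * H X.fst := by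
  have hX_eq : X.snd = u X.fst := hj.snd_eq_of_epigraphOn hX (by simpa using hσ)
  have hsub : Tendsto (fun y => y - X.fst) (𝓝 X.fst) (𝓝 0) :=
    tendsto_sub_nhds_zero_iff.mpr tendsto_id
  have hsmooth : ContDiff ℝ 2 fun y : 𝔼 N => y - X.fst :=
    contDiff_id.sub contDiff_const
  refine hu (fun y => ⟪p, y - X.fst⟫_ℝ + ⟪Q (y - X.fst), y - X.fst⟫_ℝ)
    ((contDiff_const.inner ℝ hsmooth).add
      ((Q.contDiff.comp hsmooth).inner ℝ hsmooth)).contDiffOn X.fst (hBΩ hX.1) ?_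
  refine (hsub.eventually (hj.eventually_le_of_epigraphOn hX_eq hB hη hQ)).filter_mono
    nhdsWithin_le_nhds |>.mono fun y hy => ?_
  rw [add_sub_cancel] at hy
  simp only [sub_self, inner_zero_right, add_zero, sub_zero]
  linarith

theorem IsViscositySupersol.sum_inner_sub_le_of_isNormalJet
    (hu : IsViscositySupersol Ω H u) (hBΩ : B ⊆ Ω) (hB : B ∈ 𝓝 X.fst) (hX : X ∈ epigraphOn B u)
    (hσ : 0 < σ) (hj : IsNormalJet (epigraphOn B u) X (σ • WithLp.toLp 2 (p, (-1 : ℝ))) S)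
    (hg : IsTangentFrame ((√(1 + ‖p‖ ^ 2))⁻¹ • WithLp.toLp 2 (p, (-1 : ℝ))) g) (hη : 0 < η) :
    ∑ j, ⟪S (g j), g j⟫_ℝ - η * ∑ j, ‖g j‖ ^ 2 ≤
      σ * √(1 + ‖p‖ ^ 2) / 2 * (N * H X.fst) := by
  set S' := S - η • ContinuousLinearMap.id ℝ _
  set Q := σ⁻¹ • ((graphLift p).adjoint ∘L S' ∘L graphLift p)
  have hQ (h) : ⟪Q h, h⟫_ℝ = σ⁻¹ * ⟪S' (graphLift p h), graphLift p h⟫_ℝ := by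
    rw [smul_apply, real_inner_smul_left, ContinuousLinearMap.comp_apply,
      ContinuousLinearMap.adjoint_inner_left, ContinuousLinearMap.comp_apply]
  have hS' (a) : ⟪S' a, a⟫_ℝ = ⟪S a, a⟫_ℝ - η * ‖a‖ ^ 2 := by
    rw [sub_apply, inner_sub_left, smul_apply, real_inner_smul_left,
      ContinuousLinearMap.id_apply, real_inner_self_eq_norm_sq]
  have hlift (h) : ‖h‖ ^ 2 ≤ ‖graphLift p h‖ ^ 2 := by
    simpa [norm_sq_prod_real, graphLift_apply] using sq_nonneg _
  have hvisc := hu.mcOp_quadratic_le_of_isNormalJet (Q := Q) hBΩ hB hX hσ hj hη fun h => by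
    rw [hQ, hS', mul_inv_cancel_left₀ hσ.ne']
    linarith [mul_le_mul_of_nonneg_left (hlift h) hη.le]
  rw [mcOp_quadratic] at hvisc
  simp only [hQ, ← Finset.mul_sum, mul_div_assoc, ← mul_sub] at hvisc
  rw [← sum_inner_map_self_of_isTangentFrame_graph p S' hg] at hvisc
  simp only [hS', Finset.sum_sub_distrib, ← Finset.mul_sum] at hvisc
  set s := √(1 + ‖p‖ ^ 2)
  have hs : 0 < s := by positivity
  calc ∑ j, ⟪S (g j), g j⟫_ℝ - η * ∑ j, ‖g j‖ ^ 2
      = σ * s / 2 *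
        (2 / s * (σ⁻¹ * (∑ j, ⟪S (g j), g j⟫_ℝ - η * ∑ j, ‖g j‖ ^ 2))) := by field_simp
    _ ≤ σ * s / 2 * (N * H X.fst) := by gcongr

theorem IsViscositySupersol.sum_inner_le_of_isNormalJet (hu : IsViscositySupersol Ω H u)
    (hBΩ : B ⊆ Ω) (hB : B ∈ 𝓝 X.fst) (hX : X ∈ epigraphOn B u) (hP : P.snd < 0)
    (hj : IsNormalJet (epigraphOn B u) X P S) (hg : IsTangentFrame (NormedSpace.normalize P) g) :
    ∑ j, ⟪S (g j), g j⟫_ℝ ≤ ‖P‖ / 2 * (N * H X.fst) := by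
  obtain ⟨σ, p, hσ, rfl⟩ : ∃ (σ : ℝ) (p : _), 0 < σ ∧ P = σ • WithLp.toLp 2 (p, (-1 : ℝ)) := by
    refine ⟨-P.snd, (-P.snd)⁻¹ • P.fst, neg_pos.mpr hP, (WithLp.ext_iff 2).mpr (Prod.ext ?_ ?_)⟩
    · simp [smul_smul, hP.ne]
    · simp
  have hnorm : ‖σ • WithLp.toLp 2 (p, (-1 : ℝ))‖ = σ * √(1 + ‖p‖ ^ 2) := by
    simp [norm_smul, abs_of_pos hσ, WithLp.prod_norm_eq_of_L2, add_comm]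
  rw [NormedSpace.normalize, hnorm, smul_smul, mul_inv, mul_right_comm,
    inv_mul_cancel₀ hσ.ne', one_mul] at hg
  rw [hnorm]
  have hlim : Tendsto (fun η : ℝ => ∑ j, ⟪S (g j), g j⟫_ℝ - η * ∑ j, ‖g j‖ ^ 2) (𝓝[>] 0)
      (𝓝 (∑ j, ⟪S (g j), g j⟫_ℝ)) := by
    have : Continuous fun η : ℝ => ∑ j, ⟪S (g j), g j⟫_ℝ - η * ∑ j, ‖g j‖ ^ 2 := by fun_prop
    simpa using (this.tendsto 0).mono_left nhdsWithin_le_nhds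
  exact le_of_tendsto hlim (eventually_mem_nhdsWithin.mono fun η hη =>
    hu.sum_inner_sub_le_of_isNormalJet hBΩ hB hX hσ hj hg hη)

end ViscosityJet

section ViscositySymmetries

variable {N : ℕ} {Ω : Set (𝔼 N)} {H u v : 𝔼 N → ℝ}

theorem mcOp_neg (φ : 𝔼 N → ℝ) (x : 𝔼 N) : mcOp (fun y => -φ y) x = -mcOp φ x := by
  have hgrad (y : 𝔼 N) : gradient (fun y => -φ y) y = -gradient φ y := by
    simp only [gradient, fderiv_fun_neg, map_neg]
  simp only [mcOp, hgrad, norm_neg, PiLp.neg_apply, mul_neg, fderiv_fun_neg, neg_apply,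
    Finset.sum_neg_distrib]

theorem mcOp_add_const (φ : 𝔼 N → ℝ) (c : ℝ) (x : 𝔼 N) :
    mcOp (fun y => φ y + c) x = mcOp φ x := by
  simp only [mcOp, gradient, fderiv_add_const]

theorem IsViscositySubsol.neg (hv : IsViscositySubsol Ω H v) :
    IsViscositySupersol Ω (fun x => -H x) (fun x => -v x) := by
  intro φ hφ x hx hmin
  have hmax : IsLocalMaxOn (fun y => v y - -φ y) Ω x := by
    refine hmin.mono fun y hy => ?_
    dsimp only at hy ⊢
    linarith
  have := hv _ hφ.neg x hx hmax
  rw [mcOp_neg] at this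
  linarith

theorem IsViscositySupersol.sub_const (hu : IsViscositySupersol Ω H u) (c : ℝ) :
    IsViscositySupersol Ω H (fun x => u x - c) := by
  intro φ hφ x hx hmin
  rw [← mcOp_add_const φ c]
  simp only [sub_sub, add_comm c] at hmin
  exact hu _ (hφ.add contDiffOn_const) x hx hmin

theorem IsViscositySubsol.sub_const (hv : IsViscositySubsol Ω H v) (c : ℝ) :
    IsViscositySubsol Ω H (fun x => v x - c) := by
  intro φ hφ x hx hmax
  rw [← mcOp_add_const φ c]
  simp only [sub_sub, add_comm c] at hmax
  exact hv _ (hφ.add contDiffOn_const) x hx hmax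

end ViscositySymmetries

section Isometry

variable {V W ι : Type*} [NormedAddCommGroup V] [InnerProductSpace ℝ V] [NormedAddCommGroup W]
  [InnerProductSpace ℝ W] [Fintype ι]

theorem IsNormalJet.map_isometry {F : Set V} {X P : V} {S : V →L[ℝ] V} (hj : IsNormalJet F X P S)
    (e : V ≃ₗᵢ[ℝ] W) :
    IsNormalJet (e.symm ⁻¹' F) (e X) (e P)
      (e.toContinuousLinearEquiv.toContinuousLinearMap ∘L S ∘L
        e.symm.toContinuousLinearEquiv.toContinuousLinearMap) := by
  intro η hη
  have htends : Tendsto e.symm (𝓝[e.symm ⁻¹' F] (e X)) (𝓝[F] X) := by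
    have := e.symm.continuous.continuousWithinAt.tendsto_nhdsWithin (mapsTo_preimage e.symm F)
      (x := e X)
    rwa [e.symm_apply_apply] at this
  filter_upwards [htends.eventually (hj η hη)] with Y hY
  obtain ⟨Y, rfl⟩ := e.surjective Y
  simpa [← map_sub] using hY

theorem IsTangentFrame.map_isometry {n : V} {g : ι → V} (hg : IsTangentFrame n g)
    (e : V ≃ₗᵢ[ℝ] W) : IsTangentFrame (e n) fun j => e (g j) := by
  intro a
  obtain ⟨a, rfl⟩ := e.surjective a
  simpa using hg a

end Isometry

section Hypograph

variable {N : ℕ} {ι : Type*} [Fintype ι] {Ω B : Set (𝔼 N)} {v H : 𝔼 N → ℝ}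
  {Y Q : 𝔾 N} {S : 𝔾 N →L[ℝ] 𝔾 N}
  {g : ι → 𝔾 N}

theorem IsViscositySubsol.sum_inner_le_of_isNormalJet (hv : IsViscositySubsol Ω H v)
    (hBΩ : B ⊆ Ω) (hB : B ∈ 𝓝 Y.fst) (hY : Y ∈ hypographOn B v) (hQ : 0 < Q.snd)
    (hj : IsNormalJet (hypographOn B v) Y Q S) (hg : IsTangentFrame (NormedSpace.normalize Q) g) :
    ∑ j, ⟪S (g j), g j⟫_ℝ ≤ -(‖Q‖ / 2 * (N * H Y.fst)) := by
  let e : 𝔾 N ≃ₗᵢ[ℝ] 𝔾 N :=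
    LinearIsometryEquiv.withLpProdCongr 2 (.refl ℝ _) (.neg ℝ)
  have hepi : e.symm ⁻¹' hypographOn B v = epigraphOn B fun x => -v x :=
    Set.ext fun X => and_congr_right fun _ => neg_le
  have hj' := hj.map_isometry e
  have hg' := hg.map_isometry e
  rw [hepi] at hj'
  rw [NormedSpace.normalize, map_smul, ← e.norm_map] at hg'
  have := hv.neg.sum_inner_le_of_isNormalJet hBΩ (X := e Y) (by simpa [e] using hB)
    (by simpa [e, hypographOn, epigraphOn] using hY) (by simpa [e] using hQ) hj' hg'
  simpa [e.norm_map, show (e Y).fst = Y.fst by simp [e]] using this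

end Hypograph

/-! ## Frames of nearby hyperplanes and the doubling inequality -/

section RotatedFrame

variable {W : Type*} [NormedAddCommGroup W] [InnerProductSpace ℝ W] [FiniteDimensional ℝ W]

/-- The projection of the standard orthonormal basis of `W` to the hyperplane orthogonal to the
unit vector `n`. -/
noncomputable def tangentFrame (n : W) (j : Fin (Module.finrank ℝ W)) : W :=
  stdOrthonormalBasis ℝ W j - ⟪stdOrthonormalBasis ℝ W j, n⟫_ℝ • n

/-- The multiple of `m + n` by which the rotation taking `n` to `m` and fixing the orthogonal
complement of both moves the vector `tangentFrame n j`, up to sign. -/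
noncomputable def rotationCoeff (m n : W) (j : Fin (Module.finrank ℝ W)) : ℝ :=
  ⟪tangentFrame n j, m⟫_ℝ / (1 + ⟪m, n⟫_ℝ)

/-- The image of `tangentFrame n` under the rotation taking the unit vector `n` to the unit vector
`m` and fixing the orthogonal complement of both; a frame of the hyperplane orthogonal to `m`. -/
noncomputable def rotatedFrame (m n : W) (j : Fin (Module.finrank ℝ W)) : W :=
  tangentFrame n j - rotationCoeff m n j • (m + n)

/-- The pairs `(rotatedFrame m n j, tangentFrame n j)` in the Hilbert sum `W × W`. -/
noncomputable def framePair (m n : W) (j : Fin (Module.finrank ℝ W)) : WithLp 2 (W × W) :=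
  WithLp.toLp 2 (rotatedFrame m n j, tangentFrame n j)

variable {m n : W}

theorem isTangentFrame_tangentFrame (hn : ‖n‖ = 1) : IsTangentFrame n (tangentFrame n) := by
  intro a
  have hproj (j) : ⟪tangentFrame n j, a⟫_ℝ =
      ⟪stdOrthonormalBasis ℝ W j, a - ⟪n, a⟫_ℝ • n⟫_ℝ := by
    simp only [tangentFrame, inner_sub_left, inner_sub_right, real_inner_smul_left,
      real_inner_smul_right]
    ring
  simp only [hproj, ← Real.norm_eq_abs, ← sq_abs (inner _ _ _)]
  rw [OrthonormalBasis.sum_sq_norm_inner_right, norm_sub_sq_real, real_inner_smul_right, norm_smul,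
    hn, mul_one, Real.norm_eq_abs, sq_abs, real_inner_comm n a]
  ring

theorem isTangentFrame_rotatedFrame (hm : ‖m‖ = 1) (hn : ‖n‖ = 1) (hmn : 0 < 1 + ⟪m, n⟫_ℝ) :
    IsTangentFrame m (rotatedFrame m n) := by
  intro a
  set t := (⟪m, a⟫_ℝ + ⟪n, a⟫_ℝ) / (1 + ⟪m, n⟫_ℝ) with ht
  have ht' : t * (1 + ⟪m, n⟫_ℝ) = ⟪m, a⟫_ℝ + ⟪n, a⟫_ℝ := div_mul_cancel₀ _ hmn.ne'
  have hadj (j) : ⟪rotatedFrame m n j, a⟫_ℝ = ⟪tangentFrame n j, a - t • m⟫_ℝ := by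
    simp only [rotatedFrame, rotationCoeff, inner_sub_left, inner_sub_right, real_inner_smul_left,
      real_inner_smul_right, inner_add_left, ht]
    ring
  simp only [hadj]
  rw [isTangentFrame_tangentFrame hn, norm_sub_sq_real, real_inner_smul_right, norm_smul, hm,
    mul_one, Real.norm_eq_abs, sq_abs, inner_sub_right, real_inner_smul_right, real_inner_comm m a,
    real_inner_comm m n]
  linear_combination (t * (1 - ⟪m, n⟫_ℝ) + ⟪n, a⟫_ℝ - ⟪m, a⟫_ℝ) * ht'

theorem sum_rotationCoeff_sq_le (hm : ‖m‖ = 1) (hn : ‖n‖ = 1) (hmn : 0 ≤ ⟪m, n⟫_ℝ) :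
    ∑ j, rotationCoeff m n j ^ 2 ≤ ‖m - n‖ ^ 2 / 2 := by
  simp only [rotationCoeff, div_pow, ← Finset.sum_div]
  rw [isTangentFrame_tangentFrame hn, norm_sub_sq_real, hm, hn, real_inner_comm m n,
    div_le_iff₀ (by positivity)]
  have hle : ⟪m, n⟫_ℝ ≤ 1 := by simpa [hm, hn] using real_inner_le_norm m n
  nlinarith [mul_nonneg hmn (sub_nonneg.mpr hle),
    mul_nonneg (mul_nonneg hmn hmn) (sub_nonneg.mpr hle)]

theorem tendsto_framePair {α : Type*} {l : Filter α} {f g : α → W} (hf : Tendsto f l (𝓝 m))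
    (hg : Tendsto g l (𝓝 n)) (hmn : 0 < 1 + ⟪m, n⟫_ℝ) (j : Fin (Module.finrank ℝ W)) :
    Tendsto (fun a => framePair (f a) (g a) j) l (𝓝 (framePair m n j)) := by
  have htangent : Tendsto (fun a => tangentFrame (g a) j) l (𝓝 (tangentFrame n j)) :=
    tendsto_const_nhds.sub ((tendsto_const_nhds.inner hg).smul hg)
  have hcoeff : Tendsto (fun a => rotationCoeff (f a) (g a) j) l (𝓝 (rotationCoeff m n j)) :=
    (htangent.inner hf).div (tendsto_const_nhds.add (hf.inner hg)) hmn.ne'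
  exact ((WithLp.prod_continuous_toLp 2 W W).tendsto _).comp
    ((htangent.sub (hcoeff.smul (hf.add hg))).prodMk_nhds htangent)

section Normalize

variable {E : Type*} [NormedAddCommGroup E] [NormedSpace ℝ E]

theorem tendsto_normalize {α : Type*} {l : Filter α} {f : α → E} {a : E} (hf : Tendsto f l (𝓝 a))
    (ha : a ≠ 0) :
    Tendsto (fun x => NormedSpace.normalize (f x)) l (𝓝 (NormedSpace.normalize a)) := by
  simp only [NormedSpace.normalize.eq_def]
  exact (hf.norm.inv₀ (norm_ne_zero_iff.mpr ha)).smul hf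

theorem norm_normalize_add_sub_normalize_le {b w : E} (hb : 1 ≤ ‖b‖) :
    ‖NormedSpace.normalize (b + w) - NormedSpace.normalize b‖ ≤ 2 * ‖w‖ := by
  have hsplit : NormedSpace.normalize (b + w) - NormedSpace.normalize b =
      ‖b‖⁻¹ • (w - (‖b + w‖ - ‖b‖) • NormedSpace.normalize (b + w)) := by
    have hb₀ : ‖b‖ ≠ 0 := by positivity
    rw [sub_smul, NormedSpace.norm_smul_normalize, smul_sub, smul_sub, smul_smul,
      inv_mul_cancel₀ hb₀, one_smul, NormedSpace.normalize.eq_def b, smul_add]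
    abel
  have hunit : ‖NormedSpace.normalize (b + w)‖ ≤ 1 := by
    rcases eq_or_ne (b + w) 0 with h₀ | h₀
    · simp [h₀]
    · exact (NormedSpace.norm_normalize h₀).le
  have habs : |‖b + w‖ - ‖b‖| ≤ ‖w‖ := by simpa using abs_norm_sub_norm_le (b + w) b
  calc _ = ‖b‖⁻¹ * ‖w - (‖b + w‖ - ‖b‖) • NormedSpace.normalize (b + w)‖ := by
        rw [hsplit, norm_smul, norm_inv, norm_norm]
    _ ≤ 1 * (‖w‖ + ‖w‖ * 1) := by
        gcongr
        · exact inv_le_one_of_one_le₀ hb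
        · refine (norm_sub_le _ _).trans ?_
          rw [norm_smul, Real.norm_eq_abs]
          gcongr
    _ = 2 * ‖w‖ := by ring

end Normalize

theorem inner_normalize_add_normalize_nonneg {E : Type*} [NormedAddCommGroup E]
    [InnerProductSpace ℝ E] {b w : E} (hw : ‖w‖ ≤ ‖b‖) :
    0 ≤ ⟪NormedSpace.normalize (b + w), NormedSpace.normalize b⟫_ℝ := by
  have hinner : 0 ≤ ⟪b + w, b⟫_ℝ := by
    rw [inner_add_left, real_inner_self_eq_norm_sq]
    nlinarith [neg_le_of_abs_le (abs_real_inner_le_norm w b), norm_nonneg b]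
  simp only [NormedSpace.normalize.eq_def, real_inner_smul_left, real_inner_smul_right]
  positivity

theorem isTangentFrame_rotatedFrame_normalize {b w : W} (hb : 1 ≤ ‖b‖) (hw : ‖w‖ ≤ 1 / 2) :
    IsTangentFrame (NormedSpace.normalize (b + w))
      (rotatedFrame (NormedSpace.normalize (b + w)) (NormedSpace.normalize b)) :=
  isTangentFrame_rotatedFrame
    (NormedSpace.norm_normalize (norm_pos_iff.mp (by linarith [norm_le_add_norm_add b w])))
    (NormedSpace.norm_normalize (norm_pos_iff.mp (by linarith)))
    (by linarith [inner_normalize_add_normalize_nonneg (b := b) (w := w) (by linarith)])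

theorem sum_rotationCoeff_normalize_sq_le {b w : W} (hb : 1 ≤ ‖b‖) (hw : ‖w‖ ≤ 1 / 2) :
    ∑ j, rotationCoeff (NormedSpace.normalize (b + w)) (NormedSpace.normalize b) j ^ 2 ≤
      2 * ‖w‖ ^ 2 := by
  have hb₀ : b ≠ 0 := norm_pos_iff.mp (by linarith)
  have hbw₀ : b + w ≠ 0 := fun h₀ => by
    have hbw : ‖b‖ = ‖w‖ := by rw [eq_neg_of_add_eq_zero_left h₀, norm_neg]
    linarith
  refine (sum_rotationCoeff_sq_le (NormedSpace.norm_normalize hbw₀) (NormedSpace.norm_normalize hb₀)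
    (inner_normalize_add_normalize_nonneg (by linarith))).trans ?_
  have hsq := pow_le_pow_left₀ (norm_nonneg _) (norm_normalize_add_sub_normalize_le (w := w) hb) 2
  linarith

end RotatedFrame

section Doubling

variable {N : ℕ} {Ω B : Set (𝔼 N)} {H u v : 𝔼 N → ℝ}

/-- `u` is a viscosity supersolution and `v` a viscosity subsolution of `M(w) = N H` in `Ω`, both
semicontinuous (from below and above respectively) on the compact set `B ⊆ Ω`, on which `H` is
continuous. -/
structure IsComparisonPair (Ω B : Set (𝔼 N)) (H u v : 𝔼 N → ℝ) : Prop where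
  subset : B ⊆ Ω
  isCompact : IsCompact B
  continuousOn : ContinuousOn H B
  lowerSemicontinuousOn : LowerSemicontinuousOn u B
  upperSemicontinuousOn : UpperSemicontinuousOn v B
  supersol : IsViscositySupersol Ω H u
  subsol : IsViscositySubsol Ω H v

namespace IsComparisonPair

theorem isClosed_epigraphOn (h : IsComparisonPair Ω B H u v) : IsClosed (epigraphOn B u) :=
  ((lowerSemicontinuousOn_iff_isClosed_epigraph h.isCompact.isClosed).mp
    h.lowerSemicontinuousOn).preimage (WithLp.prodContinuousLinearEquiv 2 ℝ (𝔼 N) ℝ).continuous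

theorem isClosed_hypographOn (h : IsComparisonPair Ω B H u v) : IsClosed (hypographOn B v) :=
  ((upperSemicontinuousOn_iff_isClosed_hypograph h.isCompact.isClosed).mp
    h.upperSemicontinuousOn).preimage (WithLp.prodContinuousLinearEquiv 2 ℝ (𝔼 N) ℝ).continuous

variable {c l P : WithLp 2 (𝔾 N × 𝔾 N)} {X Y : 𝔾 N}
  {S₁ S₂ : 𝔾 N →L[ℝ] 𝔾 N}
  {T : WithLp 2 (𝔾 N × 𝔾 N) →L[ℝ]
    WithLp 2 (𝔾 N × 𝔾 N)}
  {Φ : WithLp 2 (𝔾 N × 𝔾 N) → ℝ} {ε : ℝ}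

theorem neg_mul_sum_framePair_le (h : IsComparisonPair Ω B H u v) (hX : X ∈ epigraphOn B u)
    (hY : Y ∈ hypographOn B v) (hBX : B ∈ 𝓝 X.fst) (hBY : B ∈ 𝓝 Y.fst)
    (hjX : IsNormalJet (epigraphOn B u) X P.fst S₁)
    (hjY : IsNormalJet (hypographOn B v) Y P.snd S₂) (hPX : P.fst.snd < 0) (hPY : 0 < P.snd.snd)
    (hcos : 0 < 1 + ⟪NormedSpace.normalize (-P.fst), NormedSpace.normalize P.snd⟫_ℝ)
    (hT : ∀ y, -(ε * ‖y‖ ^ 2) ≤ ⟪S₁ y.fst, y.fst⟫_ℝ + ⟪S₂ y.snd, y.snd⟫_ℝ + ⟪T y, y⟫_ℝ) :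
    -(ε * ∑ j, ‖framePair (NormedSpace.normalize (-P.fst)) (NormedSpace.normalize P.snd) j‖ ^ 2) ≤
      N / 2 * (‖P.fst‖ * H X.fst - ‖P.snd‖ * H Y.fst) +
      ∑ j, ⟪T (framePair (NormedSpace.normalize (-P.fst)) (NormedSpace.normalize P.snd) j),
        framePair (NormedSpace.normalize (-P.fst)) (NormedSpace.normalize P.snd) j⟫_ℝ := by
  set m := NormedSpace.normalize (-P.fst) with hm
  set n := NormedSpace.normalize P.snd
  have hm₁ : ‖m‖ = 1 :=
    NormedSpace.norm_normalize (neg_ne_zero.mpr (by rintro h₀; simp [h₀] at hPX))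
  have hn₁ : ‖n‖ = 1 := NormedSpace.norm_normalize (by rintro h₀; simp [h₀] at hPY)
  have hframe : IsTangentFrame (NormedSpace.normalize P.fst) (rotatedFrame m n) := fun a => by
    rw [isTangentFrame_rotatedFrame hm₁ hn₁ hcos a, hm, NormedSpace.normalize_neg, inner_neg_left,
      neg_sq]
  have hsuper := h.supersol.sum_inner_le_of_isNormalJet h.subset hBX hX hPX hjX hframe
  have hsub := h.subsol.sum_inner_le_of_isNormalJet h.subset hBY hY hPY hjY
    (isTangentFrame_tangentFrame hn₁)
  have hsum := Finset.sum_le_sum (s := Finset.univ) fun j _ => hT (framePair m n j)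
  simp only [Finset.sum_neg_distrib, ← Finset.mul_sum, Finset.sum_add_distrib] at hsum
  simp only [framePair, WithLp.toLp_fst, WithLp.toLp_snd] at hsum ⊢
  linarith

-- At a minimum of `Φ` the jets provided by the theorem on sums are tested on the two frames, which
-- are related by a rotation; letting the error `ε` tend to zero leaves only the Hessian of `Φ`.
theorem doubling_inequality (h : IsComparisonPair Ω B H u v)
    (hc : c ∈ hilbertProd (epigraphOn B u) (hypographOn B v)) (hBX : B ∈ 𝓝 c.fst.fst)
    (hBY : B ∈ 𝓝 c.snd.fst) (hΦ : HasQuadExpansionAt Φ l T c)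
    (hmin : IsLocalMinOn Φ (hilbertProd (epigraphOn B u) (hypographOn B v)) c)
    (hlX : 0 < l.fst.snd) (hlY : l.snd.snd < 0)
    (hcos : 0 < 1 + ⟪NormedSpace.normalize l.fst, NormedSpace.normalize (-l.snd)⟫_ℝ) :
    N / 2 * (‖l.snd‖ * H c.snd.fst - ‖l.fst‖ * H c.fst.fst) ≤
      ∑ j, ⟪T (framePair (NormedSpace.normalize l.fst) (NormedSpace.normalize (-l.snd)) j),
        framePair (NormedSpace.normalize l.fst) (NormedSpace.normalize (-l.snd)) j⟫_ℝ := by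
  obtain ⟨ε, X, Y, P, S₁, S₂, hε, hX_lim, hY_lim, hP_lim, hjets⟩ := exists_seq_isNormalJet_pair
    h.isClosed_epigraphOn h.isClosed_hypographOn hc hΦ hmin
  replace hX_lim : Tendsto (fun k => (X k).fst) atTop (𝓝 c.fst.fst) :=
    ((WithLp.fstL 2 ℝ (𝔼 N) ℝ).continuous.tendsto _).comp hX_lim
  replace hY_lim : Tendsto (fun k => (Y k).fst) atTop (𝓝 c.snd.fst) :=
    ((WithLp.fstL 2 ℝ (𝔼 N) ℝ).continuous.tendsto _).comp hY_lim
  have hPX_lim : Tendsto (fun k => (P k).fst) atTop (𝓝 (-l.fst)) :=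
    ((WithLp.fstL 2 ℝ _ _).continuous.tendsto _).comp hP_lim
  have hPY_lim : Tendsto (fun k => (P k).snd) atTop (𝓝 (-l.snd)) :=
    ((WithLp.sndL 2 ℝ _ _).continuous.tendsto _).comp hP_lim
  have hm_lim : Tendsto (fun k => NormedSpace.normalize (-(P k).fst)) atTop
      (𝓝 (NormedSpace.normalize l.fst)) :=
    tendsto_normalize (by simpa only [neg_neg] using hPX_lim.neg) fun h₀ => by simp [h₀] at hlX
  have hn_lim := tendsto_normalize hPY_lim fun h₀ => by simp [neg_eq_zero.mp h₀] at hlY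
  have hframe_lim := tendsto_framePair hm_lim hn_lim hcos
  have hPX_neg : ∀ᶠ k in atTop, (P k).fst.snd < 0 :=
    (((WithLp.sndL 2 ℝ (𝔼 N) ℝ).continuous.tendsto _).comp hPX_lim).eventually_lt_const
      (neg_lt_zero.mpr hlX)
  have hPY_pos : ∀ᶠ k in atTop, 0 < (P k).snd.snd :=
    (((WithLp.sndL 2 ℝ (𝔼 N) ℝ).continuous.tendsto _).comp hPY_lim).eventually_const_lt
      (neg_pos.mpr hlY)
  have hcos_pos := (tendsto_const_nhds.add (hm_lim.inner hn_lim)).eventually_const_lt hcos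
  set p := fun k j =>
    framePair (NormedSpace.normalize (-(P k).fst)) (NormedSpace.normalize (P k).snd) j
  have hle : ∀ᶠ k in atTop, -(ε k * ∑ j, ‖p k j‖ ^ 2) ≤
      N / 2 * (‖(P k).fst‖ * H (X k).fst - ‖(P k).snd‖ * H (Y k).fst) +
        ∑ j, ⟪T (p k j), p k j⟫_ℝ := by
    filter_upwards [hX_lim.eventually (eventually_mem_nhds_iff.mpr hBX),
      hY_lim.eventually (eventually_mem_nhds_iff.mpr hBY), hPX_neg, hPY_pos, hcos_pos]
      with k hBXk hBYk hPXk hPYk hcosk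
    obtain ⟨hX, hY, hjX, hjY, hT⟩ := hjets k
    exact h.neg_mul_sum_framePair_le hX hY hBXk hBYk hjX hjY hPXk hPYk hcosk hT
  have hHX := (h.continuousOn.continuousAt hBX).tendsto.comp hX_lim
  have hHY := (h.continuousOn.continuousAt hBY).tendsto.comp hY_lim
  have hlim := le_of_tendsto_of_tendsto
    (hε.mul (tendsto_finsetSum _ fun j _ => (hframe_lim j).norm.pow 2)).neg
    ((((hPX_lim.norm.mul hHX).sub (hPY_lim.norm.mul hHY)).const_mul _).add
      (tendsto_finsetSum _ fun j _ => ((T.continuous.tendsto _).comp (hframe_lim j)).inner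
        (hframe_lim j))) hle
  rw [norm_neg, norm_neg] at hlim
  linarith

theorem neg_le_sum_framePair_of_slope_add (h : IsComparisonPair Ω B H u v)
    (hc : c ∈ hilbertProd (epigraphOn B u) (hypographOn B v)) (hBX : B ∈ 𝓝 c.fst.fst)
    (hBY : B ∈ 𝓝 c.snd.fst) {b w : 𝔾 N} (hΦ : HasQuadExpansionAt Φ (WithLp.toLp 2 (b + w, -b)) T c)
    (hmin : IsLocalMinOn Φ (hilbertProd (epigraphOn B u) (hypographOn B v)) c)
    (hw : ‖w‖ ≤ ‖b‖) (hb : 0 < b.snd) (hbw : 0 < (b + w).snd) {H₀ : ℝ}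
    (hH₀ : |H c.snd.fst| ≤ H₀) :
    -(N / 2 * (‖w‖ * H₀ + ‖b + w‖ * |H c.fst.fst - H c.snd.fst|)) ≤
      ∑ j, ⟪T (framePair (NormedSpace.normalize (b + w)) (NormedSpace.normalize b) j),
        framePair (NormedSpace.normalize (b + w)) (NormedSpace.normalize b) j⟫_ℝ := by
  have hdoubling := h.doubling_inequality hc hBX hBY hΦ hmin (by simpa using hbw)
    (by simpa using hb) (by
      rw [WithLp.toLp_fst, WithLp.toLp_snd, neg_neg]
      linarith [inner_normalize_add_normalize_nonneg hw])
  simp only [WithLp.toLp_fst, WithLp.toLp_snd, neg_neg, norm_neg] at hdoubling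
  refine le_trans ?_ hdoubling
  have hnorm : |‖b + w‖ - ‖b‖| ≤ ‖w‖ := by simpa using abs_norm_sub_norm_le (b + w) b
  have hmul : (‖b + w‖ - ‖b‖) * H c.snd.fst ≤ ‖w‖ * H₀ :=
    (le_abs_self _).trans (by rw [abs_mul]; gcongr)
  have hdiff : ‖b + w‖ * (H c.fst.fst - H c.snd.fst) ≤
      ‖b + w‖ * |H c.fst.fst - H c.snd.fst| := by gcongr; exact le_abs_self _
  rw [← mul_neg]
  gcongr
  linarith

end IsComparisonPair

theorem IsTangentFrame.sum_norm_fst_sq_le {ι : Type*} [Fintype ι] {n : 𝔾 N} {g : ι → 𝔾 N}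
    (hg : IsTangentFrame n g) : ∑ j, ‖(g j).fst‖ ^ 2 ≤ N := by
  have hcoord (j) : ‖(g j).fst‖ ^ 2 =
      ∑ i, ⟪g j, WithLp.toLp 2 (EuclideanSpace.single i (1 : ℝ), 0)⟫_ℝ ^ 2 := by
    rw [EuclideanSpace.norm_sq_eq]
    simp [EuclideanSpace.inner_single_right]
  simp only [hcoord]
  rw [Finset.sum_comm]
  simp only [hg _, norm_sq_prod_real]
  calc _ ≤ ∑ _i : Fin N, (1 : ℝ) := Finset.sum_le_sum fun i _ => by
        simp [sq_nonneg]
    _ = N := by simp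

end Doubling

/-! ## Second-order expansions of logarithms -/

section LogExpansion

variable {V : Type*} [NormedAddCommGroup V] [InnerProductSpace ℝ V]
  {f : V → ℝ} {p x : V} {A : V →L[ℝ] V}

namespace HasQuadExpansionAt

theorem of_forall_eq (hf : ∀ h, f (x + h) = f x + ⟪p, h⟫_ℝ + ⟪A h, h⟫_ℝ) :
    HasQuadExpansionAt f p A x := by
  refine (Asymptotics.isLittleO_zero _ _).congr_left fun h => ?_
  rw [hf]
  ring

theorem sub_inner_isBigO (hf : HasQuadExpansionAt f p A x) :
    (fun h => f (x + h) - f x - ⟪p, h⟫_ℝ) =O[𝓝 0] fun h => ‖h‖ ^ 2 := by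
  have hquad : (fun h => ⟪A h, h⟫_ℝ) =O[𝓝 0] fun h => ‖h‖ ^ 2 :=
    .of_bound ‖A‖ (.of_forall fun h => by
      simpa only [norm_pow, norm_norm] using norm_inner_map_self_le A h)
  exact (hf.isBigO.add hquad).congr_left fun h => by ring

theorem comp_real {φ : ℝ → ℝ} {a b : ℝ}
    (hφ : HasQuadExpansionAt φ a (b • ContinuousLinearMap.id ℝ ℝ) (f x))
    (hf : HasQuadExpansionAt f p A x) :
    HasQuadExpansionAt (fun y => φ (f y)) (a • p) (a • A + b • (innerSL ℝ p).smulRight p) x := by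
  have hid : Tendsto (fun h : V => ‖h‖) (𝓝 0) (𝓝 0) := tendsto_norm_zero
  have hlin : (fun h => ⟪p, h⟫_ℝ) =O[𝓝 0] fun h => ‖h‖ := (innerSL ℝ p).isBigO_id _ |>.norm_right
  have hsq : (fun h : V => ‖h‖ ^ 2) =o[𝓝 0] fun h => ‖h‖ := by
    simpa only [Function.comp_def, pow_one] using
      (Asymptotics.isLittleO_pow_pow (𝕜 := ℝ) one_lt_two).comp_tendsto hid
  set s := fun h => f (x + h) - f x
  have hs : s =O[𝓝 0] fun h => ‖h‖ :=
    ((hf.sub_inner_isBigO.trans hsq.isBigO).add hlin).congr_left fun h => by ring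
  have houter := (hφ.comp_tendsto (hs.trans_tendsto hid)).trans_isBigO (hs.norm_left.pow 2)
  have hsquare : (fun h => s h ^ 2 - ⟪p, h⟫_ℝ ^ 2) =o[𝓝 0] fun h => ‖h‖ ^ 2 := by
    refine ((hf.sub_inner_isBigO.trans_isLittleO hsq).mul_isBigO (hs.add hlin)).congr
      (fun h => ?_) fun h => ?_ <;> ring
  refine ((houter.add (hf.const_mul_left a)).add (hsquare.const_mul_left b)).congr_left fun h => ?_
  simp only [s, Function.comp_apply, add_sub_cancel, add_apply, smul_apply, inner_add_left,
    real_inner_smul_left, ContinuousLinearMap.smulRight_apply, innerSL_apply_apply,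
    ContinuousLinearMap.id_apply, Real.inner_apply]
  ring

end HasQuadExpansionAt

theorem hasQuadExpansionAt_log {t : ℝ} (ht : 0 < t) :
    HasQuadExpansionAt Real.log t⁻¹ (-(t⁻¹ ^ 2 / 2) • ContinuousLinearMap.id ℝ ℝ) t := by
  have hcube : (fun s : ℝ => |t⁻¹ * s| ^ 3) =o[𝓝 0] fun s => ‖s‖ ^ 2 := by
    have hpow := (Asymptotics.isLittleO_pow_pow (𝕜 := ℝ) (show 2 < 3 by norm_num)).norm_norm
    refine (hpow.const_mul_left (|t⁻¹| ^ 3)).congr (fun s => ?_) fun s => ?_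
    · rw [norm_pow, Real.norm_eq_abs, abs_mul, mul_pow]
    · rw [norm_pow]
  refine (Asymptotics.IsBigO.of_bound 2 ?_).trans_isLittleO hcube
  filter_upwards [ball_mem_nhds (0 : ℝ) (half_pos ht)] with s hs
  have hsmall : |t⁻¹ * s| < 1 / 2 := by
    rw [mem_ball_zero_iff, Real.norm_eq_abs] at hs
    rw [abs_mul, abs_of_pos (inv_pos.mpr ht), inv_mul_lt_iff₀ ht]
    linarith
  have hfactor : Real.log (t + s) = Real.log t + Real.log (1 + t⁻¹ * s) := by
    rw [← Real.log_mul ht.ne' (by linarith [neg_lt_of_abs_lt hsmall])]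
    congr 1
    field_simp
  have htaylor := Real.abs_log_sub_add_sum_range_le (x := -(t⁻¹ * s))
    (by rw [abs_neg]; linarith) 2
  rw [abs_neg, sub_neg_eq_add, Finset.sum_range_succ, Finset.sum_range_one] at htaylor
  have hbound : |t⁻¹ * s| ^ (2 + 1) / (1 - |t⁻¹ * s|) ≤ 2 * |t⁻¹ * s| ^ 3 := by
    rw [div_le_iff₀ (by linarith)]
    nlinarith [mul_nonneg (pow_nonneg (abs_nonneg (t⁻¹ * s)) 3)
      (show 0 ≤ 1 - 2 * |t⁻¹ * s| by linarith)]
  rw [Real.norm_eq_abs, norm_pow, Real.norm_eq_abs, abs_abs]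
  refine le_of_eq_of_le (congrArg _ ?_) (htaylor.trans hbound)
  simp only [hfactor, smul_apply, ContinuousLinearMap.id_apply, Real.inner_apply, smul_eq_mul]
  push_cast
  ring

theorem HasQuadExpansionAt.log (hf : HasQuadExpansionAt f p A x) (hx : 0 < f x) :
    HasQuadExpansionAt (fun y => Real.log (f y)) ((f x)⁻¹ • p)
      ((f x)⁻¹ • A + (-((f x)⁻¹ ^ 2 / 2)) • (innerSL ℝ p).smulRight p) x :=
  (hasQuadExpansionAt_log hx).comp_real hf

end LogExpansion

/-! ## Compactness of the doubled graphs -/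

section Compactness

variable {N : ℕ} {Ω B : Set (𝔼 N)} {H u v : 𝔼 N → ℝ}

namespace IsComparisonPair

theorem mono (h : IsComparisonPair Ω B H u v) {B' : Set (𝔼 N)} (hB' : IsCompact B')
    (hsub : B' ⊆ B) : IsComparisonPair Ω B' H u v where
  subset := hsub.trans h.subset
  isCompact := hB'
  continuousOn := h.continuousOn.mono hsub
  lowerSemicontinuousOn := h.lowerSemicontinuousOn.mono hsub
  upperSemicontinuousOn := h.upperSemicontinuousOn.mono hsub
  supersol := h.supersol
  subsol := h.subsol

theorem isCompact_sublevel (h : IsComparisonPair Ω B H u v) (C : ℝ) :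
    IsCompact {Z ∈ hilbertProd (epigraphOn B u) (hypographOn B v) |
      Z.fst.snd ≤ Z.snd.snd + C} := by
  obtain ⟨r, hr⟩ := h.isCompact.isBounded.exists_norm_le
  obtain ⟨lower, hlower⟩ := h.lowerSemicontinuousOn.bddBelow_of_isCompact h.isCompact
  obtain ⟨upper, hupper⟩ := h.upperSemicontinuousOn.bddAbove_of_isCompact h.isCompact
  have hclosed : IsClosed {Z : WithLp 2 (𝔾 N × 𝔾 N) | Z.fst.snd ≤ Z.snd.snd + C} :=
    isClosed_le (by fun_prop) (by fun_prop)
  refine (isCompact_closedBall 0 (2 * (r + (|lower| + |upper| + |C|)))).of_isClosed_subset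
    ((isClosed_hilbertProd h.isClosed_epigraphOn h.isClosed_hypographOn).inter hclosed) ?_
  rintro Z ⟨⟨⟨hx, hu⟩, hy, hv⟩, hC⟩
  have hlow : lower ≤ u Z.fst.fst := hlower (mem_image_of_mem u hx)
  have hupp : v Z.snd.fst ≤ upper := hupper (mem_image_of_mem v hy)
  have hX : ‖Z.fst‖ ≤ r + (|lower| + |upper| + |C|) := by
    refine (norm_le_norm_fst_add_abs_snd _).trans (add_le_add (hr _ hx) (abs_le.mpr ⟨?_, ?_⟩)) <;>
      linarith [neg_abs_le lower, le_abs_self upper, le_abs_self C, abs_nonneg lower,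
        abs_nonneg upper, abs_nonneg C]
  have hY : ‖Z.snd‖ ≤ r + (|lower| + |upper| + |C|) := by
    refine (norm_le_norm_fst_add_abs_snd _).trans (add_le_add (hr _ hy) (abs_le.mpr ⟨?_, ?_⟩)) <;>
      linarith [neg_abs_le lower, le_abs_self upper, le_abs_self C, abs_nonneg lower,
        abs_nonneg upper, abs_nonneg C]
  rw [mem_closedBall_zero_iff, ← abs_of_nonneg (norm_nonneg Z)]
  refine abs_le_of_sq_le_sq ?_ (by linarith [norm_nonneg Z.fst])
  rw [WithLp.prod_norm_sq_eq_of_L2]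
  nlinarith [norm_nonneg Z.fst, norm_nonneg Z.snd]

theorem isCompact_setOf_le (h : IsComparisonPair Ω B H u v) : IsCompact {x ∈ B | u x ≤ v x} := by
  have hdiff := h.lowerSemicontinuousOn.add h.upperSemicontinuousOn.neg
  convert hdiff.isCompact_inter_preimage_Iic h.isCompact 0 using 1
  ext x
  simp [← sub_eq_add_neg]

-- Almost coincident pairs accumulate only at contact points of `u` and `v` on the diagonal.
theorem exists_pos_forall_notMem (h : IsComparisonPair Ω B H u v) {A : Set (𝔼 N × 𝔼 N)}
    (hA : IsClosed A) (hdiag : ∀ x ∈ B, (x, x) ∈ A → v x < u x) :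
    ∃ η > 0, ∀ Z ∈ hilbertProd (epigraphOn B u) (hypographOn B v), Z.fst.snd - Z.snd.snd ≤ η →
      ‖Z.fst.fst - Z.snd.fst‖ ≤ η → (Z.fst.fst, Z.snd.fst) ∉ A := by
  have hK : IsCompact ({Z ∈ hilbertProd (epigraphOn B u) (hypographOn B v) |
      Z.fst.snd ≤ Z.snd.snd + 1} ∩ (fun Z => (Z.fst.fst, Z.snd.fst)) ⁻¹' A) :=
    (h.isCompact_sublevel 1).inter_right (hA.preimage (by fun_prop))
  obtain ⟨η, hη, hle⟩ := hK.exists_forall_le' (a := 0)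
    (f := fun Z => max (Z.fst.snd - Z.snd.snd) ‖Z.fst.fst - Z.snd.fst‖) (by fun_prop) <| by
      rintro Z ⟨⟨⟨⟨hx, hu⟩, -, hv⟩, -⟩, hZA⟩
      refine lt_max_iff.mpr (or_iff_not_imp_right.mpr fun hxy => ?_)
      have heq : Z.fst.fst = Z.snd.fst := sub_eq_zero.mp (norm_le_zero_iff.mp (not_lt.mp hxy))
      rw [mem_preimage, ← heq] at hZA
      rw [← heq] at hv
      linarith [hdiag _ hx hZA]
  refine ⟨min 1 (η / 2), by positivity, fun Z hZ hsnd hfst hZA => ?_⟩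
  have hmax := hle Z ⟨⟨hZ, by linarith [min_le_left 1 (η / 2)]⟩, hZA⟩
  linarith [max_le hsnd hfst, min_le_right 1 (η / 2)]

end IsComparisonPair

end Compactness

/-! ## Frame estimates -/

section FrameEstimates

variable {W : Type*} [NormedAddCommGroup W] [InnerProductSpace ℝ W] [FiniteDimensional ℝ W]

theorem norm_rotatedFrame_sub_tangentFrame_le {m n : W} (hm : ‖m‖ = 1) (hn : ‖n‖ = 1)
    (j : Fin (Module.finrank ℝ W)) :
    ‖rotatedFrame m n j - tangentFrame n j‖ ≤ 2 * |rotationCoeff m n j| := by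
  rw [rotatedFrame, sub_sub_cancel_left, norm_neg, norm_smul, Real.norm_eq_abs, mul_comm]
  gcongr
  linarith [norm_add_le m n]

theorem sum_norm_rotatedFrame_sub_tangentFrame_sq_le {b w : W} (hb : 1 ≤ ‖b‖) (hw : ‖w‖ ≤ 1 / 2) :
    ∑ j, ‖rotatedFrame (NormedSpace.normalize (b + w)) (NormedSpace.normalize b) j -
      tangentFrame (NormedSpace.normalize b) j‖ ^ 2 ≤ 8 * ‖w‖ ^ 2 := by
  have hb₀ : b ≠ 0 := norm_pos_iff.mp (by linarith)
  have hbw : b + w ≠ 0 := by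
    rw [← norm_pos_iff]
    linarith [norm_le_add_norm_add b w]
  calc ∑ j, ‖rotatedFrame (NormedSpace.normalize (b + w)) (NormedSpace.normalize b) j -
        tangentFrame (NormedSpace.normalize b) j‖ ^ 2
      ≤ ∑ j, 4 * rotationCoeff (NormedSpace.normalize (b + w)) (NormedSpace.normalize b) j ^ 2 := by
        refine Finset.sum_le_sum fun j _ => ?_
        have hj := norm_rotatedFrame_sub_tangentFrame_le (NormedSpace.norm_normalize hbw)
          (NormedSpace.norm_normalize hb₀) j
        refine (pow_le_pow_left₀ (norm_nonneg _) hj 2).trans_eq ?_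
        rw [mul_pow, sq_abs]
        norm_num
    _ ≤ 8 * ‖w‖ ^ 2 := by
        rw [← Finset.mul_sum]
        linarith [sum_rotationCoeff_normalize_sq_le hb hw]

theorem IsTangentFrame.snd_sq_mul_norm_sq_le {V ι : Type*} [Fintype ι] [NormedAddCommGroup V]
    [InnerProductSpace ℝ V] {n : WithLp 2 (V × ℝ)} {g : ι → WithLp 2 (V × ℝ)}
    (hg : IsTangentFrame n g) (hn : ‖n‖ = 1) (a : V) :
    n.snd ^ 2 * ‖a‖ ^ 2 ≤ ∑ j, ⟪a, (g j).fst⟫_ℝ ^ 2 := by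
  have hframe := hg (WithLp.toLp 2 (a, 0))
  simp only [inner_prod_real, norm_sq_prod_real, mul_zero, add_zero, ne_eq, OfNat.ofNat_ne_zero,
    not_false_eq_true, zero_pow, WithLp.toLp_fst, WithLp.toLp_snd] at hframe
  have hcs : ⟪n.fst, a⟫_ℝ ^ 2 ≤ ‖n.fst‖ ^ 2 * ‖a‖ ^ 2 := by
    rw [← mul_pow, ← sq_abs]
    gcongr
    exact abs_real_inner_le_norm _ _
  have hunit := norm_sq_prod_real n
  rw [hn] at hunit
  simp only [real_inner_comm a] at hframe
  rw [hframe, real_inner_comm]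
  nlinarith [sq_nonneg ‖a‖]

end FrameEstimates

/-! ## A Hopf lemma for the doubled problem -/

section Barrier

variable {V : Type*} [NormedAddCommGroup V] [InnerProductSpace ℝ V]

/-- Doubling penalty for the Hopf argument: it forces the two graph points together at scale `ε`
and adds the logarithm of a quadratic that is small near the sphere centred at `x₀`. -/
noncomputable def barrierPenalty (x₀ : V) (ε μ κ : ℝ) (Z : 𝔻 V) : ℝ :=
  Z.fst.snd - Z.snd.snd + 1 / (2 * ε) * ‖Z.fst.fst - Z.snd.fst‖ ^ 2 +
    ε * μ * Real.log (‖Z.fst.fst - x₀‖ ^ 2 + κ)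

theorem HasQuadExpansionAt.congr_slope {f : V → ℝ} {p q x : V} {A : V →L[ℝ] V}
    (hf : HasQuadExpansionAt f p A x) (hpq : p = q) : HasQuadExpansionAt f q A x :=
  hpq ▸ hf

theorem hasQuadExpansionAt_fst_snd_sub_snd_snd (c : 𝔻 V) :
    HasQuadExpansionAt (fun Z => Z.fst.snd - Z.snd.snd)
      (WithLp.toLp 2 (WithLp.toLp 2 ((0 : V), (1 : ℝ)), -WithLp.toLp 2 ((0 : V), (1 : ℝ)))) 0 c :=
  .of_forall_eq fun h => by
    simp only [WithLp.add_fst, WithLp.add_snd, WithLp.prod_inner_apply, WithLp.ofLp_fst,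
      inner_zero_left, WithLp.ofLp_snd, RCLike.inner_apply, Real.ringHom_apply, mul_one, zero_add,
      inner_neg_left, zero_apply, add_zero]
    ring

variable [CompleteSpace V]

theorem exists_hasQuadExpansionAt_norm_fst_sub_fst_sq (c : 𝔻 V) :
    ∃ A, HasQuadExpansionAt (fun Z => ‖Z.fst.fst - Z.snd.fst‖ ^ 2)
      (WithLp.toLp 2 (WithLp.toLp 2 ((2 : ℝ) • (c.fst.fst - c.snd.fst), (0 : ℝ)),
        -WithLp.toLp 2 ((2 : ℝ) • (c.fst.fst - c.snd.fst), (0 : ℝ)))) A c ∧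
      ∀ h, ⟪A h, h⟫_ℝ = ‖h.fst.fst - h.snd.fst‖ ^ 2 := by
  let D : 𝔻 V →L[ℝ] V := WithLp.fstL 2 ℝ V ℝ ∘L (WithLp.fstL 2 ℝ _ _ - WithLp.sndL 2 ℝ _ _)
  have hD (h) : ⟪(D.adjoint ∘L D) h, h⟫_ℝ = ‖h.fst.fst - h.snd.fst‖ ^ 2 := by
    rw [ContinuousLinearMap.comp_apply, ContinuousLinearMap.adjoint_inner_left,
      real_inner_self_eq_norm_sq]
    rfl
  refine ⟨D.adjoint ∘L D, .of_forall_eq fun h => ?_, hD⟩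
  have hsplit : (c + h).fst.fst - (c + h).snd.fst =
      (c.fst.fst - c.snd.fst) + (h.fst.fst - h.snd.fst) := by
    simp only [WithLp.add_fst, WithLp.add_snd]
    abel
  rw [hD, hsplit, norm_add_sq_real]
  simp only [inner_sub_right, WithLp.prod_inner_apply, WithLp.ofLp_fst, inner_smul_left,
    Real.ringHom_apply, WithLp.ofLp_snd, RCLike.inner_apply, mul_zero, add_zero, inner_neg_left,
    add_left_inj, add_right_inj]
  ring

theorem exists_hasQuadExpansionAt_norm_fst_sub_sq (x₀ : V) (c : 𝔻 V) (κ : ℝ) :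
    ∃ A, HasQuadExpansionAt (fun Z => ‖Z.fst.fst - x₀‖ ^ 2 + κ)
      (WithLp.toLp 2 (WithLp.toLp 2 ((2 : ℝ) • (c.fst.fst - x₀), (0 : ℝ)), 0)) A c ∧
      ∀ h, ⟪A h, h⟫_ℝ = ‖h.fst.fst‖ ^ 2 := by
  let D : 𝔻 V →L[ℝ] V := WithLp.fstL 2 ℝ V ℝ ∘L WithLp.fstL 2 ℝ _ _
  have hD (h) : ⟪(D.adjoint ∘L D) h, h⟫_ℝ = ‖h.fst.fst‖ ^ 2 := by
    rw [ContinuousLinearMap.comp_apply, ContinuousLinearMap.adjoint_inner_left,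
      real_inner_self_eq_norm_sq]
    rfl
  refine ⟨D.adjoint ∘L D, .of_forall_eq fun h => ?_, hD⟩
  have hsplit : (c + h).fst.fst - x₀ = (c.fst.fst - x₀) + h.fst.fst := by
    simp only [WithLp.add_fst]
    abel
  rw [hD, hsplit, norm_add_sq_real]
  simp only [WithLp.prod_inner_apply, WithLp.ofLp_fst, inner_smul_left, Real.ringHom_apply,
    WithLp.ofLp_snd, RCLike.inner_apply, mul_zero, add_zero, inner_zero_left]
  ring

theorem exists_hasQuadExpansionAt_barrierPenalty (x₀ : V) (ε μ κ : ℝ)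
    {c : 𝔻 V} {e : ℝ} (he : ‖c.fst.fst - x₀‖ ^ 2 + κ = e) (he₀ : 0 < e) :
    ∃ T, HasQuadExpansionAt (barrierPenalty x₀ ε μ κ)
      (WithLp.toLp 2 (WithLp.toLp 2 (ε⁻¹ • (c.fst.fst - c.snd.fst), (1 : ℝ)) +
        WithLp.toLp 2 ((ε * μ * e⁻¹) • (2 : ℝ) • (c.fst.fst - x₀), (0 : ℝ)),
        -WithLp.toLp 2 (ε⁻¹ • (c.fst.fst - c.snd.fst), (1 : ℝ)))) T c ∧
      ∀ h, ⟪T h, h⟫_ℝ = 1 / (2 * ε) * ‖h.fst.fst - h.snd.fst‖ ^ 2 + ε * μ *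
        (e⁻¹ * ‖h.fst.fst‖ ^ 2 -
          1 / 2 * e⁻¹ ^ 2 * ⟪(2 : ℝ) • (c.fst.fst - x₀), h.fst.fst⟫_ℝ ^ 2) := by
  obtain ⟨A₁, hexp₁, hA₁⟩ := exists_hasQuadExpansionAt_norm_fst_sub_fst_sq c
  obtain ⟨A₂, hexp₂, hA₂⟩ := exists_hasQuadExpansionAt_norm_fst_sub_sq x₀ c κ
  have hlog := hexp₂.log (by rwa [he])
  simp only [he] at hlog
  have hexp := ((hasQuadExpansionAt_fst_snd_sub_snd_snd c).add (hexp₁.const_mul (1 / (2 * ε)))).add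
    (hlog.const_mul (ε * μ))
  refine ⟨_, hexp.congr_slope ?_, fun h => ?_⟩
  · simp [← WithLp.toLp_add, ← WithLp.toLp_smul, ← WithLp.toLp_neg, smul_smul, mul_assoc]
  simp only [one_div, mul_inv_rev, zero_add, inv_pow, neg_smul, smul_add, smul_neg, add_apply,
    smul_apply, neg_apply, ContinuousLinearMap.smulRight_apply, coe_innerSL_apply,
    WithLp.prod_inner_apply, WithLp.ofLp_fst, inner_smul_left, Real.ringHom_apply, WithLp.ofLp_snd,
    RCLike.inner_apply, mul_zero, add_zero, inner_zero_left, inner_add_left, hA₁, map_inv₀, hA₂,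
    inner_neg_left, map_div₀, add_right_inj]
  ring

end Barrier

section Hopf

variable {N : ℕ} {Ω B : Set (𝔼 N)} {H u v : 𝔼 N → ℝ} {c : WithLp 2 (𝔾 N × 𝔾 N)} {x₀ : 𝔼 N}
  {ε μ κ e H₀ Λ : ℝ}

theorem div_norm_sq_le_sum_inner_rotatedFrame_sq {b w : 𝔾 N} (hb : 1 ≤ ‖b‖) (hw : ‖w‖ ≤ 1 / 2)
    (hbw : (b + w).snd = 1) (hΛ : ‖b + w‖ ≤ Λ) (a : 𝔼 N) :
    ‖a‖ ^ 2 / Λ ^ 2 ≤ ∑ j, ⟪a, (rotatedFrame (NormedSpace.normalize (b + w))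
      (NormedSpace.normalize b) j).fst⟫_ℝ ^ 2 := by
  have hbw₀ : b + w ≠ 0 := by rintro h₀; simp [h₀] at hbw
  have : 0 < ‖b + w‖ := norm_pos_iff.mpr hbw₀
  refine le_trans ?_ ((isTangentFrame_rotatedFrame_normalize hb hw).snd_sq_mul_norm_sq_le
    (NormedSpace.norm_normalize hbw₀) a)
  have hsnd : (NormedSpace.normalize (b + w)).snd = ‖b + w‖⁻¹ := by
    rw [NormedSpace.normalize.eq_def, WithLp.smul_snd, hbw, smul_eq_mul, mul_one]
  rw [hsnd, div_eq_inv_mul, inv_pow]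
  gcongr

theorem sum_framePair_quadratic_le {b w : 𝔾 N} (hb : 1 ≤ ‖b‖) (hw : ‖w‖ ≤ 1 / 2)
    (hbw : (b + w).snd = 1) (hΛ : ‖b + w‖ ≤ Λ) (a : 𝔼 N) {α β γ δ : ℝ} (hα : 0 ≤ α) (hβ : 0 ≤ β)
    (hγ : 0 ≤ γ) (hδ : 0 ≤ δ) {g : Fin (Module.finrank ℝ (𝔾 N)) → WithLp 2 (𝔾 N × 𝔾 N)}
    (hg : g = framePair (NormedSpace.normalize (b + w)) (NormedSpace.normalize b)) :
    ∑ j, (α * ‖(g j).fst.fst - (g j).snd.fst‖ ^ 2 +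
      β * (γ * ‖(g j).fst.fst‖ ^ 2 - δ * ⟪a, (g j).fst.fst⟫_ℝ ^ 2)) ≤
      α * (8 * ‖w‖ ^ 2) + β * (γ * N - δ * (‖a‖ ^ 2 / Λ ^ 2)) := by
  have hframe := isTangentFrame_rotatedFrame_normalize hb hw
  have hdiff : ∑ j, ‖(g j).fst.fst - (g j).snd.fst‖ ^ 2 ≤ 8 * ‖w‖ ^ 2 := by
    refine le_trans (Finset.sum_le_sum fun j _ => ?_)
      (sum_norm_rotatedFrame_sub_tangentFrame_sq_le hb hw)
    rw [hg]
    gcongr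
    exact WithLp.norm_fst_le (𝔼 N) (rotatedFrame _ _ j - tangentFrame _ j)
  have hnorm : ∑ j, ‖(g j).fst.fst‖ ^ 2 ≤ N := hg ▸ hframe.sum_norm_fst_sq_le
  have hinner : ‖a‖ ^ 2 / Λ ^ 2 ≤ ∑ j, ⟪a, (g j).fst.fst⟫_ℝ ^ 2 :=
    hg ▸ div_norm_sq_le_sum_inner_rotatedFrame_sq hb hw hbw hΛ a
  simp only [Finset.sum_add_distrib, ← Finset.mul_sum, Finset.sum_sub_distrib]
  gcongr

-- The transverse part of the logarithm's Hessian is the only negative term.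
theorem IsComparisonPair.neg_le_of_isLocalMinOn_barrierPenalty (h : IsComparisonPair Ω B H u v)
    (hc : c ∈ hilbertProd (epigraphOn B u) (hypographOn B v)) (hBX : B ∈ 𝓝 c.fst.fst)
    (hBY : B ∈ 𝓝 c.snd.fst)
    (hmin : IsLocalMinOn (barrierPenalty x₀ ε μ κ)
      (hilbertProd (epigraphOn B u) (hypographOn B v)) c)
    (hε : 0 < ε) (hμ : 0 < μ) (he : ‖c.fst.fst - x₀‖ ^ 2 + κ = e) (he₀ : 0 < e)
    (hw : ε * μ * e⁻¹ * (2 * ‖c.fst.fst - x₀‖) ≤ 1 / 2) (hH₀ : |H c.snd.fst| ≤ H₀)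
    (hΛ : ‖c.fst.fst - c.snd.fst‖ / ε + 2 ≤ Λ) :
    -(N / 2 * (ε * μ * e⁻¹ * (2 * ‖c.fst.fst - x₀‖) * H₀ +
        Λ * |H c.fst.fst - H c.snd.fst|)) ≤
      4 * (ε * μ * e⁻¹ * (2 * ‖c.fst.fst - x₀‖)) ^ 2 / ε +
        ε * μ * (e⁻¹ * N - 1 / 2 * e⁻¹ ^ 2 * ((2 * ‖c.fst.fst - x₀‖) ^ 2 / Λ ^ 2)) := by
  obtain ⟨T, hT, hTeq⟩ := exists_hasQuadExpansionAt_barrierPenalty x₀ ε μ κ he he₀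
  set a : 𝔼 N := (2 : ℝ) • (c.fst.fst - x₀) with ha
  set b : 𝔾 N := WithLp.toLp 2 (ε⁻¹ • (c.fst.fst - c.snd.fst), (1 : ℝ))
  set w : 𝔾 N := WithLp.toLp 2 ((ε * μ * e⁻¹) • a, (0 : ℝ))
  have ha_norm : ‖a‖ = 2 * ‖c.fst.fst - x₀‖ := by simp [ha, norm_smul]
  have hw_norm : ‖w‖ = ε * μ * e⁻¹ * ‖a‖ := by
    rw [WithLp.norm_toLp_fst, norm_smul, Real.norm_of_nonneg (by positivity)]
  rw [← ha_norm, ← hw_norm] at hw ⊢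
  have hb_snd : b.snd = 1 := rfl
  have hbw_snd : (b + w).snd = 1 := add_zero 1
  have hb : 1 ≤ ‖b‖ := by simpa [hb_snd] using WithLp.norm_snd_le (𝔼 N) b
  have hbw : ‖b + w‖ ≤ Λ := by
    have hb_le := norm_le_norm_fst_add_abs_snd b
    rw [hb_snd, abs_one, show b.fst = ε⁻¹ • (c.fst.fst - c.snd.fst) from rfl, norm_smul,
      Real.norm_of_nonneg (by positivity), inv_mul_eq_div] at hb_le
    linarith [norm_add_le b w]
  have hineq := h.neg_le_sum_framePair_of_slope_add hc hBX hBY hT hmin (by linarith)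
    (by simp [hb_snd]) (by simp [hbw_snd]) hH₀
  simp only [hTeq] at hineq
  have hsum := sum_framePair_quadratic_le hb hw hbw_snd hbw a (α := 1 / (2 * ε)) (β := ε * μ)
    (γ := e⁻¹) (δ := 1 / 2 * e⁻¹ ^ 2) (by positivity) (by positivity) (by positivity)
    (by positivity) rfl
  calc -(N / 2 * (‖w‖ * H₀ + Λ * |H c.fst.fst - H c.snd.fst|))
      ≤ -(N / 2 * (‖w‖ * H₀ + ‖b + w‖ * |H c.fst.fst - H c.snd.fst|)) := by gcongr
    _ ≤ 1 / (2 * ε) * (8 * ‖w‖ ^ 2) +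
        ε * μ * (e⁻¹ * N - 1 / 2 * e⁻¹ ^ 2 * (‖a‖ ^ 2 / Λ ^ 2)) := hineq.trans hsum
    _ = 4 * ‖w‖ ^ 2 / ε + ε * μ * (e⁻¹ * N - 1 / 2 * e⁻¹ ^ 2 * (‖a‖ ^ 2 / Λ ^ 2)) := by ring

end Hopf

section BarrierMinimum

theorem sub_le_and_le_and_le_of_add_log_le {t D e δ ε μ Λ : ℝ} (hε : 0 < ε) (hμ : 0 < μ)
    (hμ₁ : μ ≤ 1) (hδ : 0 < δ) (he : δ / 2 ≤ e) (hΛ : 0 ≤ Λ) (hD : 0 ≤ D) (ht : -t ≤ Λ * D)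
    (hle : t + 1 / (2 * ε) * D ^ 2 + ε * μ * Real.log e ≤ ε * μ * Real.log δ) :
    t ≤ ε ∧ D ≤ ε * (2 * Λ + 2) ∧ e ≤ δ * Real.exp (Λ ^ 2 / (2 * μ)) := by
  have he₀ : 0 < e := by linarith
  have hlog : Real.log δ - Real.log e ≤ 1 := by
    rw [← Real.log_div hδ.ne' he₀.ne']
    have hratio : δ / e ≤ 2 := (div_le_iff₀ he₀).mpr (by linarith)
    linarith [Real.log_le_sub_one_of_pos (div_pos hδ he₀)]
  have hsum : t + 1 / (2 * ε) * D ^ 2 ≤ ε := by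
    nlinarith [mul_le_mul_of_nonneg_left hlog (mul_pos hε hμ).le]
  have hsq : 0 ≤ 1 / (2 * ε) * D ^ 2 := by positivity
  refine ⟨by linarith, ?_, ?_⟩
  · have hquad : D ^ 2 ≤ (Λ * D + ε) * (2 * ε) := by
      rw [← div_le_iff₀ (by positivity), div_eq_inv_mul, ← one_div]
      linarith
    by_contra! hlt
    nlinarith [mul_nonneg hε.le hΛ]
  · have hmin : -(ε * Λ ^ 2 / 2) ≤ -(Λ * D) + 1 / (2 * ε) * D ^ 2 := by
      have hcomplete : -(Λ * D) + 1 / (2 * ε) * D ^ 2 + ε * Λ ^ 2 / 2 =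
          1 / (2 * ε) * (D - ε * Λ) ^ 2 := by field_simp; ring
      nlinarith [show 0 ≤ 1 / (2 * ε) * (D - ε * Λ) ^ 2 by positivity]
    have hexp : Real.log e ≤ Real.log δ + Λ ^ 2 / (2 * μ) := by
      rw [← mul_le_mul_iff_of_pos_left (mul_pos hε hμ), mul_add,
        show ε * μ * (Λ ^ 2 / (2 * μ)) = ε * Λ ^ 2 / 2 by field_simp]
      linarith
    rwa [← Real.log_exp (Λ ^ 2 / (2 * μ)), ← Real.log_mul hδ.ne' (Real.exp_pos _).ne',
      Real.log_le_log_iff he₀ (by positivity)] at hexp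

/-- The pairs in `epigraph × hypograph` over which `barrierPenalty` is minimized: the heights
differ by at most `1`, and the first point keeps the squared distance `ρ` from `x₀`. -/
def barrierDomain {V : Type*} [NormedAddCommGroup V] (B : Set V) (u v : V → ℝ) (x₀ : V) (ρ : ℝ) :
    Set (𝔻 V) :=
  {Z | Z ∈ hilbertProd (epigraphOn B u) (hypographOn B v) ∧ Z.fst.snd ≤ Z.snd.snd + 1 ∧
    ρ ≤ ‖Z.fst.fst - x₀‖ ^ 2}

theorem isLocalMinOn_of_isMinOn_barrierDomain {V : Type*} [NormedAddCommGroup V]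
    {B : Set V} {u v : V → ℝ} {x₀ : V} {ρ : ℝ} {Φ : 𝔻 V → ℝ} {c : 𝔻 V}
    (hmin : IsMinOn Φ (barrierDomain B u v x₀ ρ) c) (hsnd : c.fst.snd < c.snd.snd + 1)
    (hρ : ρ < ‖c.fst.fst - x₀‖ ^ 2) :
    IsLocalMinOn Φ (hilbertProd (epigraphOn B u) (hypographOn B v)) c := by
  have hsnd' : ∀ᶠ Z : 𝔻 V in 𝓝 c, Z.fst.snd < Z.snd.snd + 1 :=
    ContinuousAt.eventually_lt (by fun_prop) (by fun_prop) hsnd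
  have hρ' : ∀ᶠ Z : 𝔻 V in 𝓝 c, ρ < ‖Z.fst.fst - x₀‖ ^ 2 :=
    ContinuousAt.eventually_lt (by fun_prop) (by fun_prop) hρ
  filter_upwards [self_mem_nhdsWithin, nhdsWithin_le_nhds hsnd', nhdsWithin_le_nhds hρ']
    with Z hZ hZsnd hZρ
  exact hmin ⟨hZ, hZsnd.le, hZρ.le⟩

variable {N : ℕ} {Ω B : Set (𝔼 N)} {H u v : 𝔼 N → ℝ} {z x₀ : 𝔼 N} {R s δ ε μ Λ : ℝ}

namespace IsComparisonPair

theorem exists_isMinOn_barrierPenalty (h : IsComparisonPair Ω B H u v) (hz : z ∈ B)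
    (huv : u z = v z) (hR : ‖z - x₀‖ = R) (hδ : 0 < δ) (ε μ : ℝ) :
    ∃ c ∈ barrierDomain B u v x₀ (R ^ 2 - δ / 2),
      IsMinOn (barrierPenalty x₀ ε μ (δ - R ^ 2)) (barrierDomain B u v x₀ (R ^ 2 - δ / 2)) c ∧
        barrierPenalty x₀ ε μ (δ - R ^ 2) c ≤ ε * μ * Real.log δ := by
  have hclosed : IsClosed {Z : WithLp 2 (𝔾 N × 𝔾 N) | R ^ 2 - δ / 2 ≤ ‖Z.fst.fst - x₀‖ ^ 2} :=
    isClosed_le continuous_const (by fun_prop)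
  have hK : IsCompact (barrierDomain B u v x₀ (R ^ 2 - δ / 2)) := by
    convert (h.isCompact_sublevel 1).inter_right hclosed using 1
    ext Z
    exact and_assoc.symm
  have hdiag : WithLp.toLp 2 (WithLp.toLp 2 (z, u z), WithLp.toLp 2 (z, v z)) ∈
      barrierDomain B u v x₀ (R ^ 2 - δ / 2) :=
    ⟨⟨⟨hz, le_rfl⟩, hz, le_rfl⟩, by simp [huv], by simp only [WithLp.toLp_fst, hR]; linarith⟩
  have hcont : ContinuousOn (barrierPenalty x₀ ε μ (δ - R ^ 2))
      (barrierDomain B u v x₀ (R ^ 2 - δ / 2)) := by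
    refine ContinuousOn.add (by fun_prop)
      (continuousOn_const.mul (ContinuousOn.log (by fun_prop) ?_))
    rintro Z ⟨-, -, hZ⟩
    linarith
  obtain ⟨c, hc, hmin⟩ := hK.exists_isMinOn ⟨_, hdiag⟩ hcont
  refine ⟨c, hc, hmin, (hmin hdiag).trans_eq ?_⟩
  simp [barrierPenalty, huv, hR]

theorem exists_pos_forall_mem_ball (h : IsComparisonPair Ω (closedBall z s) H u v) {ρ : ℝ}
    (hR : ‖z - x₀‖ = R) (hδ : 0 < δ)
    (hinside : ∀ x ∈ closedBall z s, ‖x - x₀‖ ≤ R → x ≠ z → v x < u x)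
    (hsphere : ∀ x ∈ sphere z s, u x ≤ v x → ρ < ‖x - x₀‖ ^ 2) :
    ∃ η > 0, ∀ Z ∈ hilbertProd (epigraphOn (closedBall z s) u) (hypographOn (closedBall z s) v),
      Z.fst.snd - Z.snd.snd ≤ η → ‖Z.fst.fst - Z.snd.fst‖ ≤ η → ‖Z.fst.fst - x₀‖ ^ 2 ≤ ρ →
        Z.fst.fst ∈ ball z s ∧ Z.snd.fst ∈ ball z s ∧ R ^ 2 - δ < ‖Z.fst.fst - x₀‖ ^ 2 := by
  set A : Set (𝔼 N × 𝔼 N) := {p | ‖p.1 - x₀‖ ^ 2 ≤ ρ} ∩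
    ({p | s ≤ dist p.1 z} ∪ ({p | s ≤ dist p.2 z} ∪ {p | ‖p.1 - x₀‖ ^ 2 ≤ R ^ 2 - δ})) with hA_def
  have hA : IsClosed A := by
    refine IsClosed.inter ?_ (IsClosed.union ?_ (IsClosed.union ?_ ?_))
    all_goals exact isClosed_le (by fun_prop) (by fun_prop)
  have hdiag : ∀ x ∈ closedBall z s, (x, x) ∈ A → v x < u x := by
    rintro x hx ⟨hnear, hfar⟩
    by_contra! hle
    have hball : ¬s ≤ dist x z := fun hsx => (hsphere x (le_antisymm hx hsx) hle).not_ge hnear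
    have hin : ‖x - x₀‖ ^ 2 ≤ R ^ 2 - δ := (hfar.resolve_left hball).resolve_left hball
    have hlt : ‖x - x₀‖ < R := lt_of_pow_lt_pow_left₀ 2 (hR ▸ norm_nonneg _) (by linarith)
    exact (hinside x hx hlt.le (by rintro rfl; linarith)).not_ge hle
  obtain ⟨η, hη, hη_notMem⟩ := h.exists_pos_forall_notMem hA hdiag
  refine ⟨η, hη, fun Z hZ hsnd hfst hρ => ?_⟩
  have hZA := hη_notMem Z hZ hsnd hfst
  simpa [hA_def, hρ] using hZA

theorem exists_isLocalMinOn_barrierPenalty (h : IsComparisonPair Ω (closedBall z s) H u v)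
    (hs : 0 ≤ s) (huv : u z = v z) (hR : ‖z - x₀‖ = R) (hδ : 0 < δ) (hμ : 0 < μ) (hμ₁ : μ ≤ 1)
    (hΛ₀ : 0 ≤ Λ)
    (hΛ : ∀ x ∈ closedBall z s, ∀ y ∈ closedBall z s, v y - u x ≤ Λ * ‖x - y‖)
    (hinside : ∀ x ∈ closedBall z s, ‖x - x₀‖ ≤ R → x ≠ z → v x < u x)
    (hsphere : ∀ x ∈ sphere z s, u x ≤ v x →
      R ^ 2 + δ * Real.exp (Λ ^ 2 / (2 * μ)) < ‖x - x₀‖ ^ 2) {ε₀ : ℝ} (hε₀ : 0 < ε₀) :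
    ∃ ε > 0, ε ≤ ε₀ ∧ ∃ c ∈ hilbertProd (epigraphOn (closedBall z s) u)
        (hypographOn (closedBall z s) v),
      c.fst.fst ∈ ball z s ∧ c.snd.fst ∈ ball z s ∧ R ^ 2 - δ / 2 < ‖c.fst.fst - x₀‖ ^ 2 ∧
      ‖c.fst.fst - c.snd.fst‖ ≤ ε * (2 * Λ + 2) ∧
      IsLocalMinOn (barrierPenalty x₀ ε μ (δ - R ^ 2)) (hilbertProd
        (epigraphOn (closedBall z s) u) (hypographOn (closedBall z s) v)) c := by
  obtain ⟨η, hη, hη_ball⟩ := h.exists_pos_forall_mem_ball hR (half_pos hδ) hinside hsphere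
  set ε := min ε₀ (min (1 / 2) (η / (2 * Λ + 2)))
  have hε : 0 < ε := by positivity
  have hεη : ε * (2 * Λ + 2) ≤ η :=
    (le_div_iff₀ (by positivity)).mp ((min_le_right _ _).trans (min_le_right _ _))
  have hε_half : ε ≤ 1 / 2 := (min_le_right _ _).trans (min_le_left _ _)
  obtain ⟨c, ⟨hc, -, hcρ⟩, hmin, hle⟩ :=
    h.exists_isMinOn_barrierPenalty (mem_closedBall_self hs) huv hR hδ ε μ
  obtain ⟨hsnd, hfst, hlog⟩ := sub_le_and_le_and_le_of_add_log_le hε hμ hμ₁ hδ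
    (by linarith : δ / 2 ≤ ‖c.fst.fst - x₀‖ ^ 2 + (δ - R ^ 2)) hΛ₀ (norm_nonneg _)
    (by linarith [hΛ _ hc.1.1 _ hc.2.1, hc.1.2, hc.2.2]) hle
  obtain ⟨hx, hy, hρ⟩ := hη_ball c hc (by nlinarith) (hfst.trans hεη) (by linarith)
  exact ⟨ε, hε, min_le_left _ _, c, hc, hx, hy, hρ, hfst,
    isLocalMinOn_of_isMinOn_barrierDomain hmin (by linarith) hρ⟩

theorem exists_pos_forall_sphere_sq_add_le (h : IsComparisonPair Ω (closedBall z s) H u v)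
    (hs : 0 < s) (hR : 0 ≤ R)
    (hinside : ∀ x ∈ closedBall z s, ‖x - x₀‖ ≤ R → x ≠ z → v x < u x) :
    ∃ d > 0, ∀ x ∈ sphere z s, u x ≤ v x → R ^ 2 + d ≤ ‖x - x₀‖ ^ 2 := by
  have hK : IsCompact ({x ∈ closedBall z s | u x ≤ v x} ∩ sphere z s) :=
    h.isCompact_setOf_le.inter_right isClosed_sphere
  obtain ⟨d, hd, hle⟩ := hK.exists_forall_le' (a := R ^ 2) (f := fun x => ‖x - x₀‖ ^ 2)
    (by fun_prop) <| by
      rintro x ⟨⟨hx, hux⟩, hxs⟩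
      have hxR : R < ‖x - x₀‖ := by
        by_contra! hxR
        exact (hinside x hx hxR (ne_of_mem_sphere hxs hs.ne')).not_ge hux
      gcongr
  exact ⟨d - R ^ 2, sub_pos.mpr hd, fun x hx hux => by
    linarith [hle x ⟨⟨sphere_subset_closedBall hx, hux⟩, hx⟩]⟩

end IsComparisonPair

end BarrierMinimum

section HopfLemma

-- For `16 Λ² μ = 1` the negative Hessian term absorbs half of itself and dominates as `e → 0`.
theorem barrier_upper_bound_lt_lower_bound {n ε μ e g H₀ Λ L Hd R : ℝ} (hn : 0 ≤ n) (hε : 0 < ε)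
    (he : 0 < e) (he₁ : e ≤ 1) (hΛ : 0 < Λ) (hμ : μ = 1 / (16 * Λ ^ 2)) (hH₀ : 0 ≤ H₀) (hL : 0 ≤ L)
    (hR : 0 < R) (hg : R ≤ g) (hg' : g ≤ 4 * R) (hHd : Hd ≤ L * (ε * Λ))
    (hsmall : e * (n + n / 2 * (4 * R * H₀ + 16 * L * Λ ^ 4)) < R ^ 2 / (4 * Λ ^ 2)) :
    4 * (ε * μ * e⁻¹ * g) ^ 2 / ε + ε * μ * (e⁻¹ * n - 1 / 2 * e⁻¹ ^ 2 * (g ^ 2 / Λ ^ 2)) <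
      -(n / 2 * (ε * μ * e⁻¹ * g * H₀ + Λ * Hd)) := by
  have : 0 < g := by linarith
  have hlower : -(n / 2 * (ε * μ * e⁻¹ * g * H₀ + Λ * Hd)) ≥
      -(ε / (16 * Λ ^ 2 * e ^ 2) * (n / 2 * (e * g * H₀ + 16 * L * Λ ^ 4 * e ^ 2))) :=
    calc -(n / 2 * (ε * μ * e⁻¹ * g * H₀ + Λ * Hd))
        ≥ -(n / 2 * (ε * μ * e⁻¹ * g * H₀ + Λ * (L * (ε * Λ)))) := by gcongr
      _ = _ := by rw [hμ]; field_simp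
  have hupper : 4 * (ε * μ * e⁻¹ * g) ^ 2 / ε +
      ε * μ * (e⁻¹ * n - 1 / 2 * e⁻¹ ^ 2 * (g ^ 2 / Λ ^ 2)) =
        ε / (16 * Λ ^ 2 * e ^ 2) * (e * n - g ^ 2 / (4 * Λ ^ 2)) := by
    rw [hμ]; field_simp; ring
  refine hupper.trans_lt (lt_of_lt_of_le ?_ hlower)
  rw [← mul_neg]
  gcongr
  have hsq : e ^ 2 ≤ e := by nlinarith
  have hterm : n / 2 * (e * g * H₀ + 16 * L * Λ ^ 4 * e ^ 2) ≤
      n / 2 * (e * (4 * R) * H₀ + 16 * L * Λ ^ 4 * e) := by gcongr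
  have hquot : R ^ 2 / (4 * Λ ^ 2) ≤ g ^ 2 / (4 * Λ ^ 2) := by gcongr
  linarith

variable {N : ℕ} {Ω : Set (𝔼 N)} {H u v : 𝔼 N → ℝ} {z x₀ : 𝔼 N} {R s δ ε e₀ H₀ Λ : ℝ}
  {L : NNReal} {c : WithLp 2 (𝔾 N × 𝔾 N)}

namespace IsComparisonPair

theorem not_isLocalMinOn_barrierPenalty (h : IsComparisonPair Ω (closedBall z s) H u v)
    (hL : LipschitzOnWith L H (closedBall z s)) (hH₀ : ∀ x ∈ closedBall z s, |H x| ≤ H₀)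
    (hR : ‖z - x₀‖ = R) (hR₀ : 0 < R) (hsR : s ≤ R / 2) (hs : 3 * R * s ≤ e₀ / 2) (he₀ : e₀ ≤ 1)
    (hsmall : e₀ * (N + N / 2 * (4 * R * H₀ + 16 * L * Λ ^ 4)) < R ^ 2 / (4 * Λ ^ 2))
    (hδ : 0 < δ) (hδe : δ ≤ e₀ / 2) (hε : 0 < ε) (hεR : ε * R ≤ δ) (hΛ : 2 ≤ Λ)
    (hc : c ∈ hilbertProd (epigraphOn (closedBall z s) u) (hypographOn (closedBall z s) v))
    (hx : c.fst.fst ∈ ball z s) (hy : c.snd.fst ∈ ball z s)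
    (hxδ : R ^ 2 - δ / 2 < ‖c.fst.fst - x₀‖ ^ 2)
    (hxy : ‖c.fst.fst - c.snd.fst‖ ≤ ε * (Λ - 2)) :
    ¬IsLocalMinOn (barrierPenalty x₀ ε (1 / (16 * Λ ^ 2)) (δ - R ^ 2))
      (hilbertProd (epigraphOn (closedBall z s) u) (hypographOn (closedBall z s) v)) c := by
  intro hmin
  have hdist : |‖c.fst.fst - x₀‖ - R| ≤ s := by
    rw [← hR]
    refine (abs_norm_sub_norm_le _ _).trans ?_
    rw [sub_sub_sub_cancel_right, ← dist_eq_norm]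
    exact hx.le
  obtain ⟨hlow, hup⟩ := abs_le.mp hdist
  set e := ‖c.fst.fst - x₀‖ ^ 2 + (δ - R ^ 2) with he
  have heδ : δ / 2 < e := by linarith
  have he_pos : 0 < e := by linarith
  have hee₀ : e ≤ e₀ := by nlinarith [norm_nonneg (c.fst.fst - x₀)]
  have hH₀_nonneg : 0 ≤ H₀ := (abs_nonneg _).trans (hH₀ _ (ball_subset_closedBall hx))
  have hw : ε * (1 / (16 * Λ ^ 2)) * e⁻¹ * (2 * ‖c.fst.fst - x₀‖) ≤ 1 / 2 :=
    calc ε * (1 / (16 * Λ ^ 2)) * e⁻¹ * (2 * ‖c.fst.fst - x₀‖)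
        ≤ ε * (1 / (16 * 1 ^ 2)) * (δ / 2)⁻¹ * (2 * (2 * R)) := by gcongr <;> linarith
      _ = ε * R / δ * (1 / 2) := by field_simp; norm_num
      _ ≤ 1 * (1 / 2) := by gcongr; exact (div_le_one hδ).mpr hεR
      _ = 1 / 2 := one_mul _
  have hslope : ‖c.fst.fst - c.snd.fst‖ / ε + 2 ≤ Λ := by
    rw [← le_sub_iff_add_le, div_le_iff₀' hε]
    exact hxy
  have hHd : |H c.fst.fst - H c.snd.fst| ≤ L * (ε * Λ) := by
    have hlip := hL.dist_le_mul _ (ball_subset_closedBall hx) _ (ball_subset_closedBall hy)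
    rw [Real.dist_eq, dist_eq_norm] at hlip
    exact hlip.trans (by gcongr; nlinarith)
  have hlower := h.neg_le_of_isLocalMinOn_barrierPenalty hc
    (closedBall_mem_nhds_of_mem hx) (closedBall_mem_nhds_of_mem hy) hmin hε (by positivity) he.symm
    he_pos hw (hH₀ _ (ball_subset_closedBall hy)) hslope
  refine hlower.not_gt (barrier_upper_bound_lt_lower_bound (R := R) (L := L) N.cast_nonneg hε
    he_pos (hee₀.trans he₀) (by linarith) rfl hH₀_nonneg L.2 hR₀ (by linarith) (by linarith)
    hHd (lt_of_le_of_lt ?_ hsmall))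
  gcongr

theorem exists_ne_le_of_small_radius (h : IsComparisonPair Ω (closedBall z s) H u v)
    (hL : LipschitzOnWith L H (closedBall z s)) (hH₀ : ∀ x ∈ closedBall z s, |H x| ≤ H₀)
    (huv : u z = v z) (hR : ‖z - x₀‖ = R) (hR₀ : 0 < R) (hs₀ : 0 < s) (hsR : s ≤ R / 2)
    (hs : 3 * R * s ≤ e₀ / 2) (he₀ : e₀ ≤ 1) (hΛ₀ : 0 ≤ Λ)
    (hΛ : ∀ x ∈ closedBall z s, ∀ y ∈ closedBall z s, v y - u x ≤ Λ * ‖x - y‖)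
    (hsmall : e₀ * (N + N / 2 * (4 * R * H₀ + 16 * L * (2 * Λ + 4) ^ 4)) <
      R ^ 2 / (4 * (2 * Λ + 4) ^ 2)) :
    ∃ x ∈ closedBall z s, ‖x - x₀‖ ≤ R ∧ x ≠ z ∧ u x ≤ v x := by
  by_contra! hinside
  obtain ⟨d, hd, hsphere⟩ := h.exists_pos_forall_sphere_sq_add_le hs₀ hR₀.le hinside
  set μ : ℝ := 1 / (16 * (2 * Λ + 4) ^ 2)
  have hμ₀ : 0 < μ := by positivity
  have hμ₁ : μ ≤ 1 := div_le_one_of_le₀ (by nlinarith) (by positivity)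
  set E := Real.exp (Λ ^ 2 / (2 * μ))
  have : 0 < E := Real.exp_pos _
  have he₀_pos : 0 < e₀ := by nlinarith
  set δ := min (e₀ / 2) (d / (2 * E))
  have hδ : 0 < δ := by positivity
  have hδE : δ * E < d := by
    have hle : δ * (2 * E) ≤ d := (le_div_iff₀ (by positivity)).mp (min_le_right _ _)
    linarith
  obtain ⟨ε, hε, hεle, c, hc, hx, hy, hxδ, hxy, hmin⟩ := h.exists_isLocalMinOn_barrierPenalty
    hs₀.le huv hR hδ hμ₀ hμ₁ hΛ₀ hΛ hinside (fun x hx hux => by linarith [hsphere x hx hux])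
    (div_pos hδ hR₀)
  refine h.not_isLocalMinOn_barrierPenalty hL hH₀ hR hR₀ hsR hs he₀ hsmall hδ (min_le_left _ _)
    hε ((le_div_iff₀ hR₀).mp hεle) (by linarith) hc hx hy hxδ ?_ hmin
  rwa [show 2 * Λ + 4 - 2 = 2 * Λ + 2 by ring]

theorem exists_ne_le_of_lipschitz (h : IsComparisonPair Ω (closedBall z s) H u v)
    (hL : LipschitzOnWith L H (closedBall z s)) (hs : 0 < s) (huv : u z = v z) (hne : z ≠ x₀)
    (hΛ₀ : 0 ≤ Λ)
    (hΛ : ∀ x ∈ closedBall z s, ∀ y ∈ closedBall z s, v y - u x ≤ Λ * ‖x - y‖) :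
    ∃ x ∈ closedBall z s, ‖x - x₀‖ ≤ ‖z - x₀‖ ∧ x ≠ z ∧ u x ≤ v x := by
  obtain ⟨H₀, hH₀⟩ := h.isCompact.exists_bound_of_continuousOn h.continuousOn
  have hH₀_nonneg : 0 ≤ H₀ := (norm_nonneg _).trans (hH₀ z (mem_closedBall_self hs.le))
  set R := ‖z - x₀‖ with hR
  have hR₀ : 0 < R := norm_pos_iff.mpr (sub_ne_zero.mpr hne)
  set K : ℝ := N + N / 2 * (4 * R * H₀ + 16 * L * (2 * Λ + 4) ^ 4)
  have : 0 ≤ K := by positivity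
  set e₀ := min 1 (R ^ 2 / (4 * (2 * Λ + 4) ^ 2) / (K + 1))
  have he₀ : 0 < e₀ := by positivity
  have hsmall : e₀ * K < R ^ 2 / (4 * (2 * Λ + 4) ^ 2) := by
    have hle : e₀ * (K + 1) ≤ R ^ 2 / (4 * (2 * Λ + 4) ^ 2) :=
      (le_div_iff₀ (by positivity)).mp (min_le_right _ _)
    linarith
  set s' := min s (min (R / 2) (e₀ / (6 * R)))
  have hs' : s' * (6 * R) ≤ e₀ :=
    (le_div_iff₀ (by positivity)).mp ((min_le_right _ _).trans (min_le_right _ _))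
  have hsub : closedBall z s' ⊆ closedBall z s := closedBall_subset_closedBall (min_le_left _ _)
  obtain ⟨x, hx, hcontact⟩ := (h.mono (isCompact_closedBall z s') hsub).exists_ne_le_of_small_radius
    (e₀ := e₀) (hL.mono hsub) (fun x hx => hH₀ x (hsub hx)) huv hR.symm hR₀ (by positivity)
    ((min_le_right _ _).trans (min_le_left _ _)) (by linarith) (min_le_left _ _) hΛ₀
    (fun x hx y hy => hΛ x (hsub hx) y (hsub hy)) hsmall
  exact ⟨x, hsub hx, hcontact⟩

end IsComparisonPair

end HopfLemma

/-! ## A one-sided Lipschitz bound -/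

section SlopePenalty

variable {V : Type*} [NormedAddCommGroup V] [InnerProductSpace ℝ V]

/-- A cut-off that decreases with the distance to `z₀` and, at rate `κ`, with the height. -/
def heightCutoff (z₀ : V) (γ κ : ℝ) (X : WithLp 2 (V × ℝ)) : ℝ :=
  γ - ‖X.fst - z₀‖ ^ 2 - κ * X.snd

/-- The gradient of `heightCutoff`. -/
noncomputable def heightCutoffGradient (z₀ : V) (κ : ℝ) (x : V) : WithLp 2 (V × ℝ) :=
  WithLp.toLp 2 ((-2 : ℝ) • (x - z₀), -κ)

/-- Minus the logarithm of the localized slope `(t - s) * heightCutoff (x, s) ^ m / ‖x - y‖` of the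
pair `((x, s), (y, t))`; the factor `r` normalizes the gradient in `x - y` where `‖x - y‖ = r`. -/
noncomputable def slopePenalty (z₀ : V) (γ κ r m : ℝ) (Z : 𝔻 V) : ℝ :=
  r * (1 / 2 * Real.log (‖Z.fst.fst - Z.snd.fst‖ ^ 2) - Real.log (Z.snd.snd - Z.fst.snd) -
    m * Real.log (heightCutoff z₀ γ κ Z.fst))

variable [CompleteSpace V]

theorem exists_hasQuadExpansionAt_heightCutoff (z₀ : V) (γ κ : ℝ) (c : 𝔻 V) :
    ∃ A, HasQuadExpansionAt (fun Z : 𝔻 V => heightCutoff z₀ γ κ Z.fst)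
      (WithLp.toLp 2 (heightCutoffGradient z₀ κ c.fst.fst, 0)) A c ∧
      ∀ h, ⟪A h, h⟫_ℝ = -‖h.fst.fst‖ ^ 2 := by
  obtain ⟨A, hexp, hA⟩ := exists_hasQuadExpansionAt_norm_fst_sub_sq z₀ c (-γ)
  have hsnd : HasQuadExpansionAt (fun Z : 𝔻 V => Z.fst.snd)
      (WithLp.toLp 2 (WithLp.toLp 2 ((0 : V), (1 : ℝ)), 0)) 0 c :=
    .of_forall_eq fun h => by simp
  have hfun : (fun Z : 𝔻 V => heightCutoff z₀ γ κ Z.fst) =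
      fun Z => -1 * (‖Z.fst.fst - z₀‖ ^ 2 + -γ) + -κ * Z.fst.snd := by
    funext Z
    rw [heightCutoff]
    ring
  rw [hfun]
  refine ⟨_, ((hexp.const_mul (-1)).add (hsnd.const_mul (-κ))).congr_slope ?_, fun h => ?_⟩
  · simp [heightCutoffGradient, ← WithLp.toLp_add, ← WithLp.toLp_smul, ← WithLp.toLp_neg]
  · simp [hA]

theorem exists_hasQuadExpansionAt_slopePenalty (z₀ : V) (γ κ m : ℝ) {c : 𝔻 V} {r τ f : ℝ}
    (hr : ‖c.fst.fst - c.snd.fst‖ = r) (hr₀ : 0 < r) (hτ : c.snd.snd - c.fst.snd = τ) (hτ₀ : 0 < τ)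
    (hf : heightCutoff z₀ γ κ c.fst = f) (hf₀ : 0 < f) :
    ∃ T, HasQuadExpansionAt (slopePenalty z₀ γ κ r m)
      (WithLp.toLp 2 (WithLp.toLp 2 (r⁻¹ • (c.fst.fst - c.snd.fst), r / τ) +
        (-(r * m / f)) • heightCutoffGradient z₀ κ c.fst.fst,
        -WithLp.toLp 2 (r⁻¹ • (c.fst.fst - c.snd.fst), r / τ))) T c ∧
      ∀ h, ⟪T h, h⟫_ℝ = r * (‖h.fst.fst - h.snd.fst‖ ^ 2 / (2 * r ^ 2) -
        ⟪c.fst.fst - c.snd.fst, h.fst.fst - h.snd.fst⟫_ℝ ^ 2 / r ^ 4 +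
        (h.fst.snd - h.snd.snd) ^ 2 / (2 * τ ^ 2) + m * ‖h.fst.fst‖ ^ 2 / f +
        m * ⟪heightCutoffGradient z₀ κ c.fst.fst, h.fst⟫_ℝ ^ 2 / (2 * f ^ 2)) := by
  obtain ⟨A₁, hexp₁, hA₁⟩ := exists_hasQuadExpansionAt_norm_fst_sub_fst_sq c
  have hexp₂ : HasQuadExpansionAt (fun Z : 𝔻 V => Z.snd.snd - Z.fst.snd)
      (WithLp.toLp 2 (-WithLp.toLp 2 ((0 : V), (1 : ℝ)), WithLp.toLp 2 ((0 : V), (1 : ℝ)))) 0 c :=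
    .of_forall_eq fun h => by
      simp only [WithLp.add_fst, WithLp.add_snd, WithLp.prod_inner_apply, WithLp.ofLp_fst,
        inner_zero_left, WithLp.ofLp_snd, RCLike.inner_apply, Real.ringHom_apply, mul_one, zero_add,
        inner_neg_left, zero_apply, add_zero]
      ring
  obtain ⟨A₃, hexp₃, hA₃⟩ := exists_hasQuadExpansionAt_heightCutoff z₀ γ κ c
  have hlog₁ := hexp₁.log (by simp only [hr]; positivity)
  have hlog₂ := hexp₂.log (by simpa only [hτ] using hτ₀)
  have hlog₃ := hexp₃.log (by simpa only [hf] using hf₀)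
  simp only [hr, hτ, hf] at hlog₁ hlog₂ hlog₃
  refine ⟨_, ((((hlog₁.const_mul (1 / 2)).sub hlog₂).sub (hlog₃.const_mul m)).const_mul
    r).congr_slope ?_, fun h => ?_⟩
  · refine ext_inner_right ℝ fun h => ?_
    simp only [one_div, inner_smul_left, Real.ringHom_apply, inner_sub_left, map_inv₀,
      WithLp.prod_inner_apply, WithLp.ofLp_fst, WithLp.ofLp_snd, RCLike.inner_apply, mul_zero,
      add_zero, inner_neg_left, inner_zero_left, mul_one, zero_add, neg_smul, inner_add_left,
      map_div₀, neg_add_rev]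
    field_simp
    ring
  · simp only [smul_apply, sub_apply, add_apply, smul_zero, zero_add,
      ContinuousLinearMap.smulRight_apply, coe_innerSL_apply, inner_add_left, inner_sub_left,
      real_inner_smul_left, hA₁, hA₃]
    simp only [WithLp.prod_inner_apply, WithLp.ofLp_fst, WithLp.ofLp_snd, inner_neg_left,
      inner_zero_left, real_inner_smul_left, inner_sub_left, inner_sub_right, RCLike.inner_apply,
      Real.ringHom_apply, mul_zero, mul_one, add_zero]
    field_simp
    ring

end SlopePenalty

section SlopeFrames

variable {V W ι : Type*} [NormedAddCommGroup V] [InnerProductSpace ℝ V]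
  [NormedAddCommGroup W] [InnerProductSpace ℝ W]

theorem norm_smul_add_sq_sub_inner_sq_le {ν : V} (hν : ‖ν‖ = 1) (s : ℝ) (p : V) :
    ‖s • ν + p‖ ^ 2 - ⟪ν, s • ν + p⟫_ℝ ^ 2 ≤ ‖p‖ ^ 2 := by
  rw [norm_add_sq_real, inner_add_right, real_inner_smul_right, real_inner_smul_left,
    real_inner_self_eq_norm_sq, norm_smul, hν, Real.norm_eq_abs, mul_one, sq_abs]
  nlinarith [sq_nonneg ⟪ν, p⟫_ℝ]

theorem IsTangentFrame.inner_eq_zero [Fintype ι] {n : W} {g : ι → W} (hg : IsTangentFrame n g)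
    (hn : ‖n‖ = 1) (j : ι) : ⟪g j, n⟫_ℝ = 0 := by
  have hsum : ∑ j, ⟪g j, n⟫_ℝ ^ 2 = 0 := by
    rw [hg, real_inner_self_eq_norm_sq, hn]
    norm_num
  rw [Finset.sum_eq_zero_iff_of_nonneg fun _ _ => sq_nonneg _] at hsum
  exact pow_eq_zero_iff two_ne_zero |>.mp (hsum j (Finset.mem_univ j))

theorem IsTangentFrame.sum_inner_sq_le [Fintype ι] {n : W} {g : ι → W} (hg : IsTangentFrame n g)
    (a : W) : ∑ j, ⟪a, g j⟫_ℝ ^ 2 ≤ ‖a‖ ^ 2 := by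
  simp only [real_inner_comm _ a, hg a]
  linarith [sq_nonneg ⟪n, a⟫_ℝ]

theorem IsTangentFrame.snd_sub_sq_le_sum_inner_sq [Fintype ι] {n : WithLp 2 (V × ℝ)}
    {g : ι → WithLp 2 (V × ℝ)} (hg : IsTangentFrame n g) (hn : ‖n‖ = 1) (a : WithLp 2 (V × ℝ)) :
    (a.snd - ⟪n, a⟫_ℝ * n.snd) ^ 2 ≤ ∑ j, ⟪a, g j⟫_ℝ ^ 2 := by
  have hproj : ∑ j, ⟪a, g j⟫_ℝ ^ 2 = ‖a - ⟪n, a⟫_ℝ • n‖ ^ 2 := by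
    simp only [real_inner_comm _ a, hg a]
    rw [norm_sub_sq_real, real_inner_smul_right, norm_smul, hn, Real.norm_eq_abs, mul_one, sq_abs,
      real_inner_comm n a]
    ring
  rw [hproj, norm_sq_prod_real]
  exact le_add_of_nonneg_left (sq_nonneg _)

theorem inner_rotatedFrame_sub_tangentFrame [FiniteDimensional ℝ W] {b w : W} (hb : b ≠ 0)
    (hbw : b + w ≠ 0) (hw : ‖w‖ ≤ ‖b‖) (j : Fin (Module.finrank ℝ W)) :
    ⟪b, rotatedFrame (NormedSpace.normalize (b + w)) (NormedSpace.normalize b) j -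
      tangentFrame (NormedSpace.normalize b) j⟫_ℝ =
      -⟪w, rotatedFrame (NormedSpace.normalize (b + w)) (NormedSpace.normalize b) j⟫_ℝ := by
  have horth {a x : W} (ha : a ≠ 0) (hx : ⟪x, NormedSpace.normalize a⟫_ℝ = 0) : ⟪a, x⟫_ℝ = 0 := by
    rw [NormedSpace.normalize.eq_def, real_inner_smul_right, real_inner_comm] at hx
    exact (mul_eq_zero.mp hx).resolve_left (by simpa using ha)
  have hrot := horth hbw ((isTangentFrame_rotatedFrame (NormedSpace.norm_normalize hbw)
    (NormedSpace.norm_normalize hb)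
    (by linarith [inner_normalize_add_normalize_nonneg hw])).inner_eq_zero
      (NormedSpace.norm_normalize hbw) j)
  have htan := horth hb ((isTangentFrame_tangentFrame (NormedSpace.norm_normalize hb)).inner_eq_zero
    (NormedSpace.norm_normalize hb) j)
  rw [inner_add_left] at hrot
  rw [inner_sub_right, htan]
  linarith

variable [FiniteDimensional ℝ V]

theorem norm_fst_sq_sub_inner_sq_le_rotationCoeff_sq {b w : WithLp 2 (V × ℝ)} (hb : ‖b.fst‖ = 1)
    (hw : ‖w‖ ≤ 1 / 2) (j : Fin (Module.finrank ℝ (WithLp 2 (V × ℝ)))) :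
    ‖(rotatedFrame (NormedSpace.normalize (b + w)) (NormedSpace.normalize b) j -
      tangentFrame (NormedSpace.normalize b) j).fst‖ ^ 2 -
      ⟪b.fst, (rotatedFrame (NormedSpace.normalize (b + w)) (NormedSpace.normalize b) j -
        tangentFrame (NormedSpace.normalize b) j).fst⟫_ℝ ^ 2 ≤
      4 * ‖w‖ ^ 2 *
        rotationCoeff (NormedSpace.normalize (b + w)) (NormedSpace.normalize b) j ^ 2 := by
  rw [rotatedFrame, sub_sub_cancel_left]
  generalize rotationCoeff _ _ j = c
  have hdiff : (-(c • (NormedSpace.normalize (b + w) + NormedSpace.normalize b))).fst =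
      (-c * (‖b + w‖⁻¹ + ‖b‖⁻¹)) • b.fst + (-c * ‖b + w‖⁻¹) • w.fst := by
    rw [WithLp.neg_fst, WithLp.smul_fst, WithLp.add_fst, NormedSpace.normalize.eq_def (b + w),
      NormedSpace.normalize.eq_def b, WithLp.smul_fst, WithLp.smul_fst, WithLp.add_fst]
    module
  have hb₁ : 1 ≤ ‖b‖ := hb ▸ WithLp.norm_fst_le V b
  have hinv : ‖b + w‖⁻¹ ≤ 2 :=
    inv_le_of_inv_le₀ two_pos (by linarith [norm_le_add_norm_add b w])
  rw [hdiff]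
  refine (norm_smul_add_sq_sub_inner_sq_le hb _ _).trans ?_
  rw [norm_smul, norm_mul, norm_neg, norm_inv, norm_norm, Real.norm_eq_abs]
  calc (|c| * ‖b + w‖⁻¹ * ‖w.fst‖) ^ 2 ≤ (|c| * 2 * ‖w‖) ^ 2 := by
        gcongr
        exact WithLp.norm_fst_le V w
    _ = 4 * ‖w‖ ^ 2 * c ^ 2 := by
        rw [mul_pow, mul_pow, sq_abs]
        ring

theorem rotatedFrame_sub_tangentFrame_snd_sq_le {m n : WithLp 2 (V × ℝ)} (hm : ‖m‖ = 1)
    (hn : ‖n‖ = 1) (j : Fin (Module.finrank ℝ (WithLp 2 (V × ℝ)))) :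
    ((rotatedFrame m n j).snd - (tangentFrame n j).snd) ^ 2 ≤ 4 * rotationCoeff m n j ^ 2 := by
  have hle : |(rotatedFrame m n j).snd - (tangentFrame n j).snd| ≤ 2 * |rotationCoeff m n j| :=
    (WithLp.norm_snd_le V (rotatedFrame m n j - tangentFrame n j)).trans
      (norm_rotatedFrame_sub_tangentFrame_le hm hn j)
  calc ((rotatedFrame m n j).snd - (tangentFrame n j).snd) ^ 2
      = |(rotatedFrame m n j).snd - (tangentFrame n j).snd| ^ 2 := (sq_abs _).symm
    _ ≤ (2 * |rotationCoeff m n j|) ^ 2 := by gcongr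
    _ = 4 * rotationCoeff m n j ^ 2 := by
        rw [mul_pow, sq_abs]
        norm_num

end SlopeFrames

-- `A` is the increment in the direction of `x - y`, which orthogonality to the normals ties to the
-- vertical increment `d`; the square then cancels against the other terms up to `-q / τ * (d * p)`.
theorem slope_quadratic_le {r τ f m q T A d p X e c : ℝ} (hr : 0 < r) (hτ : 0 < τ) (hf : 0 < f)
    (hq : q = r * m / f) (hA : A = -(r / τ * d) + q * p) (hT : T - A ^ 2 ≤ 4 * e ^ 2 * c ^ 2)
    (hd : d ^ 2 ≤ 4 * c ^ 2) :
    r * (T / (2 * r ^ 2) - (r * A) ^ 2 / r ^ 4 + d ^ 2 / (2 * τ ^ 2) + m * X / f +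
      m * p ^ 2 / (2 * f ^ 2)) ≤
    (2 * e ^ 2 / r + 2 / τ) * c ^ 2 + q ^ 2 / (2 * τ) * p ^ 2 - q * (m - 1) / (2 * f) * p ^ 2 +
      q * X := by
  have hexpand : r * (T / (2 * r ^ 2) - (r * A) ^ 2 / r ^ 4 + d ^ 2 / (2 * τ ^ 2) + m * X / f +
      m * p ^ 2 / (2 * f ^ 2)) = (T - A ^ 2) / (2 * r) + q / τ * (d * p) -
      q * (m - 1) / (2 * f) * p ^ 2 + q * X := by
    rw [hA, hq]
    field_simp
    ring
  have hyoung : q / τ * (d * p) ≤ d ^ 2 / (2 * τ) + q ^ 2 / (2 * τ) * p ^ 2 := by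
    have hsq : d ^ 2 / (2 * τ) + q ^ 2 / (2 * τ) * p ^ 2 - q / τ * (d * p) =
        (d - q * p) ^ 2 / (2 * τ) := by
      field_simp
      ring
    have : 0 ≤ (d - q * p) ^ 2 / (2 * τ) := by positivity
    linarith
  calc _ ≤ 4 * e ^ 2 * c ^ 2 / (2 * r) + (4 * c ^ 2 / (2 * τ) + q ^ 2 / (2 * τ) * p ^ 2) -
        q * (m - 1) / (2 * f) * p ^ 2 + q * X := by
        rw [hexpand]
        have hdτ : d ^ 2 / (2 * τ) ≤ 4 * c ^ 2 / (2 * τ) := by gcongr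
        have hTr : (T - A ^ 2) / (2 * r) ≤ 4 * e ^ 2 * c ^ 2 / (2 * r) := by gcongr
        linarith
    _ = _ := by ring

section SlopeInequality

theorem abs_normalize_add_snd_le {V : Type*} [NormedAddCommGroup V] [InnerProductSpace ℝ V]
    {b w : WithLp 2 (V × ℝ)} (hb : 1 ≤ ‖b‖) (hw : ‖w‖ ≤ 1 / 2) :
    |(NormedSpace.normalize (b + w)).snd| ≤ 2 * (|b.snd| + ‖w‖) := by
  have hinv : ‖b + w‖⁻¹ ≤ 2 := inv_le_of_inv_le₀ two_pos (by linarith [norm_le_add_norm_add b w])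
  have hsnd : |(b + w).snd| ≤ |b.snd| + ‖w‖ := by
    rw [WithLp.add_snd]
    exact (abs_add_le _ _).trans (add_le_add_right (WithLp.norm_snd_le V w) _)
  rw [NormedSpace.normalize.eq_def, WithLp.smul_snd, smul_eq_mul, abs_mul, abs_inv, abs_norm]
  gcongr

variable {N : ℕ} {Ω B : Set (𝔼 N)} {H u v : 𝔼 N → ℝ} {c : WithLp 2 (𝔾 N × 𝔾 N)} {z₀ : 𝔼 N}
  {γ κ r τ f m q C H₀ : ℝ}

theorem sq_div_four_le_sum_inner_rotatedFrame_sq {b w P : 𝔾 N} (hb : 1 ≤ ‖b‖)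
    (hw : ‖w‖ ≤ 1 / 2) (hP : ‖P‖ ≤ C) (hκ : 0 ≤ κ) (hκP : κ ≤ |P.snd|)
    (hsmall : 2 * C * (|b.snd| + ‖w‖) ≤ κ / 2) :
    κ ^ 2 / 4 ≤ ∑ j, ⟪P, rotatedFrame (NormedSpace.normalize (b + w))
      (NormedSpace.normalize b) j⟫_ℝ ^ 2 := by
  have hn : ‖NormedSpace.normalize (b + w)‖ = 1 :=
    NormedSpace.norm_normalize (norm_pos_iff.mp (by linarith [norm_le_add_norm_add b w]))
  refine le_trans ?_ ((isTangentFrame_rotatedFrame_normalize hb hw).snd_sub_sq_le_sum_inner_sq hn P)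
  set n := NormedSpace.normalize (b + w)
  have hinner : |⟪n, P⟫_ℝ| ≤ C := by
    simpa only [hn, one_mul] using (abs_real_inner_le_norm n P).trans (by rwa [hn, one_mul])
  have hprod : |⟪n, P⟫_ℝ * n.snd| ≤ κ / 2 := by
    rw [abs_mul]
    calc |⟪n, P⟫_ℝ| * |n.snd| ≤ C * (2 * (|b.snd| + ‖w‖)) := by
          gcongr
          · exact (abs_nonneg _).trans hinner
          · exact abs_normalize_add_snd_le hb hw
      _ ≤ κ / 2 := by linarith
  have hle : κ / 2 ≤ |P.snd - ⟪n, P⟫_ℝ * n.snd| := by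
    linarith [abs_sub_abs_le_abs_sub P.snd (⟪n, P⟫_ℝ * n.snd)]
  calc κ ^ 2 / 4 = (κ / 2) ^ 2 := by ring
    _ ≤ |P.snd - ⟪n, P⟫_ℝ * n.snd| ^ 2 := by gcongr
    _ = (P.snd - ⟪n, P⟫_ℝ * n.snd) ^ 2 := sq_abs _

theorem slope_quadratic_framePair_le {b w P : 𝔾 N} (hr : 0 < r) (hτ : 0 < τ) (hf : 0 < f)
    (hq : q = r * m / f) (hb : ‖b.fst‖ = 1) (hbs : b.snd = r / τ) (hwP : w = -q • P)
    (hw : ‖w‖ ≤ 1 / 2) {j} {g : WithLp 2 (𝔾 N × 𝔾 N)}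
    (hg : g = framePair (NormedSpace.normalize (b + w)) (NormedSpace.normalize b) j) :
    r * (‖g.fst.fst - g.snd.fst‖ ^ 2 / (2 * r ^ 2) -
        ⟪r • b.fst, g.fst.fst - g.snd.fst⟫_ℝ ^ 2 / r ^ 4 +
        (g.fst.snd - g.snd.snd) ^ 2 / (2 * τ ^ 2) + m * ‖g.fst.fst‖ ^ 2 / f +
        m * ⟪P, g.fst⟫_ℝ ^ 2 / (2 * f ^ 2)) ≤
      (2 * ‖w‖ ^ 2 / r + 2 / τ) *
          rotationCoeff (NormedSpace.normalize (b + w)) (NormedSpace.normalize b) j ^ 2 +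
        q ^ 2 / (2 * τ) * ⟪P, g.fst⟫_ℝ ^ 2 - q * (m - 1) / (2 * f) * ⟪P, g.fst⟫_ℝ ^ 2 +
        q * ‖g.fst.fst‖ ^ 2 := by
  have hb₁ : 1 ≤ ‖b‖ := hb ▸ WithLp.norm_fst_le (𝔼 N) b
  have hb₀ : b ≠ 0 := norm_pos_iff.mp (by linarith)
  have hbw₀ : b + w ≠ 0 := norm_pos_iff.mp (by linarith [norm_le_add_norm_add b w])
  rw [real_inner_smul_left]
  refine slope_quadratic_le hr hτ hf hq ?_ ?_ ?_
  · have horth := inner_rotatedFrame_sub_tangentFrame hb₀ hbw₀ (by linarith) j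
    rw [inner_prod_real, hbs, hwP, real_inner_smul_left, ← hwP, WithLp.sub_fst,
      WithLp.sub_snd] at horth
    simp only [hg, framePair, WithLp.toLp_fst, WithLp.toLp_snd]
    linear_combination horth
  · rw [hg]
    exact norm_fst_sq_sub_inner_sq_le_rotationCoeff_sq hb hw j
  · rw [hg]
    exact rotatedFrame_sub_tangentFrame_snd_sq_le (NormedSpace.norm_normalize hbw₀)
      (NormedSpace.norm_normalize hb₀) j

theorem sum_slope_quadratic_framePair_le {b w P : 𝔾 N} (hr : 0 < r) (hτ : 0 < τ) (hf : 0 < f)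
    (hm : 1 ≤ m) (hq : q = r * m / f) (hb : ‖b.fst‖ = 1) (hbs : b.snd = r / τ) (hwP : w = -q • P)
    (hP : ‖P‖ ≤ C) (hqC : q * C ≤ 1 / 2) (hκ : 0 ≤ κ) (hκP : κ ≤ |P.snd|)
    (hsmall : 2 * C * (r / τ + q * C) ≤ κ / 2)
    {g : Fin (Module.finrank ℝ (𝔾 N)) → WithLp 2 (𝔾 N × 𝔾 N)}
    (hg : g = framePair (NormedSpace.normalize (b + w)) (NormedSpace.normalize b)) :
    ∑ j, r * (‖(g j).fst.fst - (g j).snd.fst‖ ^ 2 / (2 * r ^ 2) -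
        ⟪r • b.fst, (g j).fst.fst - (g j).snd.fst⟫_ℝ ^ 2 / r ^ 4 +
        ((g j).fst.snd - (g j).snd.snd) ^ 2 / (2 * τ ^ 2) + m * ‖(g j).fst.fst‖ ^ 2 / f +
        m * ⟪P, (g j).fst⟫_ℝ ^ 2 / (2 * f ^ 2)) ≤
      4 * (q * C) ^ 4 / r + 5 * (q * C) ^ 2 / τ - q * (m - 1) / (2 * f) * (κ ^ 2 / 4) + q * N := by
  have hq₀ : 0 ≤ q := by rw [hq]; positivity
  have hb₁ : 1 ≤ ‖b‖ := hb ▸ WithLp.norm_fst_le (𝔼 N) b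
  have hwq : ‖w‖ ≤ q * C := by
    rw [hwP, norm_smul, norm_neg, Real.norm_of_nonneg hq₀]
    gcongr
  have hw := hwq.trans hqC
  have hC : 0 ≤ C := (norm_nonneg _).trans hP
  have hframe : IsTangentFrame (NormedSpace.normalize (b + w)) fun j => (g j).fst := by
    rw [hg]
    exact isTangentFrame_rotatedFrame_normalize hb₁ hw
  have hsum := Finset.sum_le_sum fun j (_ : j ∈ Finset.univ) =>
    slope_quadratic_framePair_le hr hτ hf hq hb hbs hwP hw (congrFun hg j)
  have hcoeff := sum_rotationCoeff_normalize_sq_le hb₁ hw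
  have hP_le : ∑ j, ⟪P, (g j).fst⟫_ℝ ^ 2 ≤ C ^ 2 :=
    (hframe.sum_inner_sq_le P).trans (by gcongr)
  have hP_ge : κ ^ 2 / 4 ≤ ∑ j, ⟪P, (g j).fst⟫_ℝ ^ 2 :=
    hg ▸ sq_div_four_le_sum_inner_rotatedFrame_sq hb₁ hw hP hκ hκP (by
      rw [hbs, abs_of_nonneg (by positivity)]
      exact le_trans (by gcongr) hsmall)
  have hfst := hframe.sum_norm_fst_sq_le
  simp only [Finset.sum_add_distrib, Finset.sum_sub_distrib, ← Finset.mul_sum] at hsum ⊢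
  calc _ ≤ _ := hsum
    _ ≤ (2 * (q * C) ^ 2 / r + 2 / τ) * (2 * (q * C) ^ 2) + q ^ 2 / (2 * τ) * C ^ 2 -
        q * (m - 1) / (2 * f) * (κ ^ 2 / 4) + q * N := by
      have : 0 ≤ m - 1 := sub_nonneg.mpr hm
      gcongr
      exact hcoeff.trans (by gcongr)
    _ ≤ _ := by
      have : 0 ≤ (q * C) ^ 2 / τ := by positivity
      linear_combination 1 / 2 * this

theorem IsComparisonPair.neg_le_of_isLocalMinOn_slopePenalty (h : IsComparisonPair Ω B H u v)
    (hc : c ∈ hilbertProd (epigraphOn B u) (hypographOn B v)) (hBX : B ∈ 𝓝 c.fst.fst)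
    (hBY : B ∈ 𝓝 c.snd.fst)
    (hmin : IsLocalMinOn (slopePenalty z₀ γ κ r m)
      (hilbertProd (epigraphOn B u) (hypographOn B v)) c)
    (hr : ‖c.fst.fst - c.snd.fst‖ = r) (hr₀ : 0 < r) (hτ : c.snd.snd - c.fst.snd = τ) (hτ₀ : 0 < τ)
    (hf : heightCutoff z₀ γ κ c.fst = f) (hf₀ : 0 < f) (hm : 1 ≤ m) (hκ : 0 ≤ κ)
    (hq : q = r * m / f) (hC : ‖heightCutoffGradient z₀ κ c.fst.fst‖ ≤ C) (hqC : q * C ≤ 1 / 2)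
    (hη : r / τ ≤ 1 / 2) (hsmall : 2 * C * (r / τ + q * C) ≤ κ / 2) (hH₀ : |H c.snd.fst| ≤ H₀) :
    -(N / 2 * (q * C * H₀ + 2 * |H c.fst.fst - H c.snd.fst|)) ≤
      4 * (q * C) ^ 4 / r + 5 * (q * C) ^ 2 / τ - q * (m - 1) / (2 * f) * (κ ^ 2 / 4) + q * N := by
  obtain ⟨T, hT, hTeq⟩ := exists_hasQuadExpansionAt_slopePenalty z₀ γ κ m hr hr₀ hτ hτ₀ hf hf₀
  rw [← hq] at hT
  set P : 𝔾 N := heightCutoffGradient z₀ κ c.fst.fst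
  set b : 𝔾 N := WithLp.toLp 2 (r⁻¹ • (c.fst.fst - c.snd.fst), r / τ)
  have hq₀ : 0 ≤ q := by rw [hq]; positivity
  have : 0 ≤ C := (norm_nonneg _).trans hC
  have hbs : b.snd = r / τ := rfl
  have hPs : P.snd = -κ := rfl
  have hb : ‖b.fst‖ = 1 := by
    rw [show b.fst = r⁻¹ • (c.fst.fst - c.snd.fst) from rfl, norm_smul, hr, norm_inv,
      Real.norm_of_nonneg hr₀.le, inv_mul_cancel₀ hr₀.ne']
  have hdiff : c.fst.fst - c.snd.fst = r • b.fst := (smul_inv_smul₀ hr₀.ne' _).symm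
  have hb₁ : 1 ≤ ‖b‖ := hb ▸ WithLp.norm_fst_le (𝔼 N) b
  have hw : ‖-q • P‖ ≤ q * C := by
    rw [norm_smul, norm_neg, Real.norm_of_nonneg hq₀]
    gcongr
  have hbw : ‖b + -q • P‖ ≤ 2 := by
    have hb_le := norm_le_norm_fst_add_abs_snd b
    rw [hb, hbs, abs_of_pos (by positivity)] at hb_le
    linarith [norm_add_le b (-q • P)]
  have hbw_snd : 0 < (b + -q • P).snd := by
    rw [WithLp.add_snd, WithLp.smul_snd, hbs, hPs, smul_eq_mul, neg_mul_neg]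
    positivity
  have hineq := h.neg_le_sum_framePair_of_slope_add hc hBX hBY hT hmin (by linarith)
    (by rw [hbs]; positivity) hbw_snd hH₀
  simp only [hTeq, hdiff] at hineq
  refine le_trans ?_ (hineq.trans (sum_slope_quadratic_framePair_le hr₀ hτ₀ hf₀ hm hq hb hbs rfl hC
    hqC hκ (by rw [hPs, abs_neg, abs_of_nonneg hκ]) hsmall rfl))
  have : 0 ≤ H₀ := (abs_nonneg _).trans hH₀
  gcongr

end SlopeInequality

section SlopeQuotient

variable {V : Type*} [NormedAddCommGroup V] {z₀ : V} {γ κ r : ℝ} {m : ℕ}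

/-- The slope of the pair `((x, s), (y, t))`, localized by the `m`-th power of `heightCutoff`. -/
noncomputable def slopeQuotient (z₀ : V) (γ κ : ℝ) (m : ℕ) (Z : 𝔻 V) : ℝ :=
  (Z.snd.snd - Z.fst.snd) * heightCutoff z₀ γ κ Z.fst ^ m / ‖Z.fst.fst - Z.snd.fst‖

/-- The pairs `((x, s), (y, t))` in `S` with `s ≤ t` on which `heightCutoff` is nonnegative. -/
def slopeDomain (S : Set (𝔻 V)) (z₀ : V) (γ κ : ℝ) : Set (𝔻 V) :=
  {Z ∈ S | Z.fst.snd ≤ Z.snd.snd} ∩ {Z | 0 ≤ heightCutoff z₀ γ κ Z.fst}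

theorem continuous_heightCutoff_fst : Continuous fun Z : 𝔻 V => heightCutoff z₀ γ κ Z.fst := by
  unfold heightCutoff
  fun_prop

theorem slopePenalty_eq_neg_mul_log {Z : 𝔻 V} (hxy : 0 < ‖Z.fst.fst - Z.snd.fst‖)
    (hst : 0 < Z.snd.snd - Z.fst.snd) (hcut : 0 < heightCutoff z₀ γ κ Z.fst) :
    slopePenalty z₀ γ κ r m Z = -(r * Real.log (slopeQuotient z₀ γ κ m Z)) := by
  rw [slopePenalty, slopeQuotient, Real.log_div (by positivity) hxy.ne',
    Real.log_mul hst.ne' (by positivity), Real.log_pow, Real.log_pow]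
  push_cast
  ring

theorem pos_of_slopeQuotient_pos {S : Set (𝔻 V)} {Z : 𝔻 V} (hm : m ≠ 0)
    (hZ : Z ∈ slopeDomain S z₀ γ κ) (hpos : 0 < slopeQuotient z₀ γ κ m Z) :
    0 < ‖Z.fst.fst - Z.snd.fst‖ ∧ 0 < Z.snd.snd - Z.fst.snd ∧ 0 < heightCutoff z₀ γ κ Z.fst := by
  have hst : 0 ≤ Z.snd.snd - Z.fst.snd := sub_nonneg.mpr hZ.1.2
  have hcut : 0 ≤ heightCutoff z₀ γ κ Z.fst := hZ.2
  refine ⟨(norm_nonneg _).lt_of_ne' fun h0 => ?_, hst.lt_of_ne' fun h0 => ?_,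
    hcut.lt_of_ne' fun h0 => ?_⟩ <;>
  simp [slopeQuotient, h0, hm] at hpos

theorem isLocalMinOn_slopePenalty {S : Set (𝔻 V)} {c : 𝔻 V} (hr : 0 ≤ r)
    (hmax : IsMaxOn (slopeQuotient z₀ γ κ m) (slopeDomain S z₀ γ κ) c)
    (hxy : 0 < ‖c.fst.fst - c.snd.fst‖) (hst : 0 < c.snd.snd - c.fst.snd)
    (hcut : 0 < heightCutoff z₀ γ κ c.fst) : IsLocalMinOn (slopePenalty z₀ γ κ r m) S c := by
  have hxy' : ∀ᶠ Z : 𝔻 V in 𝓝[S] c, 0 < ‖Z.fst.fst - Z.snd.fst‖ :=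
    (ContinuousAt.eventually_lt (by fun_prop) (by fun_prop) hxy).filter_mono inf_le_left
  have hst' : ∀ᶠ Z : 𝔻 V in 𝓝[S] c, 0 < Z.snd.snd - Z.fst.snd :=
    (ContinuousAt.eventually_lt (by fun_prop) (by fun_prop) hst).filter_mono inf_le_left
  have hcut' : ∀ᶠ Z : 𝔻 V in 𝓝[S] c, 0 < heightCutoff z₀ γ κ Z.fst :=
    (continuousAt_const.eventually_lt continuous_heightCutoff_fst.continuousAt hcut).filter_mono
      inf_le_left
  filter_upwards [hxy', hst', hcut', self_mem_nhdsWithin] with Z hxyZ hstZ hcutZ hZ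
  rw [slopePenalty_eq_neg_mul_log hxy hst hcut, slopePenalty_eq_neg_mul_log hxyZ hstZ hcutZ]
  gcongr
  · unfold slopeQuotient
    positivity
  · exact hmax ⟨⟨hZ, (sub_pos.mp hstZ).le⟩, hcutZ.le⟩

end SlopeQuotient

section SlopeScale

variable {N : ℕ} {R L H₀ M c κ σ : ℝ} {m : ℕ}

/-- Constants for the localized slope of a pair bounded by `M` on a ball of radius `R`, where `H` is
bounded by `H₀` and `L`-Lipschitz: the cut-off has height `c` and tilt `κ`, its exponent `m` is
large compared with `κ⁻²` and the data, and the reciprocal slope `σ` is small compared with all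
the others. -/
structure IsSlopeScale (N : ℕ) (R L H₀ M c κ σ : ℝ) (m : ℕ) : Prop where
  c_pos : 0 < c
  c_le_one : c ≤ 1
  c_le_sq : c ≤ (R / 2) ^ 2
  κ_pos : 0 < κ
  κ_le_one : κ ≤ 1
  κ_mul_le : κ * M ≤ c / 8
  one_le_m : 1 ≤ m
  lt_exponent : 2 + N + N / 2 * (3 * H₀ + 2 * L) < (m - 1) * κ ^ 2 / 8
  σ_pos : 0 < σ
  σ_le : 45 * σ ≤ 1
  σ_sq_le : 324 * (2 * M * σ) ^ 2 * m ≤ 1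
  σ_mul_le : 12 * M * σ ≤ 1
  σ_le_tilt : 6 * (σ + 6 * M * σ) ≤ κ / 2
  σ_le_radius : 4 * M * σ ≤ R

theorem exists_isSlopeScale (N : ℕ) (L H₀ : ℝ) (hR : 0 < R) (hM : 0 < M) :
    ∃ c κ σ m, IsSlopeScale N R L H₀ M c κ σ m := by
  set c : ℝ := min 1 ((R / 2) ^ 2)
  have hc : 0 < c := by positivity
  set κ : ℝ := min 1 (c / 8 / M)
  have hκ : 0 < κ := by positivity
  have hκM : κ * M ≤ c / 8 := (le_div_iff₀ hM).mp (min_le_right _ _)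
  obtain ⟨m, hm⟩ := exists_nat_gt (max 0 ((2 + N + N / 2 * (3 * H₀ + 2 * L)) * 8 / κ ^ 2))
  rw [max_lt_iff, div_lt_iff₀ (by positivity)] at hm
  have hsmall {f : ℝ → ℝ} (hf : Continuous f) {b : ℝ} (h0 : f 0 < b) :
      ∀ᶠ σ in 𝓝[>] (0 : ℝ), f σ ≤ b :=
    ((hf.tendsto 0).eventually_le_const h0).filter_mono nhdsWithin_le_nhds
  have hev : ∀ᶠ σ in 𝓝[>] (0 : ℝ), 45 * σ ≤ 1 ∧ 324 * (2 * M * σ) ^ 2 * (m + 1 : ℕ) ≤ 1 ∧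
      12 * M * σ ≤ 1 ∧ 6 * (σ + 6 * M * σ) ≤ κ / 2 ∧ 4 * M * σ ≤ R :=
    (hsmall (by fun_prop) (by simp)).and <| (hsmall (by fun_prop) (by simp)).and <|
      (hsmall (by fun_prop) (by simp)).and <| (hsmall (by fun_prop) (by simpa using hκ)).and <|
      hsmall (by fun_prop) (by simpa using hR)
  obtain ⟨σ, hσ, hσ₁, hσ₂, hσ₃, hσ₄, hσ₅⟩ := (eventually_mem_nhdsWithin.and hev).exists
  refine ⟨c, κ, σ, m + 1, hc, min_le_left _ _, min_le_right _ _, hκ, min_le_left _ _, hκM,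
    Nat.le_add_left 1 m, ?_, hσ, hσ₁, hσ₂, hσ₃, hσ₄, hσ₅⟩
  push_cast
  linarith

theorem IsSlopeScale.mul_div_le_of_lt (hK : IsSlopeScale N R L H₀ M c κ σ m) {r τ f : ℝ}
    (hr : 0 < r) (hτ : 0 < τ) (hf : 0 < f) (hf₁ : f ≤ 1) (hlt : m / σ < τ * f ^ m / r) :
    r * m / f ≤ σ * τ := by
  have hσ := hK.σ_pos
  rw [div_lt_div_iff₀ hσ hr] at hlt
  rw [div_le_iff₀ hf]
  calc r * m ≤ τ * f ^ m * σ := by linarith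
    _ ≤ τ * f * σ := by
        gcongr
        exact pow_le_of_le_one hf.le hf₁ (Nat.one_le_iff_ne_zero.mp hK.one_le_m)
    _ = σ * τ * f := by ring

theorem IsSlopeScale.le_mul_div (hK : IsSlopeScale N R L H₀ M c κ σ m) {r f : ℝ} (hr : 0 ≤ r)
    (hf : 0 < f) (hf₁ : f ≤ 1) : r ≤ r * m / f := by
  rw [le_div_iff₀ hf]
  gcongr
  exact hf₁.trans (by exact_mod_cast hK.one_le_m)

theorem IsSlopeScale.slope_estimate_lt (hK : IsSlopeScale N R L H₀ M c κ σ m) {r τ f q d : ℝ}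
    (hL : 0 ≤ L) (hH₀ : 0 ≤ H₀) (hr : 0 < r) (hτ : 0 < τ) (hτM : τ ≤ 2 * M) (hf : 0 < f)
    (hf₁ : f ≤ 1) (hq : q = r * m / f) (hqσ : q ≤ σ * τ) (hd : d ≤ L * r) :
    4 * (q * 3) ^ 4 / r + 5 * (q * 3) ^ 2 / τ - q * (m - 1) / (2 * f) * (κ ^ 2 / 4) + q * N <
      -(N / 2 * (q * 3 * H₀ + 2 * d)) := by
  have hσ := hK.σ_pos
  have hm : (1 : ℝ) ≤ m := by exact_mod_cast hK.one_le_m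
  have hq₀ : 0 < q := by rw [hq]; positivity
  have hrq : r ≤ q := hq ▸ hK.le_mul_div hr.le hf hf₁
  have hqf : q ≤ q / f := le_div_self hq₀.le hf hf₁
  have hquartic : 4 * (q * 3) ^ 4 / r ≤ q / f := by
    calc 4 * (q * 3) ^ 4 / r = 324 * q ^ 2 * m * (q / f) := by
          rw [hq]
          field_simp
          norm_num
      _ ≤ 324 * (2 * M * σ) ^ 2 * m * (q / f) := by
          gcongr
          exact hqσ.trans (by rw [mul_comm]; gcongr)
      _ ≤ q / f := mul_le_of_le_one_left (by positivity) hK.σ_sq_le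
  have hquadratic : 5 * (q * 3) ^ 2 / τ ≤ q / f := by
    calc 5 * (q * 3) ^ 2 / τ = 45 * (q / τ) * q := by ring
      _ ≤ 45 * σ * q := by gcongr; exact (div_le_iff₀ hτ).mpr hqσ
      _ ≤ q := mul_le_of_le_one_left hq₀.le hK.σ_le
      _ ≤ q / f := hqf
  have hsource : N / 2 * (q * 3 * H₀ + 2 * d) ≤ q / f * (N / 2 * (3 * H₀ + 2 * L)) := by
    calc N / 2 * (q * 3 * H₀ + 2 * d) ≤ N / 2 * (q * 3 * H₀ + 2 * (L * q)) := by
          gcongr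
          exact hd.trans (by gcongr)
      _ = q * (N / 2 * (3 * H₀ + 2 * L)) := by ring
      _ ≤ q / f * (N / 2 * (3 * H₀ + 2 * L)) := by gcongr
  have hdim : q * N ≤ q / f * N := by gcongr
  have hgain := mul_lt_mul_of_pos_left hK.lt_exponent (show 0 < q / f by positivity)
  have : q * (m - 1) / (2 * f) * (κ ^ 2 / 4) = q / f * ((m - 1) * κ ^ 2 / 8) := by ring
  linarith

end SlopeScale

section SlopeBound

variable {N : ℕ} {Ω B : Set (𝔼 N)} {H u v : 𝔼 N → ℝ} {z₀ : 𝔼 N} {R H₀ M c κ σ γ : ℝ}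
  {L : NNReal} {m : ℕ}

theorem norm_heightCutoffGradient_le {V : Type*} [NormedAddCommGroup V] [InnerProductSpace ℝ V]
    {z₀ x : V} {κ : ℝ} (hκ : |κ| ≤ 1) (hx : ‖x - z₀‖ ≤ 1) : ‖heightCutoffGradient z₀ κ x‖ ≤ 3 := by
  refine (norm_le_norm_fst_add_abs_snd _).trans ?_
  rw [heightCutoffGradient, WithLp.toLp_fst, WithLp.toLp_snd, norm_smul, abs_neg, norm_neg,
    Real.norm_ofNat]
  linarith

namespace IsComparisonPair

theorem exists_isMaxOn_slopeQuotient (h : IsComparisonPair Ω B H u v)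
    (hlt : ∀ x ∈ B, v x < u x)
    (hne : (slopeDomain (hilbertProd (epigraphOn B u) (hypographOn B v)) z₀ γ κ).Nonempty) :
    ∃ c ∈ slopeDomain (hilbertProd (epigraphOn B u) (hypographOn B v)) z₀ γ κ,
      IsMaxOn (slopeQuotient z₀ γ κ m)
        (slopeDomain (hilbertProd (epigraphOn B u) (hypographOn B v)) z₀ γ κ) c := by
  have hcompact : IsCompact
      (slopeDomain (hilbertProd (epigraphOn B u) (hypographOn B v)) z₀ γ κ) := by
    simpa only [slopeDomain, add_zero] using (h.isCompact_sublevel 0).inter_right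
      (isClosed_le continuous_const continuous_heightCutoff_fst)
  refine hcompact.exists_isMaxOn hne (ContinuousOn.div ?_ (by fun_prop) ?_)
  · exact ((Continuous.sub (by fun_prop) (by fun_prop)).mul
      (continuous_heightCutoff_fst.pow m)).continuousOn
  · rintro Z ⟨⟨⟨⟨hx, hu⟩, -, hv⟩, hst⟩, -⟩ hxy
    rw [← sub_eq_zero.mp (norm_eq_zero.mp hxy)] at hv
    linarith [hlt _ hx]

theorem slopeQuotient_le_of_isLocalMinOn (h : IsComparisonPair Ω (closedBall z₀ R) H u v)
    (hL : LipschitzOnWith L H (closedBall z₀ R)) (hK : IsSlopeScale N R L H₀ M c κ σ m)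
    (hR : 0 < R) (hu : ∀ x ∈ closedBall z₀ R, -M ≤ u x) (hv : ∀ x ∈ closedBall z₀ R, v x ≤ M)
    (hH₀ : ∀ x ∈ closedBall z₀ R, |H x| ≤ H₀) {p : WithLp 2 (𝔾 N × 𝔾 N)}
    (hp : p ∈ hilbertProd (epigraphOn (closedBall z₀ R) u) (hypographOn (closedBall z₀ R) v))
    (hr₀ : 0 < ‖p.fst.fst - p.snd.fst‖) (hτ₀ : 0 < p.snd.snd - p.fst.snd)
    (hf₀ : 0 < heightCutoff z₀ (c - κ * M) κ p.fst)
    (hmin : IsLocalMinOn (slopePenalty z₀ (c - κ * M) κ ‖p.fst.fst - p.snd.fst‖ m)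
      (hilbertProd (epigraphOn (closedBall z₀ R) u) (hypographOn (closedBall z₀ R) v)) p) :
    slopeQuotient z₀ (c - κ * M) κ m p ≤ m / σ := by
  refine not_lt.mp fun hlarge => ?_
  obtain ⟨⟨hx, hus⟩, hy, hvt⟩ := id hp
  rw [slopeQuotient] at hlarge
  generalize hr : ‖p.fst.fst - p.snd.fst‖ = r at hr₀ hmin hlarge
  generalize hτ : p.snd.snd - p.fst.snd = τ at hτ₀ hlarge
  generalize hf : heightCutoff z₀ (c - κ * M) κ p.fst = f at hf₀ hlarge
  have hτM : τ ≤ 2 * M := by linarith [hu _ hx, hv _ hy]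
  have hfc : ‖p.fst.fst - z₀‖ ^ 2 + f ≤ c := by
    rw [← hf, heightCutoff]
    linarith [mul_le_mul_of_nonneg_left ((hu _ hx).trans hus) hK.κ_pos.le]
  have hf₁ : f ≤ 1 := by linarith [hK.c_le_one, sq_nonneg ‖p.fst.fst - z₀‖]
  have hqσ := hK.mul_div_le_of_lt hr₀ hτ₀ hf₀ hf₁ hlarge
  have hrq := hK.le_mul_div hr₀.le hf₀ hf₁
  generalize hq : r * m / f = q at hqσ hrq
  have hqM : q ≤ σ * (2 * M) := hqσ.trans (mul_le_mul_of_nonneg_left hτM hK.σ_pos.le)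
  have hrτ : r / τ ≤ σ := (div_le_iff₀ hτ₀).mpr (hrq.trans hqσ)
  have hxR : ‖p.fst.fst - z₀‖ < R / 2 :=
    lt_of_pow_lt_pow_left₀ 2 (by positivity) (by linarith [hK.c_le_sq])
  have hx₁ : ‖p.fst.fst - z₀‖ ≤ 1 :=
    (sq_le_one_iff₀ (norm_nonneg _)).mp (by linarith [hK.c_le_one])
  have hyR : ‖p.snd.fst - z₀‖ < R := by
    have htri := norm_sub_le_norm_sub_add_norm_sub p.snd.fst p.fst.fst z₀
    rw [norm_sub_rev p.snd.fst p.fst.fst, hr] at htri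
    linarith [hK.σ_le_radius]
  refine (h.neg_le_of_isLocalMinOn_slopePenalty (C := 3) hp
    (closedBall_mem_nhds_of_mem (mem_ball_iff_norm.mpr (by linarith)))
    (closedBall_mem_nhds_of_mem (mem_ball_iff_norm.mpr hyR)) hmin hr hr₀ hτ hτ₀ hf hf₀
    (by exact_mod_cast hK.one_le_m) hK.κ_pos.le hq.symm
    (norm_heightCutoffGradient_le (by rw [abs_of_pos hK.κ_pos]; exact hK.κ_le_one) hx₁)
    (by linarith [hK.σ_mul_le]) (by linarith [hK.σ_le]) (by linarith [hK.σ_le_tilt])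
    (hH₀ _ hy)).not_gt (hK.slope_estimate_lt L.coe_nonneg ((abs_nonneg _).trans (hH₀ _ hy))
      hr₀ hτ₀ hτM hf₀ hf₁ hq.symm hqσ ?_)
  exact hr ▸ hL.norm_sub_le hx hy

theorem slopeQuotient_le (h : IsComparisonPair Ω (closedBall z₀ R) H u v)
    (hL : LipschitzOnWith L H (closedBall z₀ R)) (hK : IsSlopeScale N R L H₀ M c κ σ m)
    (hR : 0 < R) (hu : ∀ x ∈ closedBall z₀ R, -M ≤ u x) (hv : ∀ x ∈ closedBall z₀ R, v x ≤ M)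
    (hH₀ : ∀ x ∈ closedBall z₀ R, |H x| ≤ H₀) (hlt : ∀ x ∈ closedBall z₀ R, v x < u x)
    {Z : WithLp 2 (𝔾 N × 𝔾 N)} (hZ : Z ∈ slopeDomain (hilbertProd (epigraphOn (closedBall z₀ R) u)
      (hypographOn (closedBall z₀ R) v)) z₀ (c - κ * M) κ) :
    slopeQuotient z₀ (c - κ * M) κ m Z ≤ m / σ := by
  obtain ⟨p, hp, hmax⟩ := h.exists_isMaxOn_slopeQuotient (m := m) hlt ⟨Z, hZ⟩
  refine (hmax hZ).trans ?_
  rcases le_or_gt (slopeQuotient z₀ (c - κ * M) κ m p) 0 with hnonpos | hpos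
  · have hσ := hK.σ_pos
    exact hnonpos.trans (by positivity)
  obtain ⟨hr₀, hτ₀, hf₀⟩ :=
    pos_of_slopeQuotient_pos (Nat.one_le_iff_ne_zero.mp hK.one_le_m) hp hpos
  exact h.slopeQuotient_le_of_isLocalMinOn hL hK hR hu hv hH₀ hp.1.1 hr₀ hτ₀ hf₀
    (isLocalMinOn_slopePenalty hr₀.le hmax hr₀ hτ₀ hf₀)

theorem sub_le_mul_norm_sub_of_lt (h : IsComparisonPair Ω (closedBall z₀ R) H u v)
    (hL : LipschitzOnWith L H (closedBall z₀ R)) (hK : IsSlopeScale N R L H₀ M c κ σ m)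
    (hR : 0 < R) (hu : ∀ x ∈ closedBall z₀ R, -M ≤ u x) (hv : ∀ x ∈ closedBall z₀ R, v x ≤ M)
    (hH₀ : ∀ x ∈ closedBall z₀ R, |H x| ≤ H₀) (hlt : ∀ x ∈ closedBall z₀ R, v x < u x)
    {x y : 𝔼 N} (hx : x ∈ closedBall z₀ R) (hxc : ‖x - z₀‖ ^ 2 ≤ c / 4)
    (hy : y ∈ closedBall z₀ R) :
    v y - u x ≤ m / (σ * (c / 2) ^ m) * ‖x - y‖ := by
  have hc := hK.c_pos
  have hσ := hK.σ_pos
  rcases le_or_gt (v y) (u x) with hle | hgt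
  · exact (sub_nonpos.mpr hle).trans (by positivity)
  have hcut : c / 2 ≤ c - κ * M - ‖x - z₀‖ ^ 2 - κ * u x := by
    have := mul_le_mul_of_nonneg_left (hgt.le.trans (hv y hy)) hK.κ_pos.le
    linarith [hK.κ_mul_le]
  have hxy : 0 < ‖x - y‖ := norm_sub_pos_iff.mpr fun heq => (hlt y hy).not_gt (heq ▸ hgt)
  have hquot : (v y - u x) * (c - κ * M - ‖x - z₀‖ ^ 2 - κ * u x) ^ m / ‖x - y‖ ≤ m / σ :=
    h.slopeQuotient_le hL hK hR hu hv hH₀ hlt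
      (Z := WithLp.toLp 2 (WithLp.toLp 2 (x, u x), WithLp.toLp 2 (y, v y)))
      ⟨⟨⟨⟨hx, le_rfl⟩, hy, le_rfl⟩, hgt.le⟩, le_trans (by positivity) hcut⟩
  rw [div_le_iff₀ hxy] at hquot
  rw [← div_div, div_mul_eq_mul_div, le_div_iff₀ (by positivity)]
  refine le_trans ?_ hquot
  have := sub_pos.mpr hgt
  gcongr

theorem sub_const (h : IsComparisonPair Ω B H u v) (ε : ℝ) :
    IsComparisonPair Ω B H u (fun x => v x - ε) where
  __ := h
  upperSemicontinuousOn := by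
    simpa only [sub_eq_add_neg] using
      h.upperSemicontinuousOn.add (upperSemicontinuousOn_const (z := -ε))
  subsol := h.subsol.sub_const ε

theorem exists_bound (h : IsComparisonPair Ω B H u v) :
    ∃ M > 0, ∀ x ∈ B, -M ≤ u x ∧ v x ≤ M ∧ |H x| ≤ M := by
  obtain ⟨lower, hlower⟩ := h.lowerSemicontinuousOn.bddBelow_of_isCompact h.isCompact
  obtain ⟨upper, hupper⟩ := h.upperSemicontinuousOn.bddAbove_of_isCompact h.isCompact
  obtain ⟨H₀, hH₀⟩ := h.isCompact.exists_bound_of_continuousOn h.continuousOn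
  refine ⟨|lower| + |upper| + |H₀| + 1, by positivity, fun x hx => ?_⟩
  have hlow : lower ≤ u x := hlower (mem_image_of_mem u hx)
  have hupp : v x ≤ upper := hupper (mem_image_of_mem v hx)
  have hbound : |H x| ≤ H₀ := hH₀ x hx
  refine ⟨?_, ?_, ?_⟩ <;>
  linarith [neg_abs_le lower, le_abs_self upper, le_abs_self H₀, abs_nonneg lower, abs_nonneg upper,
    abs_nonneg H₀]

-- Shifting `v` down by `ε` makes the two graphs disjoint; the slope bound does not depend on `ε`.
theorem exists_forall_sub_le_mul_norm_sub (h : IsComparisonPair Ω (closedBall z₀ R) H u v)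
    (hL : LipschitzOnWith L H (closedBall z₀ R)) (hR : 0 < R)
    (hle : ∀ x ∈ closedBall z₀ R, v x ≤ u x) :
    ∃ Λ ≥ 0, ∃ ρ > 0, ρ ≤ R ∧ ∀ x ∈ closedBall z₀ ρ, ∀ y ∈ closedBall z₀ R,
      v y - u x ≤ Λ * ‖x - y‖ := by
  obtain ⟨M, hM₀, hM⟩ := h.exists_bound
  obtain ⟨c, κ, σ, m, hK⟩ := exists_isSlopeScale N L M hR hM₀
  have hc := hK.c_pos
  have hσ := hK.σ_pos
  have hcR : √c / 2 ≤ R := by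
    linarith [Real.sqrt_le_iff.mpr ⟨(half_pos hR).le, hK.c_le_sq⟩]
  refine ⟨m / (σ * (c / 2) ^ m), by positivity, √c / 2, by positivity, hcR, fun x hx y hy => ?_⟩
  refine le_of_forall_pos_le_add fun ε hε => ?_
  have hxc : ‖x - z₀‖ ^ 2 ≤ c / 4 := by
    calc ‖x - z₀‖ ^ 2 ≤ (√c / 2) ^ 2 := by gcongr; exact mem_closedBall_iff_norm.mp hx
      _ = c / 4 := by rw [div_pow, Real.sq_sqrt hc.le]; norm_num
  have hslope := (h.sub_const ε).sub_le_mul_norm_sub_of_lt hL hK hR (fun x hx => (hM x hx).1)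
    (fun x hx => by linarith [(hM x hx).2.1]) (fun x hx => (hM x hx).2.2)
    (fun x hx => by linarith [hle x hx]) (closedBall_subset_closedBall hcR hx) hxc hy
  linarith

end IsComparisonPair

end SlopeBound

/-! ## Strong comparison -/

section TouchingBall

variable {E : Type*} {Ω K : Set E}

theorem not_isOpen_of_isOpen_diff [TopologicalSpace E] (hΩ : IsPreconnected Ω) (hKΩ : K ⊂ Ω)
    (hK : K.Nonempty) (hdiff : IsOpen (Ω \ K)) : ¬IsOpen K := by
  intro hKo
  obtain ⟨y, hyΩ, hyK⟩ := exists_of_ssubset hKΩ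
  obtain ⟨x, hx⟩ := hK
  obtain ⟨q, -, hqK, hq⟩ := hΩ K (Ω \ K) hKo hdiff
    (by rw [union_sdiff_self]; exact subset_union_right) ⟨x, hKΩ.subset hx, hx⟩ ⟨y, hyΩ, hyΩ, hyK⟩
  exact hq.2 hqK

theorem exists_notMem_forall_dist_le [PseudoMetricSpace E] [ProperSpace E] (hΩ : IsOpen Ω)
    (hKΩ : K ⊆ Ω) (hdiff : IsOpen (Ω \ K)) (hK : ¬IsOpen K) :
    ∃ a ∉ K, ∃ z ∈ K, ∀ x ∈ K, dist a z ≤ dist a x := by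
  rw [isOpen_iff_mem_nhds] at hK
  push Not at hK
  obtain ⟨y, hyK, hy⟩ := hK
  obtain ⟨r, hr, hrΩ⟩ := nhds_basis_closedBall.mem_iff.mp (hΩ.mem_nhds (hKΩ hyK))
  obtain ⟨a, hay, haK⟩ : ∃ a ∈ ball y (r / 2), a ∉ K := by
    by_contra! hsub
    exact hy (mem_of_superset (ball_mem_nhds y (half_pos hr)) hsub)
  have hcompact : IsCompact (closedBall y r ∩ K) := by
    have heq : closedBall y r ∩ K = closedBall y r \ (Ω \ K) := by
      rw [sdiff_sdiff_right, sdiff_eq_empty.mpr hrΩ, empty_union]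
    exact heq ▸ (isCompact_closedBall y r).diff hdiff
  have hyr : y ∈ closedBall y r ∩ K := ⟨mem_closedBall_self hr.le, hyK⟩
  obtain ⟨z, hz, hzmin⟩ := hcompact.exists_isMinOn ⟨y, hyr⟩
    (continuous_const.dist continuous_id : Continuous fun x => dist a x).continuousOn
  refine ⟨a, haK, z, hz.2, fun x hx => ?_⟩
  by_cases hxr : x ∈ closedBall y r
  · exact hzmin ⟨hxr, hx⟩
  · have hzy : dist a z ≤ dist a y := hzmin hyr
    rw [mem_closedBall, not_le] at hxr
    rw [mem_ball] at hay
    linarith [dist_triangle_left x y a]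

variable [NormedAddCommGroup E] [InnerProductSpace ℝ E]

theorem eq_of_dist_midpoint_le {a x z : E} (hax : dist a z ≤ dist a x)
    (hx : dist x (midpoint ℝ a z) ≤ dist z (midpoint ℝ a z)) : x = z := by
  set c := midpoint ℝ a z
  have hca : c - a = z - c := by
    rw [midpoint_sub_left, right_sub_midpoint]
  have hsum : x - c + (z - c) = x - a := by rw [← hca]; abel
  have hdiff : z - a = (2 : ℝ) • (z - c) := by rw [two_smul, ← hca]; nth_rw 2 [hca]; abel
  have hpar := parallelogram_law_with_norm ℝ (x - c) (z - c)
  rw [hsum, sub_sub_sub_cancel_right] at hpar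
  rw [dist_eq_norm', dist_eq_norm', hdiff, norm_smul, Real.norm_ofNat] at hax
  rw [dist_eq_norm, dist_eq_norm] at hx
  have hnorm : ‖x - z‖ = 0 := by
    nlinarith [norm_nonneg (x - z), norm_nonneg (z - c), norm_nonneg (x - c)]
  exact sub_eq_zero.mp (norm_eq_zero.mp hnorm)

theorem exists_closedBall_inter_subset_singleton [ProperSpace E] (hΩ : IsOpen Ω)
    (hconn : IsPreconnected Ω) (hKΩ : K ⊂ Ω) (hK : K.Nonempty) (hdiff : IsOpen (Ω \ K)) :
    ∃ z ∈ K, ∃ x₀ ≠ z, closedBall x₀ (dist z x₀) ∩ K ⊆ {z} := by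
  obtain ⟨a, haK, z, hz, hnear⟩ := exists_notMem_forall_dist_le hΩ hKΩ.subset hdiff
    (not_isOpen_of_isOpen_diff hconn hKΩ hK hdiff)
  have hza : a ≠ z := fun h => haK (h ▸ hz)
  exact ⟨z, hz, midpoint ℝ a z, by rwa [Ne, midpoint_eq_right_iff],
    fun x hx => eq_of_dist_midpoint_le (hnear x hx.2) hx.1⟩

end TouchingBall

section StrongComparison

variable {N : ℕ} {Ω : Set (𝔼 N)} {H u v : 𝔼 N → ℝ} {x₀ z : 𝔼 N}

theorem LocLipschitzOn.exists_lipschitzOnWith_closedBall (hH : LocLipschitzOn Ω H)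
    (hΩ : IsOpen Ω) (hz : z ∈ Ω) :
    ∃ L, ∃ R > 0, closedBall z R ⊆ Ω ∧ LipschitzOnWith L H (closedBall z R) := by
  obtain ⟨L, t, ht, hL⟩ := hH z hz
  rw [hΩ.nhdsWithin_eq hz] at ht
  obtain ⟨R, hR, hRt⟩ := nhds_basis_closedBall.mem_iff.mp (inter_mem (hΩ.mem_nhds hz) ht)
  exact ⟨L, R, hR, hRt.trans inter_subset_left, hL.mono (hRt.trans inter_subset_right)⟩

theorem exists_ne_le_of_touching (hΩ : IsOpen Ω) (hH : LocLipschitzOn Ω H)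
    (hu : IsViscositySupersol Ω H u) (hv : IsViscositySubsol Ω H v)
    (hul : LowerSemicontinuousOn u Ω) (hvu : UpperSemicontinuousOn v Ω)
    (hle : ∀ x ∈ Ω, v x ≤ u x) (hz : z ∈ Ω) (huv : u z = v z) (hne : z ≠ x₀) :
    ∃ x ∈ Ω, dist x x₀ ≤ dist z x₀ ∧ x ≠ z ∧ u x ≤ v x := by
  obtain ⟨L, R, hR, hRΩ, hL⟩ := hH.exists_lipschitzOnWith_closedBall hΩ hz
  have hpair : IsComparisonPair Ω (closedBall z R) H u v :=
    { subset := hRΩ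
      isCompact := isCompact_closedBall z R
      continuousOn := hL.continuousOn
      lowerSemicontinuousOn := hul.mono hRΩ
      upperSemicontinuousOn := hvu.mono hRΩ
      supersol := hu
      subsol := hv }
  obtain ⟨Λ, hΛ, ρ, hρ, hρR, hslope⟩ :=
    hpair.exists_forall_sub_le_mul_norm_sub hL hR fun x hx => hle x (hRΩ hx)
  have hsub : closedBall z ρ ⊆ closedBall z R := closedBall_subset_closedBall hρR
  obtain ⟨x, hx, hdist, hxz, hxle⟩ :=
    (hpair.mono (isCompact_closedBall z ρ) hsub).exists_ne_le_of_lipschitz (hL.mono hsub) hρ huv hne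
      hΛ fun x hx y hy => hslope x hx y (hsub hy)
  exact ⟨x, hRΩ (hsub hx), by rwa [dist_eq_norm, dist_eq_norm], hxz, hxle⟩

theorem eqOn_of_touching (hΩ : IsOpen Ω) (hconn : IsPreconnected Ω) (hH : LocLipschitzOn Ω H)
    (hu : IsViscositySupersol Ω H u) (hv : IsViscositySubsol Ω H v)
    (hul : LowerSemicontinuousOn u Ω) (hvu : UpperSemicontinuousOn v Ω)
    (hle : ∀ x ∈ Ω, v x ≤ u x) (hz : z ∈ Ω) (huv : u z = v z) : EqOn u v Ω := by
  set K : Set (𝔼 N) := {x ∈ Ω | u x ≤ v x}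
  have hdiff : IsOpen (Ω \ K) := by
    have hsub : LowerSemicontinuousOn (fun x => u x + -v x) Ω := hul.add hvu.neg
    obtain ⟨U, hU, hUeq⟩ := lowerSemicontinuousOn_iff_preimage_Ioi.mp hsub 0
    have heq : Ω \ K = Ω ∩ U := by
      rw [← hUeq]
      ext x
      simp [K]
    exact heq ▸ hΩ.inter hU
  by_contra hneq
  have hKΩ : K ⊂ Ω := by
    refine (sep_subset _ _).ssubset_of_ne fun hK => hneq fun x hx => ?_
    exact le_antisymm (hK.symm.subset hx).2 (hle x hx)
  obtain ⟨y, hy, x₀, hne, huniq⟩ :=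
    exists_closedBall_inter_subset_singleton hΩ hconn hKΩ ⟨z, hz, huv.le⟩ hdiff
  obtain ⟨x, hx, hdist, hxy, hxle⟩ := exists_ne_le_of_touching hΩ hH hu hv hul hvu hle hy.1
    (le_antisymm hy.2 (hle y hy.1)) hne.symm
  exact hxy (huniq ⟨hdist, hx, hxle⟩)

end StrongComparison

/-! ## The dichotomy -/

theorem exists_mem_isMinOn_closure_of_nonpos {X : Type*} [TopologicalSpace X] {Ω : Set X}
    {w : X → ℝ} (hΩ : IsOpen Ω) (hcompact : IsCompact (closure Ω))
    (hw : LowerSemicontinuousOn w (closure Ω)) (hfr : ∀ x ∈ frontier Ω, 0 ≤ w x) {x₁ : X}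
    (hx₁ : x₁ ∈ Ω) (hx₁w : w x₁ ≤ 0) : ∃ p ∈ Ω, IsMinOn w (closure Ω) p := by
  obtain ⟨p, hp, hmin⟩ := hw.exists_isMinOn ⟨x₁, subset_closure hx₁⟩ hcompact
  by_cases hpΩ : p ∈ Ω
  · exact ⟨p, hpΩ, hmin⟩
  · have hpw : 0 ≤ w p := hfr p (by rw [hΩ.frontier_eq]; exact ⟨hp, hpΩ⟩)
    exact ⟨x₁, hx₁, fun x hx => (hx₁w.trans hpw).trans (hmin hx)⟩

theorem nonneg_of_eq_const_of_frontier_nonneg {E : Type*} [NormedAddCommGroup E]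
    [NormedSpace ℝ E] [Nontrivial E] {Ω : Set E} {w : E → ℝ} {m : ℝ} (hne : Ω.Nonempty)
    (hb : Bornology.IsBounded Ω) (hw : LowerSemicontinuousOn w (closure Ω))
    (hm : ∀ x ∈ Ω, w x = m) (hfr : ∀ x ∈ frontier Ω, 0 ≤ w x) : 0 ≤ m := by
  obtain ⟨b, hbf⟩ : (frontier Ω).Nonempty := by
    refine nonempty_frontier_iff.mpr ⟨hne, ?_⟩
    rintro rfl
    exact NormedSpace.unbounded_univ ℝ E hb
  have hbcl : b ∈ closure Ω := frontier_subset_closure hbf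
  by_contra! hmneg
  have hev : ∀ᶠ x in 𝓝[Ω] b, m < w x :=
    (hw b hbcl m (hmneg.trans_le (hfr b hbf))).filter_mono (nhdsWithin_mono b subset_closure)
  have : (𝓝[Ω] b).NeBot := mem_closure_iff_nhdsWithin_neBot.mp hbcl
  obtain ⟨x, hx, hxΩ⟩ := (hev.and self_mem_nhdsWithin).exists
  exact hx.ne' (hm x hxΩ)

theorem weak_comparison_dichotomy_general {N : ℕ} (hN : 0 < N) {Ω : Set (𝔼 N)} (hΩo : IsOpen Ω)
    (hΩc : IsPreconnected Ω) (hΩb : Bornology.IsBounded Ω) {H u v : 𝔼 N → ℝ}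
    (hH : LocLipschitzOn Ω H) (hu_lsc : LowerSemicontinuousOn u (closure Ω))
    (hu : IsViscositySupersol Ω H u) (hv_usc : UpperSemicontinuousOn v (closure Ω))
    (hv : IsViscositySubsol Ω H v) (hbdry : ∀ x ∈ frontier Ω, v x ≤ u x) :
    (∀ x ∈ Ω, u x = v x) ∨ (∀ x ∈ Ω, v x < u x) := by
  refine or_iff_not_imp_right.mpr fun hlt => ?_
  push Not at hlt
  obtain ⟨x₁, hx₁, hx₁le⟩ := hlt
  have hw : LowerSemicontinuousOn (fun x => u x - v x) (closure Ω) := by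
    simpa only [sub_eq_add_neg, Pi.neg_apply] using hu_lsc.add hv_usc.neg
  have hfr : ∀ x ∈ frontier Ω, 0 ≤ u x - v x := fun x hx => sub_nonneg.mpr (hbdry x hx)
  obtain ⟨p, hp, hmin⟩ := exists_mem_isMinOn_closure_of_nonpos hΩo hΩb.isCompact_closure hw hfr hx₁
    (sub_nonpos.mpr hx₁le)
  set m := u p - v p
  have hshift_lsc : LowerSemicontinuousOn (fun x => u x - m) Ω := by
    simpa only [sub_eq_add_neg] using
      (hu_lsc.mono subset_closure).add continuousOn_const.lowerSemicontinuousOn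
  have heq : EqOn (fun x => u x - m) v Ω :=
    eqOn_of_touching hΩo hΩc hH (hu.sub_const m) hv hshift_lsc (hv_usc.mono subset_closure)
      (fun x hx => le_sub_comm.mp (hmin (subset_closure hx))) hp (sub_sub_cancel _ _)
  have hconst : ∀ x ∈ Ω, u x - v x = m := fun x hx => sub_eq_iff_eq_add'.mpr
    (sub_eq_iff_eq_add.mp (heq hx))
  have : Nonempty (Fin N) := ⟨⟨0, hN⟩⟩
  have hm₀ : m = 0 := le_antisymm ((hmin (subset_closure hx₁)).trans (sub_nonpos.mpr hx₁le))
    (nonneg_of_eq_const_of_frontier_nonneg ⟨p, hp⟩ hΩb hw hconst hfr)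
  exact fun x hx => sub_eq_zero.mp ((hconst x hx).trans hm₀)

/-- **Dichotomy in the weak comparison principle**: under the hypotheses of the
weak comparison principle, either `u ≡ v` in Ω or `u > v` everywhere in Ω. -/
theorem weak_comparison_dichotomy {N : ℕ} (hN : 2 ≤ N)
    (Ω : Set (EuclideanSpace ℝ (Fin N))) (hΩo : IsOpen Ω) (hΩc : IsConnected Ω)
    (hΩb : Bornology.IsBounded Ω)
    (H : EuclideanSpace ℝ (Fin N) → ℝ) (hH : LocLipschitzOn Ω H)
    (u v : EuclideanSpace ℝ (Fin N) → ℝ)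
    (hu_lsc : LowerSemicontinuousOn u (closure Ω)) (hu : IsViscositySupersol Ω H u)
    (hv_usc : UpperSemicontinuousOn v (closure Ω)) (hv : IsViscositySubsol Ω H v)
    (hbdry : ∀ x ∈ frontier Ω, v x ≤ u x) :
    (∀ x ∈ Ω, u x = v x) ∨ (∀ x ∈ Ω, v x < u x) :=
  weak_comparison_dichotomy_general (two_pos.trans_le hN) hΩo hΩc.isPreconnected hΩb hH hu_lsc hu
    hv_usc hv hbdry
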